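/- arXiv:2601.16295 — 7 statements merged into one kernel-verified Lean document; each statement's English description precedes it below -/
import Mathlib

section
/- Suppose θ ∈ ℝ satisfies the Diophantine condition DC-m for some m ≥ 1, and set z = e^{iθ}. Then there exists C>0 such that for every n ∈ ℕ with n ≥ 1 there exists q ∈ ℕ with 1 ≤ q ≤ C·n^m and 1/(2n) < |z^q − 1| < 1/n. -/
noncomputable section

/-- The Diophantine condition DC-m: for all integers `p` and all sufficiently large `q`,
`|θ - 2πp/q| ≥ q^{-m}`. -/
def DCond (m θ : ℝ) : Prop :=
  ∃ Q : ℕ, ∀ p : ℤ, ∀ q : ℕ, Q ≤ q → |θ - 2 * Real.pi * p / q| ≥ (q : ℝ) ^ (-m)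

theorem chord_bounds (x a : ℝ) (ha0 : 0 < a) (ha : a ≤ 1) (h1 : 0.6 * a ≤ |x|) (h2 : |x| ≤ 0.9 * a) :
    a / 2 < ‖Complex.exp (Complex.I * (x : ℂ)) - 1‖ ∧
    ‖Complex.exp (Complex.I * (x : ℂ)) - 1‖ < a := by
  have e : ‖Complex.exp (Complex.I * (x : ℂ)) - 1‖ = 2 * Real.sin (|x| / 2) := by
    have hs : 0 ≤ Real.sin (|x| / 2) :=
      Real.sin_nonneg_of_nonneg_of_le_pi (by positivity) (by linarith [Real.pi_gt_three])
    rw [Complex.norm_exp_I_mul_ofReal_sub_one, Real.norm_eq_abs]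
    rcases abs_cases x with ⟨h, _⟩ | ⟨h, _⟩
    · rw [h] at hs ⊢
      exact abs_of_nonneg (by positivity)
    · rw [h] at hs ⊢
      rw [neg_div, Real.sin_neg] at hs ⊢
      rw [abs_of_nonpos (by linarith)]
      ring
  rw [e]
  have h3 : Real.sin (|x| / 2) ≤ |x| / 2 := Real.sin_le (by positivity)
  have hp : 0 < |x| := by linarith
  have h4 := Real.sin_gt_sub_cube (x := |x| / 2) (by linarith)
  have h5 : |x| ^ 3 ≤ |x| := by
    have : |x| ≤ 1 := by linarith
    exact pow_le_of_le_one (by positivity) this (by norm_num)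
  constructor
  · nlinarith
  · linarith

theorem uniform_dc (θ m : ℝ) (hθ : DCond m θ) :
    ∃ Q : ℕ, 1 ≤ Q ∧ ∀ p : ℤ, ∀ q : ℕ, 1 ≤ q →
      ((Q : ℝ) * q) ^ (-m) * q ≤ |q * θ - 2 * Real.pi * p| := by
  obtain ⟨Q, hQ⟩ := hθ
  refine ⟨Q + 1, by omega, fun p q hq => ?_⟩
  have h := hQ (p * ((Q + 1 : ℕ) : ℤ)) ((Q + 1) * q) (by nlinarith)
  have hq0 : (0 : ℝ) < q := by exact_mod_cast hq
  have hQ0 : (0 : ℝ) < Q + 1 := by positivity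
  have e : θ - 2 * Real.pi * ((p * ((Q + 1 : ℕ) : ℤ) : ℤ) : ℝ) / (((Q + 1) * q : ℕ) : ℝ)
      = (q * θ - 2 * Real.pi * p) / q := by
    push_cast
    field_simp
  rw [e, abs_div, abs_of_pos hq0, ge_iff_le, le_div_iff₀ hq0] at h
  push_cast at h ⊢
  exact h

/-- For `θ` satisfying DC-m with `m ≥ 1` and `z = e^{iθ}`, for every
`n ≥ 1` there is `q ≤ C n^m` with `1/(2n) < |z^q - 1| < 1/n`. -/
theorem statement11 (θ m : ℝ) (hm : 1 ≤ m) (hθ : DCond m θ) :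
    ∃ C > 0, ∀ n : ℕ, 1 ≤ n → ∃ q : ℕ, 1 ≤ q ∧ (q : ℝ) ≤ C * (n : ℝ) ^ m ∧
      1 / (2 * (n : ℝ)) < ‖Complex.exp ((θ : ℂ) * Complex.I) ^ q - 1‖ ∧
      ‖Complex.exp ((θ : ℂ) * Complex.I) ^ q - 1‖ < 1 / (n : ℝ) := by
  obtain ⟨Q, hQ1, hQ⟩ := uniform_dc θ m hθ
  have hQ0 : (0 : ℝ) < Q := by exact_mod_cast hQ1
  refine ⟨(24 * Q : ℝ) ^ m, by positivity, fun n hn => ?_⟩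
  have hn1 : (1 : ℝ) ≤ n := by exact_mod_cast hn
  have hn0 : (0 : ℝ) < n := by linarith
  obtain ⟨r, hr0, hrN, hr⟩ :=
    Real.exists_nat_abs_mul_sub_round_le (θ / (2 * Real.pi)) (n := 24 * n) (by omega)
  set p : ℤ := round (r * (θ / (2 * Real.pi))) with hp
  have hr0' : (0 : ℝ) < r := by exact_mod_cast hr0
  have hrN' : (r : ℝ) ≤ 24 * n := by exact_mod_cast hrN
  have hpi := Real.pi_pos
  set y : ℝ := r * θ - 2 * Real.pi * p with hy
  have hyd : |y| ≤ 0.3 * (1 / n) := by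
    have e : y = (2 * Real.pi) * (r * (θ / (2 * Real.pi)) - p) := by
      rw [hy]; field_simp
    rw [e, abs_mul, abs_of_pos (by positivity)]
    calc 2 * Real.pi * |r * (θ / (2 * Real.pi)) - p|
        ≤ 6.4 * (1 / (24 * n)) := by
          apply mul_le_mul _ _ (abs_nonneg _) (by norm_num)
          · linarith [Real.pi_lt_d2]
          · refine hr.trans ?_
            push_cast
            apply one_div_le_one_div_of_le <;> linarith
      _ ≤ 0.3 * (1 / n) := by
          rw [one_div, one_div]
          have : (0 : ℝ) < (n : ℝ)⁻¹ := by positivity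
          rw [mul_inv]
          linarith
  have hlow := hQ p r hr0
  rw [← hy] at hlow
  have hy0 : 0 < |y| := lt_of_lt_of_le (by positivity) hlow
  set a : ℝ := 1 / n with ha
  have ha0 : 0 < a := by positivity
  have ha1 : a ≤ 1 := by rw [ha, div_le_one hn0]; exact hn1
  set k : ℕ := ⌊0.9 * a / |y|⌋₊ with hk
  have hk1 : k * |y| ≤ 0.9 * a := by
    rw [← le_div_iff₀ hy0]
    exact Nat.floor_le (by positivity)
  have hk2 : 0.6 * a ≤ k * |y| := by
    have := Nat.lt_floor_add_one (0.9 * a / |y|)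
    rw [← hk, div_lt_iff₀ hy0] at this
    linarith
  have hk0 : 0 < k := by
    rcases Nat.eq_zero_or_pos k with h | h
    · rw [h] at hk2
      simp at hk2
      linarith
    · exact h
  have habs : |(k : ℝ) * y| = k * |y| := by rw [abs_mul, Nat.abs_cast]
  have hc := chord_bounds (k * y) a ha0 ha1 (by rw [habs]; exact hk2) (by rw [habs]; exact hk1)
  have hexp : Complex.exp ((θ : ℂ) * Complex.I) ^ (k * r)
      = Complex.exp (Complex.I * ((k * y : ℝ) : ℂ)) := by
    rw [← Complex.exp_nat_mul, Complex.exp_eq_exp_iff_exists_int]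
    refine ⟨k * p, ?_⟩
    rw [hy]
    push_cast
    ring
  refine ⟨k * r, Nat.mul_pos hk0 hr0, ?_, ?_, ?_⟩
  · have hpow : 0 < ((Q : ℝ) * r) ^ m := by positivity
    have h1 : (k : ℝ) * (((Q : ℝ) * r) ^ (-m) * r) ≤ 1 :=
      (mul_le_mul_of_nonneg_left hlow (by positivity)).trans (by linarith)
    rw [Real.rpow_neg (by positivity)] at h1
    have h2 : ((k * r : ℕ) : ℝ) ≤ ((Q : ℝ) * r) ^ m := by
      push_cast
      have e : (k : ℝ) * ((((Q : ℝ) * r) ^ m)⁻¹ * r) = (k * r) / ((Q : ℝ) * r) ^ m := by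
        rw [div_eq_mul_inv]; ring
      rw [e, div_le_one hpow] at h1
      exact h1
    refine h2.trans ?_
    rw [← Real.mul_rpow (by positivity) (by positivity)]
    apply Real.rpow_le_rpow (by positivity) _ (by linarith)
    nlinarith
  · rw [hexp]
    have e : 1 / (2 * (n : ℝ)) = a / 2 := by rw [ha]; field_simp
    rw [e]
    exact hc.1
  · rw [hexp]
    exact hc.2
end
end

section
/- Let θ ∈ [0,2π) with cos θ ∈ ℚ∖(1/2)ℤ and set z = e^{iθ}. Then there exist c>0 and m ∈ ℕ such that: (i) for every integer p and every integer q ≥ 1, |θ − 2πp/q| > c·q^{−m}; and (ii) for every integer k ≥ 1, |Re(z^k)| = |cos(kθ)| > c·k^{−m}. -/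
namespace BakerTwo
open Polynomial Finset

/-- The polynomial `binom(X+a, a)`. -/
noncomputable def Bp : ℕ → ℝ[X]
  | 0 => 1
  | (a+1) => C (1/((a:ℝ)+1)) * ((X + C ((a:ℝ)+1)) * Bp a)

lemma Bp_succ_mul (a : ℕ) : C ((a:ℝ)+1) * Bp (a+1) = (X + C ((a:ℝ)+1)) * Bp a := by
  rw [Bp, ← mul_assoc, ← C_mul]
  have : ((a:ℝ)+1) * (1/((a:ℝ)+1)) = 1 := by field_simp
  rw [this]; simp

lemma Bp_deriv (a : ℕ) :
    derivative (Bp a) = ∑ i ∈ range a, C (1/((a:ℝ)-i)) * Bp i := by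
  induction a with
  | zero => simp [Bp]
  | succ a ih =>
    have hne : (C ((a:ℝ)+1)) ≠ 0 := by
      rw [Ne, C_eq_zero]; positivity
    apply mul_left_cancel₀ hne
    have h1 : C ((a:ℝ)+1) * derivative (Bp (a+1)) = derivative (C ((a:ℝ)+1) * Bp (a+1)) := by
      simp
    rw [h1, Bp_succ_mul, derivative_mul, ih]
    have h2 : ∀ i ∈ range a, (X + C ((a:ℝ)+1)) * (C (1/((a:ℝ)-i)) * Bp i)
        = C (((i:ℝ)+1)/((a:ℝ)-i)) * Bp (i+1) + Bp i := by
      intro i hi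
      have hi' : (i:ℝ) < a := by exact_mod_cast mem_range.mp hi
      have hne' : (a:ℝ) - i ≠ 0 := by linarith
      have e1 : (X + C ((a:ℝ)+1)) = (X + C ((i:ℝ)+1)) + C ((a:ℝ)-i) := by
        rw [add_assoc, ← C_add]; congr 2; ring
      have e2 : C (((i:ℝ)+1)/((a:ℝ)-i)) * Bp (i+1)
          = C (1/((a:ℝ)-i)) * ((X + C ((i:ℝ)+1)) * Bp i) := by
        rw [← Bp_succ_mul, ← mul_assoc, ← C_mul]; congr 2; ring
      rw [e1, e2]
      have e3 : C ((a:ℝ)-i) * C (1/((a:ℝ)-i)) = 1 := by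
        rw [← C_mul]; rw [mul_one_div_cancel hne']; simp
      linear_combination (Bp i) * e3
    rw [mul_sum, sum_congr rfl h2, sum_add_distrib]
    have h3 : ∀ i ∈ range (a+1), C ((a:ℝ)+1) * (C (1/(((a+1:ℕ):ℝ)-i)) * Bp i)
        = Bp i + C ((i:ℝ)/((a:ℝ)+1-i)) * Bp i := by
      intro i hi
      have hi' : (i:ℝ) < a + 1 := by exact_mod_cast mem_range.mp hi
      have hne' : (a:ℝ) + 1 - i ≠ 0 := by linarith
      rw [← mul_assoc, ← C_mul]
      have : ((a:ℝ)+1) * (1/(((a+1:ℕ):ℝ)-i)) = 1 + (i:ℝ)/((a:ℝ)+1-i) := by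
        push_cast; field_simp; ring
      rw [this, C_add]; simp [add_mul]
    rw [mul_sum, sum_congr rfl h3, sum_add_distrib]
    rw [sum_range_succ' (fun i => C ((i:ℝ)/((a:ℝ)+1-i)) * Bp i), sum_range_succ (fun i => Bp i)]
    have h4 : ∀ i ∈ range a, C (((i+1:ℕ):ℝ)/((a:ℝ)+1-((i+1:ℕ):ℝ))) * Bp (i+1)
       = C (((i:ℝ)+1)/((a:ℝ)-i)) * Bp (i+1) := by
      intro i _; congr 3 <;> push_cast <;> ring
    rw [sum_congr rfl h4]
    simp
    ring

lemma Bp_eval (a x : ℕ) : (Bp a).eval (x:ℝ) = ((x+a).choose a : ℕ) := by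
  induction a with
  | zero => simp [Bp]
  | succ a ih =>
    rw [Bp]
    simp only [eval_mul, eval_add, eval_X, eval_C, ih]
    have := Nat.add_one_mul_choose_eq (x+a) a
    have h2 : ((x:ℝ)+a+1) * ((x+a).choose a : ℕ) = ((x+(a+1)).choose (a+1) : ℕ) * ((a:ℝ)+1) := by
      exact_mod_cast this
    have : (a:ℝ)+1 ≠ 0 := by positivity
    field_simp
    linarith

/-- integrality of scaled derivatives at natural numbers -/
def IV (d : ℕ) (P : ℝ[X]) : Prop :=
  ∀ τ x : ℕ, ∃ n : ℤ, (n:ℝ) = (d:ℝ)^τ * (derivative^[τ] P).eval (x:ℝ)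

lemma IV_Bp (d h : ℕ) (hd : ∀ m, 1 ≤ m → m ≤ h → m ∣ d) (a : ℕ) (ha : a ≤ h) : IV d (Bp a) := by
  intro τ
  induction τ generalizing a with
  | zero => intro x; exact ⟨((x+a).choose a : ℕ), by simp [Bp_eval]⟩
  | succ τ ih =>
    intro x
    have : ∀ i ∈ range a, ∃ n : ℤ, (n:ℝ) =
        (d:ℝ)^(τ+1) * (derivative^[τ] (C (1/((a:ℝ)-i)) * Bp i)).eval (x:ℝ) := by
      intro i hi
      have hi' := mem_range.mp hi
      obtain ⟨n, hn⟩ := ih i (by omega) x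
      obtain ⟨e, he⟩ := hd (a-i) (by omega) (by omega)
      refine ⟨e * n, ?_⟩
      rw [iterate_derivative_C_mul, eval_mul, eval_C]
      push_cast
      rw [hn]
      have hc : (d:ℝ) = ((a:ℝ)-i) * e := by
        rw [he]; push_cast [Nat.cast_sub hi'.le]; ring
      have hne : (a:ℝ) - i ≠ 0 := by
        have : (i:ℝ) < a := by exact_mod_cast hi'
        linarith
      rw [pow_succ]
      nth_rewrite 3 [hc]
      field_simp
    rw [Function.iterate_succ_apply, Bp_deriv, iterate_derivative_sum, eval_finsetSum, mul_sum]
    choose! f hf using this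
    refine ⟨∑ i ∈ range a, f i, ?_⟩
    push_cast
    exact sum_congr rfl hf

lemma IV_mul {d : ℕ} {P Q : ℝ[X]} (hP : IV d P) (hQ : IV d Q) : IV d (P*Q) := by
  intro τ x
  choose f hf using hP
  choose g hg using hQ
  refine ⟨∑ k ∈ range τ.succ, (τ.choose k : ℤ) * (f (τ-k) x * g k x), ?_⟩
  rw [iterate_derivative_mul, eval_finsetSum, mul_sum]
  push_cast
  apply sum_congr rfl
  intro k hk
  have : (d:ℝ)^τ = (d:ℝ)^(τ-k) * (d:ℝ)^k := by
    rw [← pow_add]; congr 1; have := mem_range.mp hk; omega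
  rw [hf, hg, this]
  simp
  ring

lemma IV_pow {d : ℕ} {P : ℝ[X]} (hP : IV d P) (n : ℕ) : IV d (P^n) := by
  induction n with
  | zero =>
    intro τ x
    rcases Nat.eq_zero_or_pos τ with h | h
    · subst h; exact ⟨1, by simp⟩
    · refine ⟨0, ?_⟩
      simp [iterate_derivative_one h]
  | succ n ih => rw [pow_succ]; exact IV_mul ih hP

/-- nonnegative coefficients -/
def NC (P : ℝ[X]) : Prop := ∀ i, 0 ≤ P.coeff i

lemma NC_mul {P Q : ℝ[X]} (hP : NC P) (hQ : NC Q) : NC (P*Q) := by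
  intro i; rw [coeff_mul]
  exact sum_nonneg fun x _ => mul_nonneg (hP _) (hQ _)

lemma NC_one : NC 1 := by intro i; rw [coeff_one]; split_ifs <;> norm_num

lemma NC_pow {P : ℝ[X]} (hP : NC P) (n : ℕ) : NC (P^n) := by
  induction n with
  | zero => simpa using NC_one
  | succ n ih => rw [pow_succ]; exact NC_mul ih hP

lemma NC_deriv {P : ℝ[X]} (hP : NC P) : NC (derivative P) := by
  intro i; rw [coeff_derivative]
  exact mul_nonneg (hP _) (by positivity)

lemma NC_iter {P : ℝ[X]} (hP : NC P) (n : ℕ) : NC (derivative^[n] P) := by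
  induction n with
  | zero => simpa
  | succ n ih => rw [Function.iterate_succ_apply']; exact NC_deriv ih

lemma NC_Bp (a : ℕ) : NC (Bp a) := by
  induction a with
  | zero => exact NC_one
  | succ a ih =>
    rw [Bp]
    refine NC_mul ?_ (NC_mul ?_ ih)
    · intro i; rw [coeff_C]; split_ifs <;> positivity
    · intro i; rw [coeff_add, coeff_X, coeff_C]; split_ifs <;> positivity

lemma NC_eval_nonneg {P : ℝ[X]} (hP : NC P) {x : ℝ} (hx : 0 ≤ x) : 0 ≤ P.eval x := by
  rw [eval_eq_sum_range]
  exact sum_nonneg fun i _ => mul_nonneg (hP i) (by positivity)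

lemma NC_mono {P : ℝ[X]} (hP : NC P) {x y : ℝ} (hx : 0 ≤ x) (hxy : x ≤ y) :
    P.eval x ≤ P.eval y := by
  rw [eval_eq_sum_range, eval_eq_sum_range]
  refine sum_le_sum fun i _ => mul_le_mul_of_nonneg_left ?_ (hP i)
  gcongr

lemma NC_norm {P : ℝ[X]} (hP : NC P) (ζ : ℂ) : ‖aeval ζ P‖ ≤ P.eval ‖ζ‖ := by
  rw [aeval_eq_sum_range, eval_eq_sum_range]
  refine (norm_sum_le _ _).trans (sum_le_sum fun i _ => ?_)
  rw [norm_smul, norm_pow, Real.norm_of_nonneg (hP i)]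

lemma mul_pow_le_aux (n : ℕ) {x : ℝ} (hx : 0 ≤ x) : x^n * (n+1) ≤ (x+1)^(n+1) := by
  induction n with
  | zero => simp; linarith
  | succ n ih =>
    have h1 : x^(n+1) ≤ (x+1)^(n+1) := by gcongr; linarith
    have h2 := mul_le_mul_of_nonneg_left ih hx
    push_cast
    calc x^(n+1) * ((n:ℝ)+1+1) = x * (x^n * (n+1)) + x^(n+1) := by ring
      _ ≤ x * (x+1)^(n+1) + (x+1)^(n+1) := by linarith
      _ = (x+1)^(n+1+1) := by ring

lemma NC_deriv_eval {P : ℝ[X]} (hP : NC P) {x : ℝ} (hx : 0 ≤ x) :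
    (derivative P).eval x ≤ P.eval (x+1) := by
  rw [derivative_eval, Polynomial.sum_def, eval_eq_sum, Polynomial.sum_def]
  refine sum_le_sum fun i _ => ?_
  rw [mul_assoc]
  refine mul_le_mul_of_nonneg_left ?_ (hP i)
  rcases i with _ | i
  · simp
  · have := mul_pow_le_aux i hx
    simp only [Nat.add_sub_cancel]; push_cast; linarith

lemma NC_iter_eval {P : ℝ[X]} (hP : NC P) (n : ℕ) {x : ℝ} (hx : 0 ≤ x) :
    (derivative^[n] P).eval x ≤ P.eval (x+n) := by
  induction n generalizing x with
  | zero => simp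
  | succ n ih =>
    rw [Function.iterate_succ_apply']
    refine (NC_deriv_eval (NC_iter hP n) hx).trans ((ih (by linarith)).trans (le_of_eq ?_))
    congr 1; push_cast; ring

lemma Bp_degree (a : ℕ) : (Bp a).degree = a := by
  induction a with
  | zero => simp [Bp]
  | succ a ih =>
    have h : (1/((a:ℝ)+1)) ≠ 0 := by positivity
    rw [Bp, degree_C_mul h, degree_mul, degree_X_add_C, ih]
    push_cast; ring

/-- Feldman's polynomials. -/
noncomputable def Pk (h k : ℕ) : ℝ[X] := Bp (k % h) * (Bp h)^(k / h)

lemma Pk_degree (h k : ℕ) : (Pk h k).degree = k := by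
  rw [Pk, degree_mul, degree_pow, Bp_degree, Bp_degree]
  have := Nat.mod_add_div k h
  rw [nsmul_eq_mul]
  rw [mul_comm] at this
  exact_mod_cast this

lemma NC_Pk (h k : ℕ) : NC (Pk h k) := NC_mul (NC_Bp _) (NC_pow (NC_Bp _) _)

lemma IV_Pk (d h : ℕ) (hh : 0 < h) (hd : ∀ m, 1 ≤ m → m ≤ h → m ∣ d) (k : ℕ) : IV d (Pk h k) :=
  IV_mul (IV_Bp d h hd _ (Nat.mod_lt _ hh).le) (IV_pow (IV_Bp d h hd _ le_rfl) _)

lemma Pk_eval_le (h M k Y : ℕ) (hh : 0 < h) (hk : k < h * M) :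
    (Pk h k).eval (Y:ℝ) ≤ (((Y+h).choose h : ℕ):ℝ)^M := by
  rw [Pk, eval_mul, eval_pow, Bp_eval, Bp_eval]
  have h1 : (Y + k % h).choose (k % h) ≤ (Y+h).choose h := by
    rw [← Nat.choose_symm_add, ← Nat.choose_symm_add]
    exact Nat.choose_le_choose _ (by have := Nat.mod_lt k hh; omega)
  have h2 : 1 ≤ (Y+h).choose h := Nat.choose_pos (by omega)
  have h3 : k / h + 1 ≤ M := by
    have : k / h < M := Nat.div_lt_of_lt_mul hk
    omega
  have : (Y + k % h).choose (k % h) * ((Y+h).choose h)^(k/h) ≤ ((Y+h).choose h)^M := by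
    calc _ ≤ (Y+h).choose h * ((Y+h).choose h)^(k/h) := Nat.mul_le_mul_right _ h1
      _ = ((Y+h).choose h)^(k/h+1) := by ring
      _ ≤ _ := Nat.pow_le_pow_right h2 h3
  exact_mod_cast this

lemma choose_le_exp (h A : ℕ) (hh : 0 < h) :
    (((A*h+h).choose h : ℕ):ℝ) ≤ (Real.exp 1 * (A+1))^h := by
  have h1 := Nat.choose_le_pow_div (α := ℝ) h (A*h+h)
  have h2 := Real.pow_div_factorial_le_exp (h:ℝ) (by positivity) h
  refine h1.trans ?_
  have : ((A*h+h:ℕ):ℝ) = (A+1)*h := by push_cast; ring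
  rw [this, mul_pow, mul_pow, ← Real.exp_nat_mul, mul_one, mul_div_assoc, mul_comm (Real.exp _)]
  gcongr

lemma lcmUpto_le (n : ℕ) : ((Nat.lcmUpto n : ℕ):ℝ) ≤ Real.exp (6*n) := by
  have h1 := Chebyshev.psi_eq_log_lcmUpto n
  have h2 := Chebyshev.psi_le_const_mul_self (x := (n:ℝ)) (by positivity)
  have hpos : (0:ℝ) < (Nat.lcmUpto n : ℕ) := by exact_mod_cast Nat.lcmUpto_pos n
  rw [← Real.log_le_iff_le_exp hpos, ← h1]
  refine h2.trans ?_
  have : Real.log 4 ≤ 2 := by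
    rw [show (4:ℝ) = 2^2 by norm_num, Real.log_pow]
    have := Real.log_two_lt_d9
    push_cast; linarith
  have hn : (0:ℝ) ≤ n := by positivity
  nlinarith

lemma dvd_lcmUpto (n m : ℕ) (h1 : 1 ≤ m) (h2 : m ≤ n) : m ∣ Nat.lcmUpto n := by
  unfold Nat.lcmUpto
  exact Finset.dvd_lcm (f := id) (by simp; omega)

lemma Pk_linInd (h : ℕ) (s : Finset ℕ) (c : ℕ → ℂ)
    (hc : ∑ k ∈ s, C (c k) * (Pk h k).map (algebraMap ℝ ℂ) = 0) : ∀ k ∈ s, c k = 0 := by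
  let Sq : Polynomial.Sequence ℂ := ⟨fun k => (Pk h k).map (algebraMap ℝ ℂ), fun k => by
    rw [degree_map, Pk_degree]⟩
  have := Sq.linearIndependent
  rw [linearIndependent_iff'] at this
  refine this s c ?_
  rw [← hc]
  refine sum_congr rfl fun k _ => ?_
  rw [smul_eq_C_mul]
end BakerTwo

namespace BakerTwo
open Polynomial Finset

/-- shift operator `Q ↦ α Q(X+1) - β Q` -/
noncomputable def Op (α β : ℂ) (Q : ℂ[X]) : ℂ[X] := C α * taylor 1 Q - C β * Q

lemma Op_eval (α β : ℂ) (Q : ℂ[X]) (x : ℂ) :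
    (Op α β Q).eval x = α * Q.eval (x+1) - β * Q.eval x := by
  simp [Op, taylor_eval]

lemma Op_degree_lt (α β : ℂ) (Q : ℂ[X]) (K : ℕ) (h : Q.degree < K) : (Op α β Q).degree < K := by
  unfold Op
  refine (degree_sub_le _ _).trans_lt (max_lt ?_ ?_)
  · refine lt_of_le_of_lt ?_ h
    refine (degree_mul_le _ _).trans ?_
    rw [degree_taylor]
    calc _ ≤ (0:WithBot ℕ) + Q.degree := by gcongr; exact degree_C_le
      _ = _ := zero_add _
  · refine lt_of_le_of_lt ?_ h
    refine (degree_mul_le _ _).trans ?_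
    calc _ ≤ (0:WithBot ℕ) + Q.degree := by gcongr; exact degree_C_le
      _ = _ := zero_add _

lemma Op_self_degree_lt (α : ℂ) (Q : ℂ[X]) (K : ℕ) (h : Q.degree < (K+1:ℕ)) :
    (Op α α Q).degree < K := by
  by_cases hQ : Q = 0
  · subst hQ; simp [Op]
  have h1 : Op α α Q = C α * (taylor 1 Q - Q) := by unfold Op; ring
  have h2 : (taylor 1 Q - Q).degree < (taylor 1 Q).degree := by
    apply degree_sub_lt_left
    · exact degree_taylor _ _
    · intro h0; apply hQ; have := degree_taylor Q 1; rw [h0] at this; simpa using this.symm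
    · exact leadingCoeff_taylor _ _
  rw [h1]
  rw [degree_taylor] at h2
  have h3 : Q.degree ≤ K := by
    rw [degree_eq_natDegree hQ] at h ⊢
    have : Q.natDegree < K + 1 := by exact_mod_cast h
    exact_mod_cast (by omega : Q.natDegree ≤ K)
  calc _ ≤ (C α).degree + (taylor 1 Q - Q).degree := degree_mul_le _ _
    _ ≤ 0 + (taylor 1 Q - Q).degree := by gcongr; exact degree_C_le
    _ = (taylor 1 Q - Q).degree := zero_add _
    _ < _ := h2.trans_le h3

lemma Op_inj (α β : ℂ) (h : α ≠ β) (Q : ℂ[X]) (hQ : Op α β Q = 0) : Q = 0 := by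
  have h1 : C α * taylor 1 Q = C β * Q := sub_eq_zero.mp hQ
  have h2 := congrArg leadingCoeff h1
  rw [leadingCoeff_mul, leadingCoeff_mul, leadingCoeff_taylor] at h2
  simp at h2
  rcases h2 with h2 | h2
  · exact absurd h2 h
  · exact h2

lemma Op_iter_degree_lt (α β : ℂ) (Q : ℂ[X]) (K k : ℕ) (h : Q.degree < K) :
    ((Op α β)^[k] Q).degree < K := by
  induction k with
  | zero => simpa
  | succ k ih => rw [Function.iterate_succ_apply']; exact Op_degree_lt _ _ _ _ ih

lemma Op_iter_inj (α β : ℂ) (h : α ≠ β) (k : ℕ) (Q : ℂ[X]) (hQ : (Op α β)^[k] Q = 0) : Q = 0 := by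
  induction k with
  | zero => simpa using hQ
  | succ k ih => rw [Function.iterate_succ_apply'] at hQ; exact ih (Op_inj _ _ h _ hQ)

lemma Op_iter_self (α : ℂ) (K : ℕ) (Q : ℂ[X]) (h : Q.degree < K) : (Op α α)^[K] Q = 0 := by
  induction K generalizing Q with
  | zero => simpa using h
  | succ k ih => rw [Function.iterate_succ_apply]; exact ih _ (Op_self_degree_lt _ _ _ h)

lemma zero_est_iter (n N : ℕ) (α : ℕ → ℂ) (β : ℂ) (Q : ℕ → ℂ[X])
    (h0 : ∀ x : ℕ, x < N → ∑ i ∈ range n, α i ^ x * (Q i).eval (x:ℂ) = 0) (k : ℕ) :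
    ∀ x : ℕ, x + k < N → ∑ i ∈ range n, α i ^ x * ((Op (α i) β)^[k] (Q i)).eval (x:ℂ) = 0 := by
  induction k with
  | zero => intro x hx; simpa using h0 x hx
  | succ k ih =>
    intro x hx
    have h1 := ih x (by omega)
    have h2 := ih (x+1) (by omega)
    have : ∀ i ∈ range n, α i ^ x * ((Op (α i) β)^[k+1] (Q i)).eval (x:ℂ)
       = α i ^ (x+1) * ((Op (α i) β)^[k] (Q i)).eval ((x+1:ℕ):ℂ)
        - β * (α i ^ x * ((Op (α i) β)^[k] (Q i)).eval (x:ℂ)) := by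
      intro i _
      rw [Function.iterate_succ_apply', Op_eval]; push_cast; ring
    rw [sum_congr rfl this, sum_sub_distrib, ← mul_sum, h1, h2]; simp

lemma zero_est (n K : ℕ) (α : ℕ → ℂ) (hα : ∀ i < n, α i ≠ 0)
    (hinj : ∀ i < n, ∀ j < n, α i = α j → i = j) (Q : ℕ → ℂ[X])
    (hQ : ∀ i < n, (Q i).degree < K)
    (h0 : ∀ x : ℕ, x < n * K → ∑ i ∈ range n, α i ^ x * (Q i).eval (x:ℂ) = 0) :
    ∀ i < n, Q i = 0 := by
  induction n generalizing Q with
  | zero => intro i hi; omega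
  | succ n ih =>
    have h1 := zero_est_iter (n+1) _ α (α n) Q h0 K
    have h2 : ∀ i < n, (Op (α i) (α n))^[K] (Q i) = 0 := by
      apply ih (fun i hi => hα i (by omega))
        (fun i hi j hj => hinj i (by omega) j (by omega))
        (fun i => (Op (α i) (α n))^[K] (Q i))
        (fun i hi => Op_iter_degree_lt _ _ _ _ _ (hQ i (by omega)))
      intro x hx
      have := h1 x (by rw [add_mul, one_mul]; omega)
      rw [sum_range_succ, Op_iter_self _ _ _ (hQ n (by omega))] at this
      simpa using this
    have h3 : ∀ i < n, Q i = 0 := fun i hi =>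
      Op_iter_inj _ _ (fun h => by have := hinj i (by omega) n (by omega) h; omega) K _ (h2 i hi)
    have h4 : Q n = 0 := by
      by_contra hne
      have hdeg := hQ n (by omega)
      rw [degree_eq_natDegree hne] at hdeg
      have hdeg' : (Q n).natDegree < K := by exact_mod_cast hdeg
      apply hne
      apply eq_zero_of_natDegree_lt_card_of_eval_eq_zero (Q n) (ι := Fin K) (f := fun x => ((x:ℕ):ℂ))
      · intro a b hab; exact Fin.ext (by simpa using hab)
      · intro x
        have := h0 x (by have := x.2; nlinarith)
        rw [sum_range_succ, sum_eq_zero (fun i hi => by rw [h3 i (mem_range.mp hi)]; simp)] at this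
        simpa [hα n (by omega)] using this
      · simpa using hdeg'
    intro i hi
    rcases Nat.lt_succ_iff_lt_or_eq.mp hi with h | h
    · exact h3 i h
    · exact h ▸ h4

lemma vander (L : ℕ) (u : ℕ → ℂ) (hu : ∀ i < L, ∀ j < L, u i = u j → i = j) (P : ℕ → ℂ[X])
    (h : ∀ τ < L, ∑ j ∈ range L, C (u j ^ τ) * P j = 0) : ∀ j < L, P j = 0 := by
  intro j hj
  ext m
  have key := Matrix.eq_zero_of_forall_pow_sum_mul_pow_eq_zero (R := ℂ) (n := L)
    (f := fun i : Fin L => u i) (v := fun i : Fin L => (P i).coeff m) (fun a b hab => Fin.ext (hu a a.2 b b.2 hab)) ?_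
  · have := congrFun key ⟨j, hj⟩
    simpa using this
  · intro τ
    have := congrArg (fun p => coeff p m) (h τ τ.2)
    simp only [finsetSum_coeff, coeff_C_mul, coeff_zero] at this
    rw [← this, Finset.sum_range]
    exact sum_congr rfl fun i _ => mul_comm _ _
end BakerTwo

namespace BakerTwo
open Polynomial Finset Complex

lemma order_succ {f : ℂ → ℂ} (hf : Differentiable ℂ f) {j : ℂ} (hj : f j = 0) {r : ℕ}
    (h : (r:ℕ∞) ≤ analyticOrderAt (deriv f) j) : ((r+1:ℕ):ℕ∞) ≤ analyticOrderAt f j := by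
  have h1 := (hf.analyticAt j).analyticOrderAt_deriv_add_one
  rw [hj] at h1
  simp only [sub_zero] at h1
  have h2 : (fun x => f x) = f := rfl
  rw [← h1]; push_cast; gcongr

lemma div_one {r : ℕ} {j : ℂ} {F : ℂ → ℂ} (hF : Differentiable ℂ F)
    (h : (r:ℕ∞) ≤ analyticOrderAt F j) :
    ∃ G : ℂ → ℂ, Differentiable ℂ G ∧ ∀ ζ, F ζ = (ζ - j)^r * G ζ := by
  induction r generalizing F with
  | zero => exact ⟨F, hF, by simp⟩
  | succ r ih =>
    have h0 : F j = 0 := by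
      apply apply_eq_zero_of_analyticOrderAt_ne_zero
      intro h0; rw [h0] at h; simp at h
    have hG1 : Differentiable ℂ (dslope F j) := by
      rw [← differentiableOn_univ]
      exact (Complex.differentiableOn_dslope Filter.univ_mem).mpr hF.differentiableOn
    have hFG : ∀ ζ, F ζ = (ζ - j) * dslope F j ζ := fun ζ => by
      have := sub_smul_dslope F j ζ
      rw [h0] at this; simpa using this.symm
    have hlin : AnalyticAt ℂ (fun ζ : ℂ => ζ - j) j := by fun_prop
    have hord : analyticOrderAt F j = 1 + analyticOrderAt (dslope F j) j := by
      have h1 : F = (fun ζ => ζ - j) * dslope F j := funext hFG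
      conv_lhs => rw [h1]
      rw [analyticOrderAt_mul hlin (hG1.analyticAt j)]
      congr 1
      have := (hlin).analyticOrderAt_eq_natCast (n := 1)
      have e := this.mpr ⟨fun _ => 1, by fun_prop, by simp, by simp⟩
      simpa using e
    rw [hord] at h
    have h' : (r:ℕ∞) ≤ analyticOrderAt (dslope F j) j := by
      have : (1:ℕ∞) + r ≤ 1 + analyticOrderAt (dslope F j) j := by
        refine le_trans (le_of_eq ?_) h; push_cast; ring
      exact (ENat.add_le_add_iff_left (by simp)).mp this
    obtain ⟨G, hG, hG'⟩ := ih hG1 h'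
    refine ⟨G, hG, fun ζ => ?_⟩
    rw [hFG, hG']; ring

lemma div_many {r X : ℕ} {F : ℂ → ℂ} (hF : Differentiable ℂ F)
    (h : ∀ j < X, (r:ℕ∞) ≤ analyticOrderAt F (j:ℂ)) :
    ∃ G : ℂ → ℂ, Differentiable ℂ G ∧ ∀ ζ, F ζ = (∏ j ∈ range X, (ζ - j)^r) * G ζ := by
  induction X with
  | zero => exact ⟨F, hF, by simp⟩
  | succ X ih =>
    obtain ⟨G, hG, hG'⟩ := ih (fun j hj => h j (by omega))
    have hP : AnalyticAt ℂ (fun ζ : ℂ => ∏ j ∈ range X, (ζ - j)^r) (X:ℂ) := by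
      apply Differentiable.analyticAt; fun_prop
    have hP0 : analyticOrderAt (fun ζ : ℂ => ∏ j ∈ range X, (ζ - j)^r) (X:ℂ) = 0 := by
      rw [hP.analyticOrderAt_eq_zero, prod_ne_zero_iff]
      intro j hj
      apply pow_ne_zero
      rw [sub_ne_zero]
      have := mem_range.mp hj
      exact_mod_cast this.ne'
    have hord : analyticOrderAt F (X:ℂ) = analyticOrderAt G (X:ℂ) := by
      have h1 : F = (fun ζ : ℂ => ∏ j ∈ range X, (ζ - j)^r) * G := funext hG'
      rw [h1, analyticOrderAt_mul hP (hG.analyticAt _), hP0, zero_add]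
    obtain ⟨G2, hG2, hG2'⟩ := div_one hG (hord ▸ h X (by omega))
    refine ⟨G2, hG2, fun ζ => ?_⟩
    rw [hG', hG2', prod_range_succ]; ring

lemma schwarz {r X x0 : ℕ} {F : ℂ → ℂ} (hF : Differentiable ℂ F)
    (h : ∀ j < X, (r:ℕ∞) ≤ analyticOrderAt F (j:ℂ)) {Y R ρ V : ℝ} (hx0 : (x0:ℝ) ≤ Y)
    (hXY : (X:ℝ) ≤ Y) (hρ : 0 < ρ) (hY : 0 < Y) (hR : R = (ρ+1)*Y)
    (hV : ∀ ζ : ℂ, ‖ζ‖ = R → ‖F ζ‖ ≤ V) :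
    ‖F (x0:ℂ)‖ ≤ V * (ρ⁻¹)^(r*X) := by
  obtain ⟨G, hG, hG'⟩ := div_many hF h
  have hRY : Y < R := by rw [hR]; nlinarith
  have hV0 : 0 ≤ V := (norm_nonneg _).trans (hV (R:ℂ) (by
    rw [Complex.norm_real, Real.norm_of_nonneg (by linarith)]))
  have hD : 0 < (ρ * Y)^(r*X) := by positivity
  have hGb : ‖G (x0:ℂ)‖ ≤ V / (ρ*Y)^(r*X) := by
    refine Complex.norm_le_of_forall_mem_frontier_norm_le (U := Metric.ball (0:ℂ) R)
      Metric.isBounded_ball hG.diffContOnCl ?_ ?_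
    · intro ζ hζ
      rw [frontier_ball (0:ℂ) (by linarith : R ≠ 0), mem_sphere_zero_iff_norm] at hζ
      have h1 := hV ζ hζ
      rw [hG', norm_mul, norm_prod] at h1
      rw [le_div_iff₀ hD]
      refine le_trans ?_ h1
      rw [mul_comm]
      gcongr
      have : (ρ*Y)^(r*X) = ∏ j ∈ range X, (ρ*Y)^r := by
        rw [prod_const, card_range, pow_mul]
      rw [this]
      apply prod_le_prod
      · intro j _; positivity
      · intro j hj
        rw [norm_pow]
        gcongr
        have h2 := norm_sub_norm_le ζ (j:ℂ)
        rw [hζ, Complex.norm_natCast] at h2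
        have h3 : (j:ℝ) ≤ X := by exact_mod_cast (mem_range.mp hj).le
        rw [hR] at h2
        linarith
    · apply subset_closure
      rw [mem_ball_zero_iff, Complex.norm_natCast]; linarith
  rw [hG', norm_mul, norm_prod]
  have h5 : ∏ j ∈ range X, ‖((x0:ℂ) - j)^r‖ ≤ Y^(r*X) := by
    have : Y^(r*X) = ∏ j ∈ range X, Y^r := by
      rw [prod_const, card_range, pow_mul]
    rw [this]
    apply prod_le_prod
    · intro j _; positivity
    · intro j hj
      rw [norm_pow]
      gcongr
      have h3 : (j:ℝ) ≤ X := by exact_mod_cast (mem_range.mp hj).le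
      have h4 : (x0:ℂ) - j = (((x0:ℝ) - j : ℝ) : ℂ) := by push_cast; rfl
      rw [h4, Complex.norm_real, Real.norm_eq_abs, abs_le]
      have : (0:ℝ) ≤ j := by positivity
      have : (0:ℝ) ≤ x0 := by positivity
      constructor <;> linarith
  calc _ ≤ Y^(r*X) * (V / (ρ*Y)^(r*X)) := by gcongr
    _ = _ := by rw [mul_pow, inv_pow]; field_simp

/-- An entire function which is flat of order `n` at integers and fixes them. -/
noncomputable def sg (n : ℕ) (ζ : ℂ) : ℂ :=
  ζ - (1/(2*Real.pi*I)) * ∑ m ∈ range n, (-1)^m * (exp (2*Real.pi*I*ζ) - 1)^(m+1) / (m+1)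

lemma sg_deriv (n : ℕ) (ζ : ℂ) :
    HasDerivAt (sg n) ((1 - exp (2*Real.pi*I*ζ))^n) ζ := by
  have hpi : (2*Real.pi*I:ℂ) ≠ 0 := Complex.two_pi_I_ne_zero
  have hy : HasDerivAt (fun ζ : ℂ => exp (2*Real.pi*I*ζ) - 1)
      (exp (2*Real.pi*I*ζ) * (2*Real.pi*I)) ζ := by
    have := ((hasDerivAt_id ζ).const_mul (2*Real.pi*I:ℂ)).cexp
    simpa using this.sub_const 1
  have hs : HasDerivAt (fun ζ : ℂ => ∑ m ∈ range n, (-1)^m * (exp (2*Real.pi*I*ζ) - 1)^(m+1) / ((m:ℂ)+1))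
     (∑ m ∈ range n, (1 - exp (2*Real.pi*I*ζ))^m * (exp (2*Real.pi*I*ζ) * (2*Real.pi*I))) ζ := by
    apply HasDerivAt.fun_sum
    intro m _
    have h1 := (((hy.pow (m+1)).const_mul ((-1:ℂ)^m)).div_const ((m:ℂ)+1))
    have hm : (m:ℂ)+1 ≠ 0 := by exact_mod_cast Nat.succ_ne_zero m
    refine HasDerivAt.congr_deriv h1 ?_
    have : (1 - exp (2*Real.pi*I*ζ))^m = (-1)^m * (exp (2*Real.pi*I*ζ) - 1)^m := by
      rw [← mul_pow]; ring
    rw [this]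
    simp only [Nat.add_sub_cancel]
    push_cast
    field_simp
  have := (hasDerivAt_id ζ).sub (hs.const_mul (1/(2*Real.pi*I:ℂ)))
  refine HasDerivAt.congr_deriv this ?_
  rw [← sum_mul]
  have hg := mul_neg_geom_sum (1 - exp (2*Real.pi*I*ζ)) n
  field_simp
  linear_combination (-1:ℂ) * hg

lemma exp_two_pi_nat (x : ℕ) : exp (2*Real.pi*I*(x:ℂ)) = 1 := by
  rw [Complex.exp_eq_one_iff]; exact ⟨x, by push_cast; ring⟩

lemma sg_nat (n x : ℕ) : sg n (x:ℂ) = x := by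
  unfold sg; rw [exp_two_pi_nat]; simp

lemma sg_bound (n : ℕ) (ζ : ℂ) (R : ℝ) (h : ‖ζ‖ ≤ R) :
    ‖sg n ζ‖ ≤ R + n * (Real.exp (7*R) + 1)^n := by
  have hR : 0 ≤ R := (norm_nonneg _).trans h
  unfold sg
  refine (norm_sub_le _ _).trans (add_le_add h ?_)
  rw [norm_mul]
  have h1 : ‖(1/(2*Real.pi*I):ℂ)‖ ≤ 1 := by
    rw [norm_div, norm_one, norm_mul, norm_mul, Complex.norm_I, Complex.norm_real,
      Real.norm_of_nonneg Real.pi_pos.le, div_le_one (by simp [Real.pi_pos])]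
    have := Real.pi_gt_three
    simp; linarith
  have hy : ‖exp (2*Real.pi*I*ζ) - 1‖ ≤ Real.exp (7*R) + 1 := by
    refine (norm_sub_le _ _).trans ?_
    rw [norm_one]
    gcongr
    refine (Complex.norm_exp_le_exp_norm _).trans ?_
    gcongr
    rw [norm_mul, norm_mul, norm_mul, Complex.norm_I, Complex.norm_real,
      Real.norm_of_nonneg Real.pi_pos.le]
    have := Real.pi_lt_d2
    simp
    have := norm_nonneg ζ
    nlinarith [Real.pi_pos]
  calc _ ≤ 1 * ‖∑ m ∈ range n, (-1)^m * (exp (2*Real.pi*I*ζ) - 1)^(m+1) / ((m:ℂ)+1)‖ := by gcongr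
    _ ≤ ∑ m ∈ range n, ‖(-1)^m * (exp (2*Real.pi*I*ζ) - 1)^(m+1) / ((m:ℂ)+1)‖ := by
        rw [one_mul]; exact norm_sum_le _ _
    _ ≤ ∑ m ∈ range n, (Real.exp (7*R) + 1)^n := by
        apply sum_le_sum
        intro m hm
        have hm' := mem_range.mp hm
        rw [norm_div, norm_mul, norm_pow, norm_pow, norm_neg, norm_one, one_pow, one_mul]
        have h3 : 1 ≤ ‖(m:ℂ)+1‖ := by
          have : (m:ℂ)+1 = ((m+1:ℕ):ℂ) := by push_cast; rfl
          rw [this, Complex.norm_natCast]; push_cast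
          have : (0:ℝ) ≤ m := by positivity
          linarith
        refine (div_le_self (by positivity) h3).trans ?_
        have h4 : 1 ≤ Real.exp (7*R) + 1 := by have := Real.exp_pos (7*R); linarith
        calc _ ≤ (Real.exp (7*R) + 1)^(m+1) := by gcongr
          _ ≤ _ := pow_le_pow_right₀ h4 (by omega)
    _ = _ := by simp

section aux
variable {ι : Type*} (s : Finset ι) (c : ι → ℂ) (p : ι → ℂ[X]) (u μ : ι → ℂ) (η κ : ℂ) (n : ℕ)

/-- the auxiliary function and its formal derivatives -/
noncomputable def Ff (τ0 τ1 : ℕ) (ζ : ℂ) : ℂ :=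
  ∑ i ∈ s, c i * (derivative^[τ0] (p i)).eval ζ * u i ^ τ1 * exp (η * u i * ζ + κ * μ i * sg n ζ)

lemma Ff_hasDeriv (τ0 τ1 : ℕ) (ζ : ℂ) :
    HasDerivAt (Ff s c p u μ η κ n τ0 τ1)
      (Ff s c p u μ η κ n (τ0+1) τ1 ζ + η * Ff s c p u μ η κ n τ0 (τ1+1) ζ +
        (1 - exp (2*Real.pi*I*ζ))^n * (κ * Ff s (fun i => c i * μ i) p u μ η κ n τ0 τ1 ζ)) ζ := by
  have : ∀ i ∈ s, HasDerivAt (fun ζ : ℂ => c i * (derivative^[τ0] (p i)).eval ζ * u i ^ τ1 *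
      exp (η * u i * ζ + κ * μ i * sg n ζ))
      (c i * (derivative^[τ0+1] (p i)).eval ζ * u i ^ τ1 * exp (η * u i * ζ + κ * μ i * sg n ζ)
      + η * (c i * (derivative^[τ0] (p i)).eval ζ * u i ^ (τ1+1) * exp (η * u i * ζ + κ * μ i * sg n ζ))
      + (1 - exp (2*Real.pi*I*ζ))^n * (κ * (c i * μ i * (derivative^[τ0] (p i)).eval ζ * u i ^ τ1 *
      exp (η * u i * ζ + κ * μ i * sg n ζ)))) ζ := by
    intro i _
    have h1 := (derivative^[τ0] (p i)).hasDerivAt ζ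
    have h2 := (((hasDerivAt_id ζ).const_mul (η * u i)).add ((sg_deriv n ζ).const_mul (κ * μ i))).cexp
    have h3 := (((h1.const_mul (c i)).mul_const (u i ^ τ1))).mul h2
    refine HasDerivAt.congr_deriv h3 ?_
    rw [Function.iterate_succ_apply']
    simp only [Pi.add_apply, id]
    ring
  have := HasDerivAt.fun_sum this
  refine HasDerivAt.congr_deriv this ?_
  simp only [Ff, sum_add_distrib, mul_sum]

lemma Ff_diff (τ0 τ1 : ℕ) : Differentiable ℂ (Ff s c p u μ η κ n τ0 τ1) :=
  fun ζ => (Ff_hasDeriv s c p u μ η κ n τ0 τ1 ζ).differentiableAt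

lemma Ff_order (T x : ℕ) (h0 : ∀ τ0 < T, ∀ τ1 < T, Ff s c p u μ η κ n τ0 τ1 (x:ℂ) = 0) (r : ℕ)
    (hr : r ≤ n + 1) : ∀ τ0 τ1, τ0 + r ≤ T → τ1 + r ≤ T →
      (r:ℕ∞) ≤ analyticOrderAt (Ff s c p u μ η κ n τ0 τ1) (x:ℂ) := by
  induction r with
  | zero => simp
  | succ r ih =>
    intro τ0 τ1 h1 h2
    apply order_succ (Ff_diff s c p u μ η κ n τ0 τ1) (h0 _ (by omega) _ (by omega))
    have hd : deriv (Ff s c p u μ η κ n τ0 τ1) = Ff s c p u μ η κ n (τ0+1) τ1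
        + (fun _ => η) * Ff s c p u μ η κ n τ0 (τ1+1) +
        (fun ζ => 1 - exp (2*Real.pi*I*ζ))^n * ((fun _ => κ) * Ff s (fun i => c i * μ i) p u μ η κ n τ0 τ1) := by
      funext ζ
      rw [(Ff_hasDeriv s c p u μ η κ n τ0 τ1 ζ).deriv]
      simp
    rw [hd]
    have a1 := (Ff_diff s c p u μ η κ n (τ0+1) τ1).analyticAt (x:ℂ)
    have a2 := (Ff_diff s c p u μ η κ n τ0 (τ1+1)).analyticAt (x:ℂ)
    have a3 := (Ff_diff s (fun i => c i * μ i) p u μ η κ n τ0 τ1).analyticAt (x:ℂ)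
    have aη : AnalyticAt ℂ (fun _ : ℂ => η) (x:ℂ) := analyticAt_const
    have aκ : AnalyticAt ℂ (fun _ : ℂ => κ) (x:ℂ) := analyticAt_const
    have ae : AnalyticAt ℂ (fun ζ : ℂ => 1 - exp (2*Real.pi*I*ζ)) (x:ℂ) := by
      apply Differentiable.analyticAt; fun_prop
    refine le_trans (le_min (le_trans (le_min ?_ ?_) le_analyticOrderAt_add) ?_) le_analyticOrderAt_add
    · exact ih (by omega) _ _ (by omega) (by omega)
    · rw [analyticOrderAt_mul aη a2]
      exact le_add_left (ih (by omega) _ _ (by omega) (by omega))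
    · rw [analyticOrderAt_mul (ae.pow n) (aκ.mul a3)]
      apply le_add_right
      rw [analyticOrderAt_pow ae]
      have : 1 ≤ analyticOrderAt (fun ζ : ℂ => 1 - exp (2*Real.pi*I*ζ)) (x:ℂ) := by
        rw [Order.one_le_iff_ne_zero, ne_eq, ae.analyticOrderAt_eq_zero]
        simp [exp_two_pi_nat]
      calc (r:ℕ∞) ≤ n := by exact_mod_cast (by omega : r ≤ n)
        _ = n • (1:ℕ∞) := by simp
        _ ≤ _ := by gcongr
end aux
end BakerTwo

namespace BakerTwo
open Polynomial Finset Complex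

section alg
variable {θ : ℝ} {a b : ℤ}

lemma cos_abs_le (hb : 1 ≤ b) (hc : Real.cos θ = a / b) : |a| ≤ b := by
  have h := Real.abs_cos_le_one θ
  have hb' : (0:ℝ) < b := by exact_mod_cast (by omega : 0 < b)
  rw [hc, abs_div, abs_of_pos hb', div_le_one hb'] at h
  exact_mod_cast h

lemma beta_sq (hb : 1 ≤ b) (hc : Real.cos θ = a / b) :
    (b * exp (I * θ) : ℂ)^2 = 2 * a * (b * exp (I * θ)) - b^2 := by
  have hb' : (b:ℝ) ≠ 0 := by exact_mod_cast (by omega : b ≠ 0)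
  have h1 : (a:ℂ) = b * Complex.cos θ := by
    rw [← Complex.ofReal_cos, hc]; push_cast
    have : (b:ℂ) ≠ 0 := by exact_mod_cast (by omega : b ≠ 0)
    field_simp
  rw [h1, mul_comm I, Complex.exp_mul_I]
  have := Complex.sin_sq_add_cos_sq (θ:ℂ)
  linear_combination (b:ℂ)^2 * Complex.sin θ ^2 * Complex.I_sq - (b:ℂ)^2 * this

lemma beta_pow (hb : 1 ≤ b) (hc : Real.cos θ = a / b) (n : ℕ) :
    ∃ X Y : ℤ, (b * exp (I * θ) : ℂ)^n = X + Y * (b * exp (I * θ)) ∧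
      |X| ≤ (b+1)^(2*n) ∧ |Y| ≤ (b+1)^(2*n) := by
  induction n with
  | zero => exact ⟨1, 0, by simp, by simp, by simp⟩
  | succ n ih =>
    obtain ⟨X, Y, h, hX, hY⟩ := ih
    have ha := cos_abs_le hb hc
    refine ⟨-(b^2*Y), X + 2*a*Y, ?_, ?_, ?_⟩
    · rw [pow_succ, h]; push_cast
      linear_combination (Y:ℂ) * beta_sq hb hc
    · rw [abs_neg, abs_mul, abs_of_nonneg (sq_nonneg b)]
      have : (b+1)^(2*(n+1)) = (b+1)^2 * (b+1)^(2*n) := by ring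
      rw [this]
      have h2 : b^2 ≤ (b+1)^2 := by nlinarith
      gcongr
    · have : (b+1)^(2*(n+1)) = (b+1)^2 * (b+1)^(2*n) := by ring
      rw [this]
      have h3 : |X + 2*a*Y| ≤ |X| + 2 * |a| * |Y| := by
        refine (abs_add_le _ _).trans ?_
        rw [abs_mul, abs_mul]; simp
      have h4 : |a| * |Y| ≤ b * (b+1)^(2*n) := by
        apply mul_le_mul ha hY (abs_nonneg _) (by omega)
      have h5 : 0 ≤ (b+1)^(2*n) := by positivity
      have h6 : 0 ≤ b^2 * (b+1)^(2*n) := by positivity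
      have h7 : (b+1)^2 * (b+1)^(2*n) = b^2 * (b+1)^(2*n) + 2 * (b * (b+1)^(2*n)) + (b+1)^(2*n) := by ring
      rw [h7]; linarith

lemma z_pow (hb : 1 ≤ b) (hc : Real.cos θ = a / b) (n N : ℕ) (hn : n ≤ N) :
    ∃ X Y : ℤ, (b:ℂ)^N * exp (I * θ)^n = X + Y * (b * exp (I * θ)) ∧
      |X| ≤ (b+1)^(2*N) ∧ |Y| ≤ (b+1)^(2*N) := by
  obtain ⟨X, Y, h, hX, hY⟩ := beta_pow hb hc n
  have h1 : b^(N-n) * (b+1)^(2*n) ≤ (b+1)^(2*N) := by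
    have : (b+1)^(2*N) = (b+1)^(2*(N-n)) * (b+1)^(2*n) := by rw [← pow_add]; congr 1; omega
    rw [this]
    have : b^(N-n) ≤ (b+1)^(2*(N-n)) := by
      rw [pow_mul]; gcongr; nlinarith
    gcongr
  have h0 : 0 ≤ b^(N-n) := by positivity
  refine ⟨b^(N-n)*X, b^(N-n)*Y, ?_, ?_, ?_⟩
  · have : (b:ℂ)^N = b^(N-n)*b^n := by rw [← pow_add]; congr 1; omega
    rw [this, mul_assoc, ← mul_pow, h]; push_cast; ring
  · rw [abs_mul, abs_of_nonneg h0]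
    exact (mul_le_mul_of_nonneg_left hX h0).trans h1
  · rw [abs_mul, abs_of_nonneg h0]
    exact (mul_le_mul_of_nonneg_left hY h0).trans h1

lemma small_zero (hb : 1 ≤ b) (hc : Real.cos θ = a / b) (X Y : ℤ)
    (h : ‖(X + Y * (b * exp (I * θ)) : ℂ)‖ < 1) : (X + Y * (b * exp (I * θ)) : ℂ) = 0 := by
  have hb' : (b:ℝ) ≠ 0 := by exact_mod_cast (by omega : b ≠ 0)
  have hn : ‖(X + Y * (b * exp (I * θ)) : ℂ)‖^2 = ((X^2+2*a*X*Y+b^2*Y^2 : ℤ):ℝ) := by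
    rw [← Complex.normSq_eq_norm_sq]
    have : (X + Y * (b * exp (I * θ)) : ℂ) =
      ((X + Y*b*Real.cos θ : ℝ):ℂ) + ((Y*b*Real.sin θ : ℝ):ℂ) * I := by
      rw [mul_comm I, Complex.exp_mul_I]; push_cast; ring
    rw [this, Complex.normSq_add_mul_I]
    have h1 : (a:ℝ) = b * Real.cos θ := by rw [hc]; field_simp
    push_cast
    rw [h1]
    linear_combination (Y:ℝ)^2*b^2 * Real.sin_sq_add_cos_sq θ
  have h2 : ‖(X + Y * (b * exp (I * θ)) : ℂ)‖^2 < 1 := by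
    have := norm_nonneg (X + Y * (b * exp (I * θ)) : ℂ)
    nlinarith
  rw [hn] at h2
  have h3 : X^2+2*a*X*Y+b^2*Y^2 < 1 := by exact_mod_cast h2
  have h4 : (0:ℝ) ≤ ((X^2+2*a*X*Y+b^2*Y^2 : ℤ):ℝ) := by rw [← hn]; positivity
  have h5 : 0 ≤ X^2+2*a*X*Y+b^2*Y^2 := by exact_mod_cast h4
  have h6 : X^2+2*a*X*Y+b^2*Y^2 = 0 := by omega
  rw [h6] at hn
  simpa using hn
end alg
end BakerTwo

namespace BakerTwo
open Polynomial Finset Complex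

section siegel
attribute [local instance] Matrix.seminormedAddCommGroup

lemma siegel {ι κ : Type*} (s : Finset ι) (e : Finset κ) (he : e.Nonempty)
    (hcard : s.card = 2 * e.card) (A : κ → ι → ℤ) (B : ℝ) (hB : 1 ≤ B)
    (hA : ∀ k ∈ e, ∀ i ∈ s, |(A k i : ℝ)| ≤ B) :
    ∃ c : ι → ℤ, (∃ i ∈ s, c i ≠ 0) ∧ (∀ k ∈ e, ∑ i ∈ s, A k i * c i = 0) ∧
      ∀ i ∈ s, |(c i : ℝ)| ≤ s.card * B := by
  classical
  have hpos : 0 < e.card := he.card_pos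
  let MA : Matrix e s ℤ := fun k i => A k i
  obtain ⟨t, ht0, ht, hn⟩ := Int.Matrix.exists_ne_zero_int_vec_norm_le MA
    (by simp only [Fintype.card_coe]; omega) (by simp only [Fintype.card_coe]; omega)
  have hMA : ‖MA‖ ≤ B := (Matrix.norm_le_iff (by linarith)).mpr (fun k i => by
    rw [Int.norm_eq_abs]; exact hA k k.2 i i.2)
  have hexp : ((Fintype.card e : ℝ) / ((Fintype.card s : ℝ) - Fintype.card e)) = 1 := by
    simp only [Fintype.card_coe, hcard]; push_cast
    have : (e.card:ℝ) ≠ 0 := by exact_mod_cast hpos.ne'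
    rw [show 2 * (e.card:ℝ) - e.card = e.card by ring, div_self this]
  rw [hexp, Real.rpow_one, Fintype.card_coe] at hn
  refine ⟨fun i => if h : i ∈ s then t ⟨i, h⟩ else 0, ?_, ?_, ?_⟩
  · by_contra! hc
    apply ht0
    funext i
    have := hc i i.2
    simpa using this
  · intro k hk
    have := congrFun ht ⟨k, hk⟩
    simp only [Matrix.mulVec, dotProduct, Pi.zero_apply] at this
    rw [← this, ← Finset.sum_coe_sort s]
    apply sum_congr rfl
    intro i _
    simp [MA]
  · intro i hi
    simp only [hi, dite_true]
    rw [← Int.norm_eq_abs]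
    refine (norm_le_pi_norm t ⟨i, hi⟩).trans (hn.trans ?_)
    gcongr
    exact max_le hB hMA
end siegel

/-- index set -/
def idx (K L : ℕ) : Finset (ℕ × ℕ × ℕ) := range K ×ˢ range L ×ˢ range L

lemma mem_idx {K L : ℕ} {i : ℕ × ℕ × ℕ} : i ∈ idx K L ↔ i.1 < K ∧ i.2.1 < L ∧ i.2.2 < L := by
  simp [idx]

lemma card_idx (K L : ℕ) : (idx K L).card = K * (L * L) := by simp [idx]

/-- the frequencies -/
def uu (p q : ℤ) (i : ℕ × ℕ × ℕ) : ℤ := p * i.2.1 + q * i.2.2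

lemma uu_bound {p q : ℤ} (hq : 1 ≤ q) (hp : |p| ≤ 2 * q) {K L : ℕ} {i : ℕ × ℕ × ℕ}
    (hi : i ∈ idx K L) : |(uu p q i : ℝ)| ≤ 4 * q * L := by
  obtain ⟨-, h1, h2⟩ := mem_idx.mp hi
  have : |uu p q i| ≤ 4 * q * L := by
    unfold uu
    have h3 : |p * (i.2.1:ℤ) + q * i.2.2| ≤ |p| * i.2.1 + q * i.2.2 := by
      refine (abs_add_le _ _).trans ?_
      rw [abs_mul, abs_mul, abs_of_pos (by omega : 0 < q)]; simp
    have h1' : (i.2.1:ℤ) ≤ L := by exact_mod_cast h1.le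
    have h2' : (i.2.2:ℤ) ≤ L := by exact_mod_cast h2.le
    have h4 : |p| * (i.2.1:ℤ) ≤ (2*q) * L := mul_le_mul hp h1' (by positivity) (by omega)
    have h5 : q * (i.2.2:ℤ) ≤ q * L := mul_le_mul_of_nonneg_left h2' (by omega)
    have h6 : 0 ≤ q * (L:ℤ) := by positivity
    linarith
  exact_mod_cast this

section FF
variable (θ : ℝ) (p q : ℤ) (h K L n : ℕ) (c : ℕ × ℕ × ℕ → ℤ)

/-- the auxiliary function -/
noncomputable def FF (τ0 τ1 : ℕ) (ζ : ℂ) : ℂ :=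
  Ff (idx K L) (fun i => (c i : ℂ)) (fun i => (Pk h i.1).map (algebraMap ℝ ℂ))
    (fun i => (uu p q i : ℂ)) (fun i => (i.2.1 : ℂ)) (2*Real.pi*I/q)
    (I * ((θ - 2*Real.pi*p/q : ℝ) : ℂ)) n τ0 τ1 ζ

lemma eval_iter_map (P : ℝ[X]) (τ : ℕ) (ζ : ℂ) :
    (derivative^[τ] (P.map (algebraMap ℝ ℂ))).eval ζ = aeval ζ (derivative^[τ] P) := by
  rw [iterate_derivative_map, eval_map_algebraMap]

lemma FF_nat (hq : q ≠ 0) (τ0 τ1 x : ℕ) : FF θ p q h K L n c τ0 τ1 (x:ℂ) =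
    ∑ i ∈ idx K L, (c i:ℂ) * (((derivative^[τ0] (Pk h i.1)).eval (x:ℝ) : ℝ) : ℂ) *
      (uu p q i : ℂ)^τ1 * exp (I * θ)^(i.2.1 * x) := by
  unfold FF Ff
  apply sum_congr rfl
  intro i _
  rw [eval_iter_map, sg_nat]
  congr 1
  · congr 2
    have : (x:ℂ) = algebraMap ℝ ℂ (x:ℝ) := by simp
    rw [this, aeval_algebraMap_apply]; simp
  · rw [← Complex.exp_nat_mul, Complex.exp_eq_exp_iff_exists_int]
    refine ⟨i.2.2 * x, ?_⟩
    have : (q:ℂ) ≠ 0 := by exact_mod_cast hq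
    unfold uu
    push_cast
    field_simp
    ring

lemma FF_int {a b : ℤ} (hb : 1 ≤ b) (hc : Real.cos θ = a / b) (hq : 1 ≤ q) (hp : |p| ≤ 2*q)
    (hh : 0 < h) :
    ∃ eX eY : ℕ → ℕ → ℕ → (ℕ × ℕ × ℕ) → ℤ, (∀ c : ℕ × ℕ × ℕ → ℤ, ∀ τ0 τ1 x,
      ((Nat.lcmUpto h : ℕ) : ℂ)^τ0 * (b:ℂ)^(L*x) * FF θ p q h K L n c τ0 τ1 (x:ℂ) =
      ((∑ i ∈ idx K L, eX τ0 τ1 x i * c i : ℤ) : ℂ) +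
        ((∑ i ∈ idx K L, eY τ0 τ1 x i * c i : ℤ) : ℂ) * (b * exp (I * θ))) ∧
      ∀ τ0 τ1 x, ∀ i ∈ idx K L,
        |(eX τ0 τ1 x i : ℝ)| ≤ ((Nat.lcmUpto h : ℕ):ℝ)^τ0 * (Pk h i.1).eval ((x:ℝ)+τ0) *
          (4*q*L)^τ1 * ((b:ℝ)+1)^(2*(L*x)) ∧
        |(eY τ0 τ1 x i : ℝ)| ≤ ((Nat.lcmUpto h : ℕ):ℝ)^τ0 * (Pk h i.1).eval ((x:ℝ)+τ0) *
          (4*q*L)^τ1 * ((b:ℝ)+1)^(2*(L*x)) := by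
  have hIV := fun k => IV_Pk (Nat.lcmUpto h) h hh (fun m h1 h2 => dvd_lcmUpto h m h1 h2) k
  choose N hN using hIV
  have hz : ∀ x l : ℕ, ∃ X Y : ℤ, l < L → ((b:ℂ)^(L*x) * exp (I * θ)^(l*x) = X + Y * (b * exp (I * θ)) ∧
      |X| ≤ (b+1)^(2*(L*x)) ∧ |Y| ≤ (b+1)^(2*(L*x))) := by
    intro x l
    by_cases hl : l < L
    · obtain ⟨X, Y, h⟩ := z_pow hb hc (l*x) (L*x) (by gcongr)
      exact ⟨X, Y, fun _ => h⟩
    · exact ⟨0, 0, fun h => absurd h hl⟩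
  choose X Y hXY using hz
  refine ⟨fun τ0 τ1 x i => N i.1 τ0 x * uu p q i ^ τ1 * X x i.2.1,
    fun τ0 τ1 x i => N i.1 τ0 x * uu p q i ^ τ1 * Y x i.2.1, ?_, ?_⟩
  · intro c τ0 τ1 x
    rw [FF_nat _ _ _ _ _ _ _ _ (by omega), mul_sum]
    push_cast
    rw [sum_mul, ← sum_add_distrib]
    apply sum_congr rfl
    intro i hi
    obtain ⟨-, h1, h2⟩ := mem_idx.mp hi
    have e1 := (hXY x i.2.1 h1).1
    have e2 : ((N i.1 τ0 x : ℤ) : ℂ) = ((Nat.lcmUpto h : ℕ):ℂ)^τ0 *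
        (((derivative^[τ0] (Pk h i.1)).eval (x:ℝ) : ℝ) : ℂ) := by
      have := congrArg (fun r : ℝ => (r:ℂ)) (hN i.1 τ0 x)
      push_cast at this
      exact this
    rw [e2]
    linear_combination (c i:ℂ) * (((Nat.lcmUpto h : ℕ):ℂ)^τ0 *
        (((derivative^[τ0] (Pk h i.1)).eval (x:ℝ) : ℝ) : ℂ)) * (uu p q i : ℂ)^τ1 * e1
  · intro τ0 τ1 x i hi
    obtain ⟨-, h1, h2⟩ := mem_idx.mp hi
    obtain ⟨-, e1, e2⟩ := hXY x i.2.1 h1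
    have f1 : |(X x i.2.1 : ℝ)| ≤ ((b:ℝ)+1)^(2*(L*x)) := by exact_mod_cast e1
    have f2 : |(Y x i.2.1 : ℝ)| ≤ ((b:ℝ)+1)^(2*(L*x)) := by exact_mod_cast e2
    have f3 : |(N i.1 τ0 x : ℝ)| ≤ ((Nat.lcmUpto h : ℕ):ℝ)^τ0 * (Pk h i.1).eval ((x:ℝ)+τ0) := by
      rw [hN, abs_mul, abs_of_nonneg (by positivity),
        abs_of_nonneg (NC_eval_nonneg (NC_iter (NC_Pk _ _) _) (by positivity))]
      gcongr
      exact NC_iter_eval (NC_Pk _ _) _ (by positivity)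
    have f4 : |((uu p q i:ℝ))^τ1| ≤ (4*q*L)^τ1 := by
      rw [abs_pow]; gcongr; exact uu_bound hq hp hi
    have hP : 0 ≤ (Pk h i.1).eval ((x:ℝ)+τ0) := NC_eval_nonneg (NC_Pk _ _) (by positivity)
    have hq0 : (0:ℝ) ≤ q := by exact_mod_cast (by omega : 0 ≤ q)
    push_cast
    rw [abs_mul, abs_mul, abs_mul, abs_mul]
    constructor
    · gcongr
    · gcongr

lemma FF_bound (hq : 1 ≤ q) (hp : |p| ≤ 2*q) (τ0 τ1 : ℕ) (ζ : ℂ) (R H Pm E : ℝ)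
    (hζ : ‖ζ‖ ≤ R) (hH0 : 0 ≤ H) (hH : ∀ i ∈ idx K L, |(c i:ℝ)| ≤ H)
    (hPm : ∀ k < K, (Pk h k).eval (R + τ0) ≤ Pm)
    (hE : |θ - 2*Real.pi*p/q| * L * ‖sg n ζ‖ ≤ E) :
    ‖FF θ p q h K L n c τ0 τ1 ζ‖ ≤
      (K * (L * L) : ℕ) * (H * Pm * (4*q*L)^τ1 * Real.exp (26 * L * R + E)) := by
  unfold FF Ff
  have hR : 0 ≤ R := (norm_nonneg _).trans hζ
  have hq0 : (0:ℝ) < q := by exact_mod_cast (by omega : 0 < q)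
  refine (norm_sum_le _ _).trans ?_
  rw [← card_idx, ← nsmul_eq_mul]
  apply sum_le_card_nsmul
  intro i hi
  obtain ⟨h0, h1, h2⟩ := mem_idx.mp hi
  have hu := uu_bound hq hp hi
  have hl : (i.2.1:ℝ) ≤ L := by exact_mod_cast h1.le
  have hPm0 : 0 ≤ Pm := (NC_eval_nonneg (NC_Pk h i.1) (by positivity)).trans (hPm i.1 h0)
  rw [norm_mul, norm_mul, norm_mul, eval_iter_map, norm_pow, Complex.norm_intCast,
    Complex.norm_intCast]
  have g1 : ‖aeval ζ (derivative^[τ0] (Pk h i.1))‖ ≤ Pm := by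
    refine (NC_norm (NC_iter (NC_Pk _ _) _) ζ).trans ?_
    refine (NC_mono (NC_iter (NC_Pk _ _) _) (norm_nonneg _) hζ).trans ?_
    exact (NC_iter_eval (NC_Pk _ _) _ hR).trans (hPm _ h0)
  have g2 : ‖exp (2*Real.pi*I/q * (uu p q i:ℂ) * ζ +
      I * ((θ - 2*Real.pi*p/q : ℝ) : ℂ) * (i.2.1:ℂ) * sg n ζ)‖ ≤ Real.exp (26*L*R+E) := by
    refine (Complex.norm_exp_le_exp_norm _).trans ?_
    gcongr
    refine (norm_add_le _ _).trans (add_le_add ?_ ?_)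
    · rw [norm_mul, norm_mul, norm_div, norm_mul, norm_mul, Complex.norm_I, Complex.norm_real,
        Real.norm_of_nonneg Real.pi_pos.le, Complex.norm_intCast, Complex.norm_intCast,
        abs_of_pos hq0]
      have : ‖(2:ℂ)‖ = 2 := by simp
      rw [this]
      calc 2 * Real.pi * 1 / (q:ℝ) * |(uu p q i:ℝ)| * ‖ζ‖ ≤ 2 * Real.pi * 1 / (q:ℝ) * (4*q*L) * R := by
            gcongr
        _ = 8 * Real.pi * (L * R) := by field_simp; ring
        _ ≤ 26 * (L * R) := by
            have := Real.pi_lt_d2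
            gcongr; linarith
        _ = _ := by ring
    · refine le_trans ?_ hE
      rw [norm_mul, norm_mul, norm_mul, Complex.norm_I, Complex.norm_real, Complex.norm_natCast,
        Real.norm_eq_abs, one_mul]
      gcongr
  gcongr
  exact hH i hi
end FF
end BakerTwo

namespace BakerTwo
open Polynomial Finset Complex

lemma final_zero (θ : ℝ) (p q : ℤ) (h K L n : ℕ) (c : ℕ × ℕ × ℕ → ℤ) (hq : 1 ≤ q)
    (hz : ∀ i j : ℕ, exp (I * θ)^i = exp (I * θ)^j → i = j)
    (h0 : ∀ x < L * K, ∀ τ1 < L, FF θ p q h K L n c 0 τ1 (x:ℂ) = 0) :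
    ∀ i ∈ idx K L, c i = 0 := by
  have hq' : (q:ℂ) ≠ 0 := by exact_mod_cast (by omega : q ≠ 0)
  have key : ∀ τ1 < L, ∀ l < L, ∑ m ∈ range L, C ((uu p q (0, l, m) : ℂ)^τ1) *
      (∑ k ∈ range K, C (c (k, l, m) : ℂ) * (Pk h k).map (algebraMap ℝ ℂ)) = 0 := by
    intro τ1 hτ
    apply zero_est L K (fun i => exp (I*θ)^i) (fun i _ => pow_ne_zero _ (Complex.exp_ne_zero _))
      (fun i _ j _ hij => hz i j hij)
    · intro l _
      rw [← mem_degreeLT]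
      refine Submodule.sum_mem _ fun m _ => ?_
      rw [← smul_eq_C_mul]
      refine Submodule.smul_mem _ _ (Submodule.sum_mem _ fun k hk => ?_)
      rw [← smul_eq_C_mul]
      refine Submodule.smul_mem _ _ ?_
      rw [mem_degreeLT, degree_map, Pk_degree]
      exact_mod_cast mem_range.mp hk
    · intro x hx
      have := h0 x hx τ1 hτ
      rw [FF_nat _ _ _ _ _ _ _ _ (by omega), idx, sum_product, sum_comm' (t' := range L ×ˢ range L)
        (s' := fun _ => range K) (by intro x y; tauto), sum_product] at this
      rw [← this]
      apply sum_congr rfl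
      intro l _
      rw [eval_finsetSum, mul_sum]
      apply sum_congr rfl
      intro m _
      rw [eval_mul, eval_finsetSum, eval_C, mul_sum, mul_sum]
      apply sum_congr rfl
      intro k _
      rw [eval_mul, eval_C, eval_map_algebraMap]
      have e : aeval (x:ℂ) (Pk h k) = (((Pk h k).eval (x:ℝ) : ℝ) : ℂ) := by
        have : (x:ℂ) = algebraMap ℝ ℂ (x:ℝ) := by simp
        rw [this, aeval_algebraMap_apply]; simp
      rw [e]
      simp only [Function.iterate_zero, id, uu, ← pow_mul]
      ring
  intro ⟨k, l, m⟩ hi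
  obtain ⟨h1, h2, h3⟩ := mem_idx.mp hi
  simp only at h1 h2 h3
  have v := vander L (fun m => (uu p q (0, l, m) : ℂ)) (by
    intro i _ j _ hij
    simp only [uu] at hij
    push_cast at hij
    have : (q:ℂ) * i = q * j := by linear_combination hij
    have := mul_left_cancel₀ hq' this
    exact_mod_cast this) _ (fun τ hτ => key τ hτ l h2) m h3
  have := Pk_linInd h (range K) (fun k => (c (k,l,m):ℂ)) v k (mem_range.mpr h1)
  exact_mod_cast this
end BakerTwo

namespace BakerTwo
open Polynomial Finset Complex

lemma lcm_pow_le (S τ T : ℕ) (h : τ ≤ T) :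
    ((Nat.lcmUpto S : ℕ):ℝ)^τ ≤ Real.exp (6 * (S*T)) := by
  calc ((Nat.lcmUpto S : ℕ):ℝ)^τ ≤ (Real.exp (6*S))^τ := by
        gcongr; exact lcmUpto_le S
    _ = Real.exp (τ * (6*S)) := by rw [← Real.exp_nat_mul]
    _ ≤ _ := by
        have : (τ:ℝ) ≤ T := by exact_mod_cast h
        have hS : (0:ℝ) ≤ S := by positivity
        apply Real.exp_le_exp.mpr
        nlinarith

lemma U_pow_le (q : ℤ) (L S τ T : ℕ) (h : τ ≤ T) (hq : 1 ≤ q) (hqS : (q:ℝ) ≤ Real.exp S)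
    (hL : 4 * (L:ℝ) ≤ Real.exp S) : (4*(q:ℝ)*L)^τ ≤ Real.exp (2 * (S*T)) := by
  have hq0 : (0:ℝ) ≤ q := by exact_mod_cast (by omega : 0 ≤ q)
  calc (4*(q:ℝ)*L)^τ ≤ (Real.exp S * Real.exp S)^τ := by
        rw [show 4*(q:ℝ)*L = q * (4*L) by ring]
        gcongr
    _ = Real.exp (τ * (S+S)) := by rw [← Real.exp_add, ← Real.exp_nat_mul]
    _ ≤ _ := by
        have : (τ:ℝ) ≤ T := by exact_mod_cast h
        have hS : (0:ℝ) ≤ S := by positivity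
        apply Real.exp_le_exp.mpr
        nlinarith

lemma Pk_le_exp (S M k A : ℕ) (x G : ℝ) (hS : 0 < S) (hk : k < S * M) (hx0 : 0 ≤ x)
    (hx : x ≤ A * S) (hA : Real.exp 1 * (A+1) ≤ Real.exp G) :
    (Pk S k).eval x ≤ Real.exp (G * (S * M)) := by
  calc (Pk S k).eval x ≤ (Pk S k).eval ((A*S:ℕ):ℝ) := NC_mono (NC_Pk _ _) hx0 (by push_cast; exact hx)
    _ ≤ (((A*S+S).choose S : ℕ):ℝ)^M := Pk_eval_le S M k _ hS hk
    _ ≤ ((Real.exp 1 * (A+1))^S)^M := by gcongr; exact choose_le_exp S A hS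
    _ ≤ ((Real.exp G)^S)^M := by gcongr
    _ = _ := by
        rw [← Real.exp_nat_mul, ← Real.exp_nat_mul]; congr 1; ring

/-- one extrapolation step -/
lemma extrap (θ C : ℝ) (a b p q : ℤ) (S L M T g ρ r X Y A : ℕ) (c : ℕ × ℕ × ℕ → ℤ)
    (hb : 1 ≤ b) (hc : Real.cos θ = a / b) (hq : 1 ≤ q) (hp : |p| ≤ 2*q)
    (hS : 1 ≤ S) (hT : 1 ≤ T) (hTS : T ≤ S) (hM : g * M = T)
    (hC : ((b:ℝ)+1)^2 ≤ Real.exp C)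
    (hρ : Real.exp 100 ≤ ρ) (hr : 2 * r ≤ T) (hX : X ≤ Y) (hY : 1 ≤ Y)
    (hA : ((ρ:ℝ)+1)*Y + S ≤ A * S) (hAg : Real.exp 1 * (A+1) ≤ Real.exp g)
    (hqS : (q:ℝ) ≤ Real.exp S) (hL : 4 * (L:ℝ) ≤ Real.exp S)
    (hN : (((S*M) * (L*L) : ℕ) : ℝ) ≤ Real.exp S)
    (hcb : ∀ i ∈ idx (S*M) L, |(c i:ℝ)| ≤ Real.exp (13*(S*T)))
    (hε : |θ - 2*Real.pi*p/q| * L *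
      ((((ρ:ℝ)+1)*Y) + T * (Real.exp (7*(((ρ:ℝ)+1)*Y)) + 1)^T) ≤ 1)
    (hnum : 24 * ((S:ℝ)*T) + (26*(ρ+1) + C) * L * Y < 100 * (r*X))
    (IH : ∀ x < X, ∀ τ0 < 2*r, ∀ τ1 < 2*r, FF θ p q S (S*M) L T c τ0 τ1 (x:ℂ) = 0) :
    ∀ x < Y, ∀ τ0 < r, ∀ τ1 < r, FF θ p q S (S*M) L T c τ0 τ1 (x:ℂ) = 0 := by
  intro x hx τ0 h0 τ1 h1
  have hq0 : (0:ℝ) ≤ q := by exact_mod_cast (by omega : 0 ≤ q)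
  have hρ0 : (0:ℝ) < ρ := (Real.exp_pos _).trans_le hρ
  have hY0 : (0:ℝ) < Y := by exact_mod_cast hY
  have hST : (1:ℝ) ≤ S * T := by exact_mod_cast Nat.mul_pos hS hT
  have hS1 : (S:ℝ) ≤ S * T := by
    have : (1:ℝ) ≤ T := by exact_mod_cast hT
    have : (0:ℝ) ≤ S := by positivity
    nlinarith
  have hC0 : 0 ≤ C := by
    by_contra hneg
    have h1 : Real.exp C < 1 := Real.exp_lt_one_iff.mpr (by linarith)
    have h2 : (1:ℝ) ≤ b := by exact_mod_cast hb
    nlinarith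
  set R : ℝ := ((ρ:ℝ)+1)*Y with hR
  have hR0 : 0 ≤ R := by positivity
  -- upper bound
  have hsch := schwarz (r := r) (X := X) (x0 := x) (Y := Y) (R := R) (ρ := ρ)
    (F := FF θ p q S (S*M) L T c τ0 τ1)
    (V := Real.exp (S*T) * (Real.exp (13*(S*T)) * Real.exp (S*T) * Real.exp (2*(S*T)) *
      Real.exp (26*L*R + 1)))
    (Ff_diff _ _ _ _ _ _ _ _ _ _)
    (fun j hj => Ff_order _ _ _ _ _ _ _ _ (2*r) j (fun a ha b hb => IH j hj a ha b hb) r (by omega)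
      τ0 τ1 (by omega) (by omega))
    (by exact_mod_cast hx.le) (by exact_mod_cast hX) hρ0 hY0 hR (by
      intro ζ hζ
      refine (FF_bound θ p q S (S*M) L T c hq hp τ0 τ1 ζ R (Real.exp (13*(S*T)))
        (Real.exp (S*T)) 1 hζ.le (Real.exp_pos _).le hcb ?_ ?_).trans ?_
      · intro k hk
        have := Pk_le_exp S M k A (R + τ0) g hS hk (by positivity) (by
          have : (τ0:ℝ) ≤ S := by exact_mod_cast (by omega : τ0 ≤ S)
          linarith) hAg
        refine this.trans (le_of_eq ?_)
        rw [← hM]; push_cast; congr 1; ring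
      · refine le_trans ?_ hε
        gcongr
        exact sg_bound T ζ R hζ.le
      · gcongr
        · exact hN.trans (Real.exp_le_exp.mpr hS1)
        · exact U_pow_le q L S τ1 T (by omega) hq hqS hL)
  -- arithmetic
  obtain ⟨eX, eY, he, -⟩ := FF_int θ p q S (S*M) L T hb hc hq hp hS
  have hval := he c τ0 τ1 x
  have hbpow : (b:ℝ)^(L*x) ≤ Real.exp (C * L * Y) := by
    have h2 : (1:ℝ) ≤ b := by exact_mod_cast hb
    calc (b:ℝ)^(L*x) ≤ (((b:ℝ)+1)^2)^(L*x) := by gcongr; nlinarith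
      _ ≤ (Real.exp C)^(L*x) := by gcongr
      _ = Real.exp (C * L * x) := by rw [← Real.exp_nat_mul]; push_cast; congr 1; ring
      _ ≤ _ := by
          have : (x:ℝ) ≤ Y := by exact_mod_cast hx.le
          gcongr
  have hρpow : ((ρ:ℝ)⁻¹)^(r*X) ≤ Real.exp (-(100 * (r*X))) := by
    calc ((ρ:ℝ)⁻¹)^(r*X) ≤ ((Real.exp 100)⁻¹)^(r*X) := by
          gcongr
      _ = _ := by rw [← Real.exp_neg, ← Real.exp_nat_mul]; push_cast; congr 1; ring
  have hlt : ‖((Nat.lcmUpto S : ℕ) : ℂ)^τ0 * (b:ℂ)^(L*x) *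
      FF θ p q S (S*M) L T c τ0 τ1 (x:ℂ)‖ < 1 := by
    have hb0 : (0:ℝ) ≤ b := by exact_mod_cast (by omega : 0 ≤ b)
    rw [norm_mul, norm_mul, norm_pow, norm_pow, Complex.norm_natCast, Complex.norm_intCast,
      abs_of_nonneg hb0]
    calc _ ≤ Real.exp (6*(S*T)) * Real.exp (C*L*Y) * ((Real.exp (S*T) * (Real.exp (13*(S*T)) *
            Real.exp (S*T) * Real.exp (2*(S*T)) *
            Real.exp (26*L*R + 1))) * Real.exp (-(100 * (r*X)))) := by
          gcongr
          · exact lcm_pow_le S τ0 T (by omega)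
          · exact hsch.trans (by gcongr)
      _ = Real.exp (23*(S*T) + 1 + (26*L*R + C*L*Y) - 100*(r*X)) := by
          simp only [← Real.exp_add]; congr 1; ring
      _ < 1 := by
          apply Real.exp_lt_one_iff.mpr
          have : 26*L*R + C*L*Y = (26*(ρ+1) + C) * L * Y := by rw [hR]; ring
          rw [this]; linarith
  rw [hval] at hlt
  have hz := small_zero hb hc _ _ hlt
  rw [← hval] at hz
  rcases mul_eq_zero.mp hz with h | h
  · exfalso
    rcases mul_eq_zero.mp h with h | h
    · have := eq_zero_of_pow_eq_zero h
      have h2 : Nat.lcmUpto S = 0 := by exact_mod_cast this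
      have := Nat.lcmUpto_pos S
      omega
    · have := eq_zero_of_pow_eq_zero h
      have : b = 0 := by exact_mod_cast this
      omega
  · exact h
end BakerTwo

namespace BakerTwo
open Polynomial Finset Complex

lemma siegel_FF (θ C : ℝ) (a b p q : ℤ) (S L M T n : ℕ)
    (hb : 1 ≤ b) (hc : Real.cos θ = a / b) (hq : 1 ≤ q) (hp : |p| ≤ 2*q)
    (hS : 1 ≤ S) (hT : 1 ≤ T) (hTS : T ≤ S) (hM : M ≤ T) (hCL : C * L ≤ T)
    (hC0 : 0 ≤ C) (hC : ((b:ℝ)+1)^2 ≤ Real.exp C)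
    (hqS : (q:ℝ) ≤ Real.exp S) (hL : 4 * (L:ℝ) ≤ Real.exp S)
    (hN : (((S*M) * (L*L) : ℕ) : ℝ) ≤ Real.exp S)
    (hcard : M * (L * L) = 4 * (T * T)) :
    ∃ c : ℕ × ℕ × ℕ → ℤ, (∃ i ∈ idx (S*M) L, c i ≠ 0) ∧
      (∀ i ∈ idx (S*M) L, |(c i:ℝ)| ≤ Real.exp (13*(S*T))) ∧
      ∀ x < S, ∀ τ0 < T, ∀ τ1 < T, FF θ p q S (S*M) L n c τ0 τ1 (x:ℂ) = 0 := by
  obtain ⟨eX, eY, he, hbd⟩ := FF_int θ p q S (S*M) L n hb hc hq hp hS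
  have hST0 : (0:ℝ) ≤ S * T := by positivity
  have hS1 : (S:ℝ) ≤ S * T := by
    have : (1:ℝ) ≤ T := by exact_mod_cast hT
    have : (0:ℝ) ≤ S := by positivity
    nlinarith
  have hq0 : (0:ℝ) ≤ q := by exact_mod_cast (by omega : 0 ≤ q)
  have hB : ∀ x < S, ∀ τ0 < T, ∀ τ1 < T, ∀ i ∈ idx (S*M) L,
      ((Nat.lcmUpto S : ℕ):ℝ)^τ0 * (Pk S i.1).eval ((x:ℝ)+τ0) *
          (4*q*L)^τ1 * ((b:ℝ)+1)^(2*(L*x)) ≤ Real.exp (12*(S*T)) := by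
    intro x hx τ0 h0 τ1 h1 i hi
    obtain ⟨hi1, -, -⟩ := mem_idx.mp hi
    have hxS : (x:ℝ) ≤ S := by exact_mod_cast hx.le
    have hτS : (τ0:ℝ) ≤ S := by exact_mod_cast (by omega : τ0 ≤ S)
    have hb1 : (1:ℝ) ≤ b := by exact_mod_cast hb
    have e1 := lcm_pow_le S τ0 T h0.le
    have e2 := U_pow_le q L S τ1 T h1.le hq hqS hL
    have e3 : (Pk S i.1).eval ((x:ℝ)+τ0) ≤ Real.exp (3 * (S*T)) := by
      refine (Pk_le_exp S M i.1 2 _ 3 hS hi1 (by positivity) (by push_cast; linarith) ?_).trans ?_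
      · have h2 : (2:ℝ) ≤ Real.exp 1 := by have := Real.add_one_le_exp 1; linarith
        have h3 : Real.exp 3 = Real.exp 1 * (Real.exp 1 * Real.exp 1) := by
          rw [← Real.exp_add, ← Real.exp_add]; norm_num
        rw [h3]; push_cast
        gcongr
        nlinarith
      · have : (M:ℝ) ≤ T := by exact_mod_cast hM
        gcongr
    have e4 : ((b:ℝ)+1)^(2*(L*x)) ≤ Real.exp (S*T) := by
      calc ((b:ℝ)+1)^(2*(L*x)) = (((b:ℝ)+1)^2)^(L*x) := by rw [pow_mul]
        _ ≤ (Real.exp C)^(L*x) := by gcongr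
        _ = Real.exp (C * L * x) := by rw [← Real.exp_nat_mul]; push_cast; congr 1; ring
        _ ≤ _ := by
            apply Real.exp_le_exp.mpr
            have : (0:ℝ) ≤ x := by positivity
            calc C * L * x ≤ T * S := by gcongr
              _ = _ := by ring
    have e5 : 0 ≤ (Pk S i.1).eval ((x:ℝ)+τ0) := NC_eval_nonneg (NC_Pk _ _) (by positivity)
    calc _ ≤ Real.exp (6*(S*T)) * Real.exp (3*(S*T)) * Real.exp (2*(S*T)) * Real.exp (S*T) := by
          gcongr
      _ = _ := by simp only [← Real.exp_add]; congr 1; ring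
  obtain ⟨c, hc0, hceq, hcb⟩ := siegel (idx (S*M) L)
    (range S ×ˢ range T ×ˢ range T ×ˢ (Finset.univ : Finset Bool))
    ⟨(0, 0, 0, true), by simp; omega⟩
    (by rw [card_idx]; simp; rw [mul_assoc, hcard]; ring)
    (fun k i => if k.2.2.2 then eX k.2.1 k.2.2.1 k.1 i else eY k.2.1 k.2.2.1 k.1 i)
    (Real.exp (12*(S*T))) (Real.one_le_exp (by positivity)) (by
      rintro ⟨x, τ0, τ1, b'⟩ hk i hi
      simp only [mem_product, mem_range, mem_univ, and_true] at hk
      have := hbd τ0 τ1 x i hi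
      have h2 := hB x hk.1 τ0 hk.2.1 τ1 hk.2.2 i hi
      cases b'
      · simpa using this.2.trans h2
      · simpa using this.1.trans h2)
  refine ⟨c, hc0, ?_, ?_⟩
  · intro i hi
    refine (hcb i hi).trans ?_
    rw [card_idx]
    calc _ ≤ Real.exp (S*T) * Real.exp (12*(S*T)) := by
          gcongr; exact hN.trans (Real.exp_le_exp.mpr hS1)
      _ = _ := by rw [← Real.exp_add]; congr 1; ring
  · intro x hx τ0 h0 τ1 h1
    have e1 := hceq (x, τ0, τ1, true) (by simp [hx, h0, h1])
    have e2 := hceq (x, τ0, τ1, false) (by simp [hx, h0, h1])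
    simp only [if_true] at e1
    simp only [Bool.false_eq_true, if_false] at e2
    have hz := he c τ0 τ1 x
    rw [e1, e2] at hz
    simp only [Int.cast_zero, zero_mul, add_zero] at hz
    rcases mul_eq_zero.mp hz with h | h
    · exfalso
      rcases mul_eq_zero.mp h with h | h
      · have := eq_zero_of_pow_eq_zero h
        have h2 : Nat.lcmUpto S = 0 := by exact_mod_cast this
        have := Nat.lcmUpto_pos S
        omega
      · have := eq_zero_of_pow_eq_zero h
        have : b = 0 := by exact_mod_cast this
        omega
    · exact h

lemma sg_const (L T R0 S : ℕ) (hS : 1 ≤ S) (R : ℝ) (hR0 : 0 ≤ R) (hR : R ≤ R0 * S) :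
    (L:ℝ) * (R + T * (Real.exp (7*R) + 1)^T) ≤
      Real.exp (((L + 1 + R0 + T + (7*R0+1)*T : ℕ) : ℝ) * S) := by
  have hS' : (1:ℝ) ≤ S := by exact_mod_cast hS
  have h1 : (L:ℝ) ≤ Real.exp L := by have := Real.add_one_le_exp (L:ℝ); linarith
  have h2 : R ≤ Real.exp R := by have := Real.add_one_le_exp R; linarith
  have h3 : (T:ℝ) ≤ Real.exp T := by have := Real.add_one_le_exp (T:ℝ); linarith
  have h4 : (2:ℝ) ≤ Real.exp 1 := by have := Real.add_one_le_exp 1; linarith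
  have h5 : Real.exp (7*R) + 1 ≤ Real.exp (7*R+1) := by
    rw [Real.exp_add]
    have := Real.one_le_exp (by positivity : 0 ≤ 7*R)
    nlinarith
  have h6 : (Real.exp (7*R) + 1)^T ≤ Real.exp ((7*R+1)*T) := by
    calc (Real.exp (7*R) + 1)^T ≤ (Real.exp (7*R+1))^T := by gcongr
      _ = _ := by rw [← Real.exp_nat_mul]; congr 1; ring
  have h7 : R + T * (Real.exp (7*R) + 1)^T ≤ Real.exp (1 + R + T + (7*R+1)*T) := by
    have a1 : R ≤ Real.exp (R + T + (7*R+1)*T) := h2.trans (Real.exp_le_exp.mpr (by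
      have : 0 ≤ (7*R+1)*T := by positivity
      have : (0:ℝ) ≤ T := by positivity
      linarith))
    have a2 : T * (Real.exp (7*R) + 1)^T ≤ Real.exp (R + T + (7*R+1)*T) := by
      calc T * (Real.exp (7*R) + 1)^T ≤ Real.exp T * Real.exp ((7*R+1)*T) := by gcongr
        _ = Real.exp (T + (7*R+1)*T) := by rw [← Real.exp_add]
        _ ≤ _ := Real.exp_le_exp.mpr (by linarith)
    have a3 : Real.exp (1 + R + T + (7*R+1)*T) = Real.exp 1 * Real.exp (R + T + (7*R+1)*T) := by
      rw [← Real.exp_add]; congr 1; ring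
    rw [a3]
    have := Real.exp_pos (R + T + (7*R+1)*T)
    nlinarith
  calc _ ≤ Real.exp L * Real.exp (1 + R + T + (7*R+1)*T) := by gcongr
    _ = Real.exp (L + (1 + R + T + (7*R+1)*T)) := by rw [← Real.exp_add]
    _ ≤ _ := by
        apply Real.exp_le_exp.mpr
        push_cast
        have b1 : (L:ℝ) ≤ L * S := le_mul_of_one_le_right (by positivity) hS'
        have b2 : (T:ℝ) ≤ T * S := le_mul_of_one_le_right (by positivity) hS'
        have b3 : R * T ≤ R0 * S * T := by gcongr
        nlinarith

lemma core (θ : ℝ) (a b : ℤ) (hb : 1 ≤ b) (hc : Real.cos θ = a / b)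
    (hz : ∀ i j : ℕ, exp (I * θ)^i = exp (I * θ)^j → i = j) :
    ∃ W S0 : ℕ, ∀ S ≥ S0, ∀ p q : ℤ, 1 ≤ q → |p| ≤ 2*q → (q:ℝ) ≤ Real.exp S →
      |θ - 2*Real.pi*p/q| ≤ Real.exp (-(W*S)) → False := by
  have hb1 : (1:ℝ) ≤ b := by exact_mod_cast hb
  obtain ⟨ρ, hρ⟩ := exists_nat_ge (Real.exp 100)
  set C := Real.log (((b:ℝ)+1)^2) with hCdef
  have hC : ((b:ℝ)+1)^2 ≤ Real.exp C := by rw [hCdef, Real.exp_log (by positivity)]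
  have hC0 : 0 ≤ C := Real.log_nonneg (by nlinarith)
  obtain ⟨g', hg'⟩ := exists_nat_ge (512*(52*((ρ:ℝ)+1)+2*C) + (Nat.factorial 9:ℕ)*(Real.exp 1*(ρ+3)))
  have hpos1 : 0 ≤ 512*(52*((ρ:ℝ)+1)+2*C) := by positivity
  have hpos2 : 0 ≤ (Nat.factorial 9:ℕ)*(Real.exp 1*((ρ:ℝ)+3)) := by positivity
  obtain ⟨g, hg⟩ : ∃ g : ℕ, g = 256 * g' := ⟨_, rfl⟩
  have hgg : (g':ℝ) ≤ g := by rw [hg]; push_cast; have : (0:ℝ) ≤ g' := by positivity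
                              linarith
  have hg1 : 512*(52*((ρ:ℝ)+1)+2*C) ≤ g := by linarith
  have hg2 : (Nat.factorial 9:ℕ)*(Real.exp 1*((ρ:ℝ)+3)) ≤ g := by linarith
  have hρ0 : (0:ℝ) ≤ ρ := by positivity
  have hg512 : 512 ≤ g := by
    have : (512:ℝ) ≤ g := by linarith
    exact_mod_cast this
  have hg0 : 1 ≤ g := by omega
  have hgR : (1:ℝ) ≤ g := by exact_mod_cast hg0
  obtain ⟨t, ht⟩ : ∃ t : ℕ, g^5 = 256 * t := ⟨256^4*g'^5, by rw [hg]; ring⟩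
  set T := g^5 with hT
  set L := 2*g^3 with hL
  set M := g^4 with hM
  set A := (ρ+2)*g^8 with hA
  have hT1 : 1 ≤ T := Nat.one_le_pow _ _ hg0
  have hg8 : 1 ≤ g^8 := Nat.one_le_pow _ _ hg0
  have hAg : Real.exp 1 * ((A:ℝ)+1) ≤ Real.exp g := by
    have h1 := Real.pow_div_factorial_le_exp (g:ℝ) (by positivity) 9
    refine le_trans ?_ h1
    rw [le_div_iff₀ (by positivity)]
    have h2 : (A:ℝ) + 1 ≤ (ρ+3)*g^8 := by
      rw [hA]; push_cast
      have : (1:ℝ) ≤ (g:ℝ)^8 := by exact_mod_cast hg8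
      linarith
    calc Real.exp 1 * ((A:ℝ)+1) * (Nat.factorial 9:ℕ)
        ≤ Real.exp 1 * ((ρ+3)*g^8) * (Nat.factorial 9:ℕ) := by gcongr
      _ = ((Nat.factorial 9:ℕ)*(Real.exp 1*((ρ:ℝ)+3))) * g^8 := by ring
      _ ≤ g * g^8 := by gcongr
      _ = _ := by ring
  refine ⟨L + 1 + (ρ+1)*g^8 + T + (7*((ρ+1)*g^8)+1)*T, T + 4*L + 2*(M*(L*L)) + 1, ?_⟩
  intro S hS p q hq hp hqS hε
  have hS1 : 1 ≤ S := by omega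
  have hTS : T ≤ S := by omega
  have hSexp : (S:ℝ) ≤ Real.exp S := by have := Real.add_one_le_exp (S:ℝ); linarith
  have hLe : 4*(L:ℝ) ≤ Real.exp S := by
    refine le_trans ?_ hSexp
    exact_mod_cast (by omega : 4*L ≤ S)
  have hN : (((S*M) * (L*L) : ℕ) : ℝ) ≤ Real.exp S := by
    have h1 := Real.pow_div_factorial_le_exp (S:ℝ) (by positivity) 2
    refine le_trans ?_ h1
    rw [le_div_iff₀ (by positivity)]
    have h2 : 2*(M*(L*L)) ≤ S := by omega
    have h3 : (S*M)*(L*L)*Nat.factorial 2 ≤ S^2 := by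
      calc (S*M)*(L*L)*Nat.factorial 2 = S*(2*(M*(L*L))) := by simp [Nat.factorial]; ring
        _ ≤ S * S := by gcongr
        _ = _ := by ring
    exact_mod_cast h3
  have hMT : M ≤ T := by rw [hM, hT]; exact Nat.pow_le_pow_right hg0 (by omega)
  have hCL : C * L ≤ T := by
    rw [hL, hT]; push_cast
    have h1 : 2*C ≤ g := by linarith
    calc C * (2*(g:ℝ)^3) = (2*C)*(g:ℝ)^3 := by ring
      _ ≤ (g:ℝ) * (g:ℝ)^3 := by gcongr
      _ = (g:ℝ)^4 * 1 := by ring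
      _ ≤ (g:ℝ)^4 * g := by gcongr
      _ = _ := by ring
  obtain ⟨c, hc0, hcb, hv⟩ := siegel_FF θ C a b p q S L M T T hb hc hq hp hS1 hT1 hTS hMT hCL hC0 hC
    hqS hLe hN (by rw [hM, hL, hT]; ring)
  have main : ∀ i ≤ 8, ∀ x < g^i*S, ∀ τ0 < 2^(8-i)*t, ∀ τ1 < 2^(8-i)*t,
      FF θ p q S (S*M) L T c τ0 τ1 (x:ℂ) = 0 := by
    intro i
    induction i with
    | zero =>
      intro _ x hx τ0 h0 τ1 h1
      exact hv x (by simpa using hx) τ0 (by omega) τ1 (by omega)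
    | succ i ih =>
      intro hi
      have IH := ih (by omega)
      have hpw : 2^(8-i)*t = 2*(2^(8-(i+1))*t) := by
        rw [show 8-i = (8-(i+1))+1 by omega, pow_succ]; ring
      rw [hpw] at IH
      have hr2 : 2^(i+1) * (2^(8-(i+1))*t) = T := by
        rw [ht, ← mul_assoc, ← pow_add, show i+1+(8-(i+1)) = 8 by omega]; norm_num
      have hYle : g^(i+1)*S ≤ g^8*S := by
        gcongr
      have hYleR : ((g^(i+1)*S : ℕ):ℝ) ≤ (g:ℝ)^8*S := by exact_mod_cast hYle
      refine extrap θ C a b p q S L M T g ρ (2^(8-(i+1))*t) (g^i*S) (g^(i+1)*S) A c hb hc hq hp hS1 hT1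
        hTS (by rw [hM, hT]; ring) hC hρ ?_ ?_ ?_ ?_ hAg hqS hLe hN hcb ?_ ?_ IH
      · rw [← hr2, pow_succ]
        have : 1 ≤ 2^i := Nat.one_le_two_pow
        nlinarith [Nat.zero_le (2^(8-(i+1))*t)]
      · gcongr; omega
      · exact Nat.mul_pos (pow_pos hg0 _) hS1
      · have : (S:ℝ) ≤ g^8*S := by exact_mod_cast Nat.le_mul_of_pos_left S hg8
        rw [hA]
        calc ((ρ:ℝ)+1)*((g^(i+1)*S:ℕ):ℝ) + S ≤ ((ρ:ℝ)+1)*((g:ℝ)^8*S) + g^8*S := by gcongr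
          _ = _ := by push_cast; ring
      · have h1 := sg_const L T ((ρ+1)*g^8) S hS1 (((ρ:ℝ)+1)*((g^(i+1)*S:ℕ):ℝ)) (by positivity) (by
          push_cast at hYleR ⊢
          calc ((ρ:ℝ)+1)*((g:ℝ)^(i+1)*S) ≤ ((ρ:ℝ)+1)*((g:ℝ)^8*S) := by gcongr
            _ = _ := by ring)
        rw [mul_assoc]
        calc _ ≤ Real.exp (-(((L + 1 + (ρ+1)*g^8 + T + (7*((ρ+1)*g^8)+1)*T : ℕ):ℝ)*S)) *
              Real.exp (((L + 1 + (ρ+1)*g^8 + T + (7*((ρ+1)*g^8)+1)*T : ℕ):ℝ)*S) := by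
              gcongr
          _ = 1 := by rw [← Real.exp_add, neg_add_cancel, Real.exp_zero]
      · have hSp : (0:ℝ) < S := by exact_mod_cast hS1
        set r : ℝ := ((2^(8-(i+1))*t : ℕ):ℝ) with hrdef
        have hrT : (2:ℝ)^(i+1) * r = (g:ℝ)^5 := by
          rw [hrdef]; exact_mod_cast hr2
        have hG : (2:ℝ)^i ≤ (g:ℝ)^i := by
          gcongr; linarith [(by exact_mod_cast hg512 : (512:ℝ) ≤ g)]
        have hE : (2:ℝ)^i ≤ 128 := by
          calc (2:ℝ)^i ≤ 2^7 := pow_le_pow_right₀ (by norm_num) (by omega)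
            _ = 128 := by norm_num
        have hEp : (0:ℝ) < 2^i := by positivity
        have hGp : (0:ℝ) < (g:ℝ)^i := by positivity
        rw [hL, hT]
        push_cast
        have hB : 52*((ρ:ℝ)+1)+2*C ≤ g/512 := by linarith
        set E : ℝ := (2:ℝ)^i
        set G : ℝ := (g:ℝ)^i
        have e1 : E * (24*((S:ℝ)*g^5)) ≤ 24*(G*(S*g^5)) := by
          calc E * (24*((S:ℝ)*g^5)) ≤ G * (24*((S:ℝ)*g^5)) := by gcongr
            _ = _ := by ring
        have e2 : E * ((26*((ρ:ℝ)+1)+C)*(2*(g:ℝ)^3)*((g:ℝ)^(i+1)*S)) ≤ G*(S*g^5) := by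
          calc E * ((26*((ρ:ℝ)+1)+C)*(2*(g:ℝ)^3)*((g:ℝ)^(i+1)*S))
              = E * ((52*((ρ:ℝ)+1)+2*C)*(G*(S*g^4))) := by rw [pow_succ]; ring
            _ ≤ 128 * ((g/512)*(G*(S*g^4))) := by gcongr
            _ = (G*(S*g^5)) * (1/4) := by ring
            _ ≤ (G*(S*g^5)) * 1 := by gcongr; norm_num
            _ = _ := by ring
        have e3 : E * (100*(r*(G*S))) = 50*(G*(S*g^5)) := by
          rw [← hrT, pow_succ]; ring
        have e4 : 0 < G*(S*(g:ℝ)^5) := by positivity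
        refine lt_of_mul_lt_mul_left ?_ hEp.le
        rw [mul_add]
        calc _ ≤ 24*(G*(S*(g:ℝ)^5)) + G*(S*g^5) := add_le_add e1 e2
          _ < 50*(G*(S*g^5)) := by linarith
          _ = _ := e3.symm
  obtain ⟨i, hi, hne⟩ := hc0
  refine hne (final_zero θ p q S (S*M) L T c hq hz ?_ i hi)
  intro x hx τ1 hτ
  have hLt : L ≤ t := by
    have h1 : 512 * g^3 ≤ g^5 := by
      calc 512*g^3 ≤ g*g^3 := by gcongr
        _ = g^4*1 := by ring
        _ ≤ g^4*g := by gcongr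
        _ = _ := by ring
    rw [hT] at ht
    omega
  refine main 8 le_rfl x (lt_of_lt_of_le hx ?_) 0 ?_ τ1 ?_
  · rw [hL, hM]
    calc 2*g^3*(S*g^4) = 2*(g^7*S) := by ring
      _ ≤ g*(g^7*S) := by gcongr; omega
      _ = _ := by ring
  · simp; omega
  · simp; omega
end BakerTwo

namespace BakerTwo
open Polynomial Finset Complex

lemma not_rat_pi {θ : ℝ} (hcosQ : ∃ q : ℚ, Real.cos θ = (q : ℝ))
    (hcosHalf : ∀ k : ℤ, Real.cos θ ≠ (k : ℝ) / 2) (r : ℚ) : θ ≠ r * Real.pi := by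
  intro h
  rcases niven ⟨r, h⟩ hcosQ with h | h | h | h | h
  · exact hcosHalf (-2) (by rw [h]; norm_num)
  · exact hcosHalf (-1) (by rw [h]; norm_num)
  · exact hcosHalf 0 (by rw [h]; norm_num)
  · exact hcosHalf 1 (by rw [h]; norm_num)
  · exact hcosHalf 2 (by rw [h]; norm_num)

lemma z_inj {θ : ℝ} (hr : ∀ r : ℚ, θ ≠ r * Real.pi) (i j : ℕ)
    (h : exp (I * θ)^i = exp (I * θ)^j) : i = j := by
  rw [← Complex.exp_nat_mul, ← Complex.exp_nat_mul, Complex.exp_eq_exp_iff_exists_int] at h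
  obtain ⟨n, hn⟩ := h
  by_contra hij
  have h1 : ((i:ℂ) - j) * θ = n * (2 * Real.pi) := by
    have : I * (((i:ℂ) - j) * θ) = I * (n * (2 * Real.pi)) := by linear_combination hn
    exact mul_left_cancel₀ Complex.I_ne_zero this
  have h2 : ((i:ℝ) - j) * θ = n * (2 * Real.pi) := by exact_mod_cast h1
  have h3 : (i:ℝ) - j ≠ 0 := by
    rw [sub_ne_zero]; exact_mod_cast hij
  apply hr (2*n/((i:ℚ)-j))
  push_cast
  field_simp
  linarith

lemma part_one (θ : ℝ) (hθ : θ ∈ Set.Ico 0 (2 * Real.pi))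
    (hcosQ : ∃ q : ℚ, Real.cos θ = (q : ℝ)) (hr : ∀ r : ℚ, θ ≠ r * Real.pi) :
    ∃ c > (0:ℝ), ∃ m : ℕ, ∀ p q : ℤ, 1 ≤ q → |θ - 2 * Real.pi * p / q| > c / (q : ℝ) ^ m := by
  obtain ⟨Q, hQ⟩ := hcosQ
  obtain ⟨W, S0, hcore⟩ := core θ Q.num Q.den (by exact_mod_cast Q.pos) (by
    rw [hQ]; exact_mod_cast (Rat.num_div_den Q).symm) (z_inj hr)
  obtain ⟨q0, hq0⟩ : ∃ q0 : ℤ, q0 = 2^S0 + 2 := ⟨_, rfl⟩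
  have hne : ∀ p q : ℤ, 1 ≤ q → 0 < |θ - 2 * Real.pi * p / q| := by
    intro p q _
    rw [abs_pos, sub_ne_zero]
    intro h
    apply hr (2*p/q)
    rw [h]; push_cast; ring
  obtain ⟨δ, hδ, hδ'⟩ : ∃ δ > (0:ℝ), ∀ pq ∈ (Finset.Icc (-2*q0) (2*q0)) ×ˢ (Finset.Icc 1 q0),
      δ ≤ |θ - 2 * Real.pi * ((pq.1:ℤ):ℝ) / ((pq.2:ℤ):ℝ)| := by
    have hnonempty : ((Finset.Icc (-2*q0) (2*q0)) ×ˢ (Finset.Icc 1 q0)).Nonempty := by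
      have : (0:ℤ) < 2^S0 := by positivity
      exact ⟨(0, 1), by simp; omega⟩
    obtain ⟨x, hx, hmin⟩ := exists_min_image _
      (fun pq : ℤ × ℤ => |θ - 2 * Real.pi * ((pq.1:ℤ):ℝ) / ((pq.2:ℤ):ℝ)|) hnonempty
    refine ⟨_, hne x.1 x.2 ?_, fun pq hpq => hmin pq hpq⟩
    simp at hx; omega
  refine ⟨min δ 1 / 2, by positivity, 4*W, ?_⟩
  intro p q hq
  have hqR : (1:ℝ) ≤ q := by exact_mod_cast hq
  have hqm : (1:ℝ) ≤ (q:ℝ)^(4*W) := one_le_pow₀ hqR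
  have hc1 : min δ 1 / 2 / (q:ℝ)^(4*W) ≤ min δ 1 / 2 := div_le_self (by positivity) hqm
  have hc2 : min δ 1 ≤ δ := min_le_left _ _
  have hc3 : min δ 1 ≤ 1 := min_le_right _ _
  have hc0 : 0 < min δ 1 := by positivity
  by_cases hp : |p| ≤ 2*q
  · by_cases hqq : q ≤ q0
    · have := hδ' (p, q) (by
        simp only [mem_product, Finset.mem_Icc]
        have := abs_le.mp hp
        omega)
      simp only at this
      linarith
    · push Not at hqq
      obtain ⟨qn, rfl⟩ : ∃ n : ℕ, q = n := ⟨q.toNat, by omega⟩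
      set S := Nat.clog 2 qn with hS
      have h2S0 : (2:ℤ)^S0 < qn := by omega
      have h2S0' : 2^S0 < qn := by exact_mod_cast h2S0
      have hSS : S0 ≤ S := ((Nat.lt_clog_iff_pow_lt (by norm_num)).mpr h2S0').le
      have hqn2 : 1 < qn := by
        have : 1 ≤ 2^S0 := Nat.one_le_two_pow
        omega
      have h1 : qn ≤ 2^S := Nat.le_pow_clog (by norm_num) qn
      have h2 : 2^S ≤ qn^2 := by
        have h3 := Nat.pow_pred_clog_lt_self (b := 2) (by norm_num) hqn2
        have h4 : 0 < S := Nat.clog_pos (by norm_num) hqn2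
        rw [← hS] at h3
        have h5 : 2^S = 2 * 2^S.pred := by
          conv_lhs => rw [← Nat.succ_pred_eq_of_pos h4, pow_succ]
          ring
        rw [h5]; nlinarith
      have he2 : (2:ℝ) ≤ Real.exp 1 := by have := Real.add_one_le_exp 1; linarith
      have he4 : Real.exp 1 ≤ 4 := by have := Real.exp_one_lt_d9; linarith
      have hexpS : Real.exp S = (Real.exp 1)^S := by rw [← Real.exp_nat_mul]; simp
      have hqe : ((qn:ℤ):ℝ) ≤ Real.exp S := by
        rw [hexpS]
        calc ((qn:ℤ):ℝ) ≤ (2:ℝ)^S := by exact_mod_cast h1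
          _ ≤ _ := by gcongr
      have hle : Real.exp (W*S) ≤ ((qn:ℤ):ℝ)^(4*W) := by
        rw [Real.exp_nat_mul, hexpS]
        have h6 : (Real.exp 1)^S ≤ (qn:ℝ)^4 := by
          calc (Real.exp 1)^S ≤ 4^S := by gcongr
            _ = ((2:ℝ)^S)^2 := by rw [← pow_mul, mul_comm, pow_mul]; norm_num
            _ ≤ ((qn:ℝ)^2)^2 := by gcongr; exact_mod_cast h2
            _ = _ := by ring
        calc _ ≤ ((qn:ℝ)^4)^W := by gcongr
          _ = _ := by rw [← pow_mul]; simp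
      by_contra hcon
      push Not at hcon
      refine hcore S hSS p qn hq hp hqe (hcon.trans ?_)
      rw [Real.exp_neg, div_le_iff₀ (by positivity)]
      have h7 : 1 ≤ (Real.exp (W*S))⁻¹ * ((qn:ℤ):ℝ)^(4*W) := by
        rw [inv_mul_eq_div, le_div_iff₀ (Real.exp_pos _), one_mul]; exact hle
      linarith
  · push Not at hp
    have hpR : 2*(q:ℝ) < |(p:ℝ)| := by exact_mod_cast hp
    have hq00 : (0:ℝ) < q := by linarith
    have h1 : |2*Real.pi*p/q| = 2*Real.pi*(|(p:ℝ)|/q) := by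
      rw [abs_div, abs_mul, abs_of_pos hq00, abs_of_pos (by positivity : 0 < 2*Real.pi)]; ring
    have h2 : 2 < |(p:ℝ)|/q := by rw [lt_div_iff₀ hq00]; exact hpR
    have h3 := abs_sub_abs_le_abs_sub (2*Real.pi*p/q) θ
    rw [abs_sub_comm _ θ, h1, abs_of_nonneg hθ.1] at h3
    have h4 := hθ.2
    have h5 := Real.pi_gt_three
    have h6 : 2*Real.pi*2 < 2*Real.pi*(|(p:ℝ)|/q) := by gcongr
    have : min δ 1 / 2 < 1 := by linarith
    linarith

lemma part_two (θ c : ℝ) (m : ℕ) (hc : 0 < c)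
    (h : ∀ p q : ℤ, 1 ≤ q → |θ - 2 * Real.pi * p / q| > c / (q : ℝ) ^ m) (k : ℕ) (hk : 1 ≤ k) :
    |Real.cos (k * θ)| > (c / (2 * 4^m)) / (k:ℝ)^m := by
  have hkR : (1:ℝ) ≤ k := by exact_mod_cast hk
  have hπ := Real.pi_pos
  set n := round ((k*θ - Real.pi/2)/Real.pi) with hn
  set y := k*θ - Real.pi/2 - n*Real.pi with hy
  have hyb : |y| ≤ Real.pi/2 := by
    have h1 := abs_sub_round ((k*θ - Real.pi/2)/Real.pi)
    rw [← hn] at h1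
    have h2 : y = ((k*θ - Real.pi/2)/Real.pi - n) * Real.pi := by rw [hy]; field_simp
    rw [h2, abs_mul, abs_of_pos hπ]
    nlinarith
  have hcos : |Real.cos (k*θ)| = |Real.sin y| := by
    have : k*θ = y + Real.pi/2 + n*Real.pi := by rw [hy]; ring
    rw [this, Real.cos_add_int_mul_pi, Real.cos_add_pi_div_two, abs_mul, abs_neg, abs_zpow]
    simp
  have hsin : 2/Real.pi * |y| ≤ |Real.sin y| := Real.mul_abs_le_abs_sin hyb
  have hmain := h (2*n+1) (4*k) (by omega)
  have hyk : |y| = k * |θ - 2*Real.pi*((2*n+1:ℤ):ℝ)/((4*(k:ℤ):ℤ):ℝ)| := by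
    have h0 : (k:ℝ) = |(k:ℝ)| := (abs_of_nonneg (by positivity)).symm
    conv_rhs => rw [h0]
    rw [← abs_mul]
    congr 1
    rw [hy]; push_cast; field_simp; ring
  rw [hcos]
  have h3 : 1/2 ≤ 2/Real.pi := by
    rw [le_div_iff₀ hπ]; have := Real.pi_lt_d2; linarith
  have h4 : c / (2*4^m) / (k:ℝ)^m = 1/2 * (1 * (c/((4*(k:ℤ):ℤ):ℝ)^m)) := by
    push_cast; rw [mul_pow]; field_simp
  rw [h4]
  refine lt_of_lt_of_le ?_ hsin
  rw [hyk]
  have hpos : 0 < c/((4*(k:ℤ):ℤ):ℝ)^m := by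
    push_cast; positivity
  calc _ < 1/2 * (1 * |θ - 2*Real.pi*((2*n+1:ℤ):ℝ)/((4*(k:ℤ):ℤ):ℝ)|) := by gcongr
    _ ≤ _ := by gcongr
end BakerTwo

noncomputable section

/-- Baker-type Diophantine bounds for an angle with rational,
non-half-integer cosine: `|θ - 2πp/q| > c q^{-m}` and `|cos(kθ)| > c k^{-m}`. -/
theorem statement12 (θ : ℝ) (hθ : θ ∈ Set.Ico 0 (2 * Real.pi))
    (hcosQ : ∃ q : ℚ, Real.cos θ = (q : ℝ))
    (hcosHalf : ∀ k : ℤ, Real.cos θ ≠ (k : ℝ) / 2) :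
    ∃ c > 0, ∃ m : ℕ,
      (∀ p q : ℤ, 1 ≤ q → |θ - 2 * Real.pi * p / q| > c / (q : ℝ) ^ m) ∧
      (∀ k : ℕ, 1 ≤ k → |Real.cos (k * θ)| > c / (k : ℝ) ^ m) := by
  obtain ⟨c, hc, m, h⟩ := BakerTwo.part_one θ hθ hcosQ (BakerTwo.not_rat_pi hcosQ hcosHalf)
  refine ⟨c / (2*4^m), by positivity, m, ?_, BakerTwo.part_two θ c m hc h⟩
  intro p q hq
  refine lt_of_le_of_lt ?_ (h p q hq)
  have hqR : (1:ℝ) ≤ q := by exact_mod_cast hq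
  have : (1:ℝ) ≤ 4^m := one_le_pow₀ (by norm_num)
  gcongr
  exact div_le_self hc.le (by linarith)
end
end

section
/- Let θ ∈ [0,2π) with cos θ = b/(2a) ∈ ℚ∖(1/2)ℤ for coprime integers a,b with a>1, and set z = e^{iθ}. Then: (i) if q₁ and q₂ are polynomials of degree at most D with integer coefficients all lying in {0,1,…,a−1} and q₁(z) = q₂(z), then q₁ = q₂; and (ii) there exists C>0 (depending only on a) such that for every integer D > 1 there exists a nonzero polynomial q ∈ ℤ[X] of degree at most D, all of whose coefficients have absolute value at most a−1, with |q(z)| ≤ C·D·a^{1−D/2}. -/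
noncomputable section

open Polynomial in
lemma s13_part1 (a b : ℤ) (ha : 1 < a) (hab : IsCoprime a b) (z : ℂ) (him : z.im ≠ 0)
    (hroot : (a : ℂ) * z ^ 2 - b * z + a = 0) (r : ℤ[X]) (hr : ∀ j, |r.coeff j| < a)
    (hrz : aeval z r = 0) : r = 0 := by
  set p : ℤ[X] := C a * X ^ 2 + C (-b) * X + C a with hp
  have ha0 : a ≠ 0 := by omega
  have hlc : p.leadingCoeff = a := leadingCoeff_quadratic ha0
  have hprim : p.IsPrimitive := by
    intro c hc
    rw [C_dvd_iff_dvd_coeff] at hc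
    have h0 : c ∣ a := by simpa [hp] using hc 0
    have h1 : c ∣ b := by
      have h := hc 1
      rw [hp, coeff_add, coeff_add, coeff_C_mul, coeff_C_mul, coeff_X_pow, coeff_X_one,
        coeff_C_of_ne_zero one_ne_zero] at h
      simpa using h
    exact hab.isUnit_of_dvd' h0 h1
  have hdvd : p.map (Int.castRingHom ℚ) ∣ r.map (Int.castRingHom ℚ) := by
    set P := p.map (Int.castRingHom ℚ) with hP
    set R := r.map (Int.castRingHom ℚ) with hR
    have hPdeg : P.degree = 2 := by
      have : P = C (a : ℚ) * X ^ 2 + C (-b : ℚ) * X + C (a : ℚ) := by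
        simp [hP, hp]
      rw [this]
      exact degree_quadratic (by exact_mod_cast ha0)
    have hP0 : P ≠ 0 := by
      intro h; rw [h] at hPdeg; simp at hPdeg
    have hmod : (R % P).degree ≤ 1 := by
      have := EuclideanDomain.mod_lt R hP0
      have h2 : (R % P).degree < 2 := by rw [← hPdeg]; exact this
      rw [degree_le_iff_coeff_zero]
      intro m hm
      apply coeff_eq_zero_of_degree_lt (h2.trans_le _)
      have : 1 < m := by exact_mod_cast hm
      exact_mod_cast this
    have hPz : aeval z P = 0 := by
      have : aeval z P = (a : ℂ) * z ^ 2 - b * z + a := by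
        simp [hP, hp]; ring
      rw [this, hroot]
    have hRz : aeval z R = 0 := by
      rw [← hrz, hR, aeval_def, aeval_def, eval₂_map]
      congr 1
    have hMz : aeval z (R % P) = 0 := by
      have h := EuclideanDomain.div_add_mod R P
      have h2 := congrArg (aeval z) h
      simpa [hPz, hRz] using h2
    have hlin := eq_X_add_C_of_degree_le_one hmod
    set α := (R % P).coeff 1
    set β := (R % P).coeff 0
    rw [hlin] at hMz
    simp at hMz
    have i1 := congrArg Complex.im hMz
    have i2 := congrArg Complex.re hMz
    simp [him] at i1 i2
    have : R % P = 0 := by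
      rw [hlin, i1]
      simp [i1] at i2
      simp [i2]
    exact (EuclideanDomain.mod_eq_zero).1 this
  have hd : p ∣ r := (IsPrimitive.Int.dvd_iff_map_cast_dvd_map_cast p r hprim).2 hdvd
  obtain ⟨s, rfl⟩ := hd
  by_contra hne
  have h1 := hr (p * s).natDegree
  rw [coeff_natDegree, leadingCoeff_mul, hlc, abs_mul] at h1
  have hs : s.leadingCoeff ≠ 0 := by
    rw [Ne, leadingCoeff_eq_zero]; rintro rfl; simp at hne
  have := Int.one_le_abs hs
  have h3 : a ≤ |a| := le_abs_self a
  nlinarith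

lemma s13_floor (x y M N : ℝ) (hM : 0 < M) (hN : 0 < N)
    (h : ⌊(x + M) * N / (2 * M)⌋ = ⌊(y + M) * N / (2 * M)⌋) : |x - y| ≤ 2 * M / N := by
  have := (Int.abs_sub_lt_one_of_floor_eq_floor h).le
  have e : (x + M) * N / (2 * M) - (y + M) * N / (2 * M) = (x - y) * (N / (2 * M)) := by
    field_simp; ring
  rw [e, abs_mul, abs_of_pos (a := N / (2 * M)) (by positivity)] at this
  rw [le_div_iff₀ hN]
  have h2 : |x - y| * (N / (2 * M)) = |x - y| * N / (2 * M) := by ring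
  rw [h2, div_le_one (by positivity)] at this
  exact this

lemma s13_mem (x M : ℝ) (N : ℕ) (hN : 0 < N) (h : |x| < M) :
    ⌊(x + M) * N / (2 * M)⌋ ∈ Finset.Ico (0 : ℤ) N := by
  have hM : 0 < M := (abs_nonneg x).trans_lt h
  have hN' : (0 : ℝ) < N := by exact_mod_cast hN
  obtain ⟨h1, h2⟩ := abs_lt.1 h
  rw [Finset.mem_Ico]
  constructor
  · rw [Int.floor_nonneg]
    have : 0 < x + M := by linarith
    positivity
  · rw [Int.floor_lt, div_lt_iff₀ (by positivity)]
    push_cast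
    nlinarith

open Polynomial in
lemma s13_part2 (A : ℕ) (hA : 1 < A) (z : ℂ) (hz : ‖z‖ = 1) (D : ℕ) (hD : 1 < D) :
    ∃ q : ℤ[X], q ≠ 0 ∧ q.natDegree ≤ D ∧ (∀ j, |q.coeff j| ≤ (A : ℤ) - 1) ∧
      ‖aeval z q‖ ≤ 8 * A * D * (A : ℝ) ^ ((1 : ℝ) - (D : ℝ) / 2) := by
  set N : ℕ := A ^ (D / 2) with hN
  have hNpos : 0 < N := by positivity
  have hNR : (0 : ℝ) < N := by exact_mod_cast hNpos
  set M : ℝ := A * (D + 1) with hM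
  have hA1 : (1 : ℝ) < A := by exact_mod_cast hA
  have hMpos : 0 < M := by positivity
  let F : (Fin (D + 1) → Fin A) → ℤ[X] := fun v => ofFn (D + 1) (fun i => ((v i : ℕ) : ℤ))
  have hFdeg : ∀ v, (F v).natDegree < D + 1 := fun v => ofFn_natDegree_lt (by omega) _
  have hFc : ∀ v (i : ℕ) (hi : i < D + 1), (F v).coeff i = ((v ⟨i, hi⟩ : ℕ) : ℤ) := fun v i hi =>
    ofFn_coeff_eq_val_of_lt _ hi
  have hFb : ∀ v (i : ℕ), 0 ≤ (F v).coeff i ∧ (F v).coeff i ≤ (A : ℤ) - 1 := by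
    intro v i
    by_cases hi : i < D + 1
    · rw [hFc v i hi]
      have := (v ⟨i, hi⟩).2
      omega
    · rw [coeff_eq_zero_of_natDegree_lt (by have := hFdeg v; omega)]
      omega
  have hFn : ∀ v, ‖aeval z (F v)‖ < M := by
    intro v
    rw [aeval_eq_sum_range' (hFdeg v)]
    calc _ ≤ ∑ i ∈ Finset.range (D + 1), ((A : ℝ) - 1) := by
          apply norm_sum_le_of_le
          intro i _
          have h := hFb v i
          rw [zsmul_eq_mul, norm_mul, norm_pow, hz, one_pow, mul_one, Complex.norm_intCast,
            abs_of_nonneg (by exact_mod_cast h.1)]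
          exact_mod_cast h.2
      _ < M := by
          simp [hM]
          nlinarith
  let G : (Fin (D + 1) → Fin A) → ℤ × ℤ := fun v =>
    (⌊((aeval z (F v)).re + M) * N / (2 * M)⌋, ⌊((aeval z (F v)).im + M) * N / (2 * M)⌋)
  have hcard : (Finset.Ico (0 : ℤ) N ×ˢ Finset.Ico (0 : ℤ) N).card
      < (Finset.univ : Finset (Fin (D + 1) → Fin A)).card := by
    simp only [Finset.card_product, Int.card_Ico, sub_zero, Int.toNat_natCast, Finset.card_univ,
      Fintype.card_fun, Fintype.card_fin]
    rw [hN, ← pow_add]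
    exact Nat.pow_lt_pow_right hA (by omega)
  obtain ⟨v, -, w, -, hvw, hG⟩ := Finset.exists_ne_map_eq_of_card_lt_of_maps_to hcard (f := G)
    (fun v _ => by
      simp only [G, Finset.coe_product, Set.mem_prod, Finset.mem_coe]
      exact ⟨s13_mem _ _ _ hNpos ((Complex.abs_re_le_norm _).trans_lt (hFn v)),
        s13_mem _ _ _ hNpos ((Complex.abs_im_le_norm _).trans_lt (hFn v))⟩)
  have hG1 := s13_floor _ _ _ _ hMpos hNR (congrArg Prod.fst hG)
  have hG2 := s13_floor _ _ _ _ hMpos hNR (congrArg Prod.snd hG)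
  refine ⟨F v - F w, ?_, ?_, ?_, ?_⟩
  · intro h
    apply hvw
    funext i
    have := congrArg (fun p => p.coeff i) (sub_eq_zero.1 h)
    simp only [hFc _ _ i.2] at this
    exact Fin.ext (by exact_mod_cast this)
  · refine (natDegree_sub_le _ _).trans (max_le ?_ ?_)
    · have := hFdeg v; omega
    · have := hFdeg w; omega
  · intro j
    rw [coeff_sub, abs_le]
    have h1 := hFb v j
    have h2 := hFb w j
    constructor <;> linarith [h1.1, h1.2, h2.1, h2.2]
  · have hnorm : ‖aeval z (F v - F w)‖ ≤ 4 * M / N := by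
      refine (Complex.norm_le_abs_re_add_abs_im _).trans ?_
      rw [map_sub, Complex.sub_re, Complex.sub_im]
      have : 4 * M / N = 2 * M / N + 2 * M / N := by ring
      linarith
    have hinv : 1 / (N : ℝ) ≤ (A : ℝ) ^ ((1 : ℝ) - (D : ℝ) / 2) := by
      have : 1 / (N : ℝ) = (A : ℝ) ^ (-((D / 2 : ℕ) : ℝ)) := by
        rw [Real.rpow_neg (by positivity), Real.rpow_natCast, hN]; simp
      rw [this]
      apply Real.rpow_le_rpow_of_exponent_le hA1.le
      have : (D : ℝ) ≤ 2 * ((D / 2 : ℕ) : ℝ) + 1 := by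
        exact_mod_cast (by omega : D ≤ 2 * (D / 2) + 1)
      linarith
    have hD1 : (1 : ℝ) < D := by exact_mod_cast hD
    calc _ ≤ 4 * M / N := hnorm
      _ = 4 * M * (1 / N) := by ring
      _ ≤ (8 * A * D) * (A : ℝ) ^ ((1 : ℝ) - (D : ℝ) / 2) := by
          apply mul_le_mul _ hinv (by positivity) (by positivity)
          rw [hM]; nlinarith

/-- Let `cos θ = b/(2a)` with `a, b` coprime, `a > 1`, and `z = e^{iθ}`.
(i) Evaluation at `z` is injective on polynomials with coefficients in `{0, …, a-1}` of
bounded degree; (ii) pigeonholing produces a nonzero polynomial of degree at most `D`,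
coefficients of absolute value at most `a - 1`, with `|q(z)| ≤ C D a^{1 - D/2}`. -/
theorem statement13 (θ : ℝ) (hθ : θ ∈ Set.Ico 0 (2 * Real.pi))
    (a b : ℤ) (ha : 1 < a) (hab : IsCoprime a b)
    (hcos : Real.cos θ = (b : ℝ) / (2 * a))
    (z : ℂ) (hz : z = Complex.exp ((θ : ℂ) * Complex.I)) :
    (∀ D : ℕ, ∀ q₁ q₂ : Polynomial ℤ, q₁.natDegree ≤ D → q₂.natDegree ≤ D →
      (∀ j, 0 ≤ q₁.coeff j ∧ q₁.coeff j < a) → (∀ j, 0 ≤ q₂.coeff j ∧ q₂.coeff j < a) →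
      Polynomial.aeval z q₁ = Polynomial.aeval z q₂ → q₁ = q₂) ∧
    (∃ C > 0, ∀ D : ℕ, 1 < D → ∃ q : Polynomial ℤ, q ≠ 0 ∧ q.natDegree ≤ D ∧
      (∀ j, |q.coeff j| ≤ a - 1) ∧
      ‖Polynomial.aeval z q‖ ≤ C * D * (a : ℝ) ^ ((1 : ℝ) - (D : ℝ) / 2)) := by
  have haR : (1 : ℝ) < a := by exact_mod_cast ha
  have hre : z.re = (b : ℝ) / (2 * a) := by rw [hz, Complex.exp_ofReal_mul_I_re, hcos]
  have him' : z.im = Real.sin θ := by rw [hz, Complex.exp_ofReal_mul_I_im]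
  have hsc : z.im ^ 2 + z.re ^ 2 = 1 := by
    rw [him', hre, ← hcos]; exact Real.sin_sq_add_cos_sq θ
  have hb : (b : ℝ) = 2 * a * z.re := by rw [hre]; field_simp
  have him : z.im ≠ 0 := by
    intro h
    have h1 : (b : ℝ) ^ 2 = 4 * a ^ 2 := by
      rw [hb, mul_pow]
      have : z.re ^ 2 = 1 := by rw [h] at hsc; linarith
      rw [this]; ring
    have h2 : b ^ 2 = 4 * a ^ 2 := by exact_mod_cast h1
    have h3 : a ∣ b ^ 2 := ⟨4 * a, by rw [h2]; ring⟩
    have h4 : IsUnit a := (hab.pow_right (n := 2)).isUnit_of_dvd' dvd_rfl h3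
    rcases Int.isUnit_iff.1 h4 with h | h <;> omega
  have hroot : (a : ℂ) * z ^ 2 - b * z + a = 0 := by
    apply Complex.ext
    · simp [pow_two]
      rw [hb]
      linear_combination (-a : ℝ) * hsc
    · simp [pow_two]
      rw [hb]
      ring
  have hnz : ‖z‖ = 1 := by rw [hz, Complex.norm_exp_ofReal_mul_I]
  refine ⟨?_, ?_⟩
  · intro D q₁ q₂ _ _ h1 h2 h
    apply sub_eq_zero.1
    apply s13_part1 a b ha hab z him hroot
    · intro j
      have := h1 j
      have := h2 j
      rw [Polynomial.coeff_sub, abs_lt]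
      omega
    · rw [map_sub, h, sub_self]
  · lift a to ℕ using (by omega) with A
    refine ⟨8 * A, by positivity, fun D hD => ?_⟩
    have := s13_part2 A (by exact_mod_cast ha) z hnz D hD
    simpa using this
end
end

section
/- Let θ ∈ [0,2π) with cos θ = b/(2a) ∈ ℚ∖(1/2)ℤ for coprime integers a,b with a>1, and set z = e^{iθ}. Then for every integer D ≥ 0 and every nonzero polynomial q ∈ ℤ[X] of degree at most D all of whose coefficients lie in {0,1,…,a−1}, one has |q(z)| ≥ a^{−D/2}. -/
noncomputable section

open Polynomial in
/-- The resultant of `a X² - b X + a` and `q` is a nonzero integer. -/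
theorem aux14 (a b : ℤ) (ha : 1 < a) (hab : IsCoprime a b)
    (z w : ℂ) (hw : w = starRingEnd ℂ z) (hne : z ≠ w) (hsum : (a : ℂ) * (z + w) = b)
    (hprod : z * w = 1) (D : ℕ) (q : ℤ[X]) (hq : q ≠ 0) (hD : q.natDegree ≤ D)
    (hc : ∀ j, 0 ≤ q.coeff j ∧ q.coeff j < a) :
    1 ≤ (a : ℝ) ^ D * ‖aeval z q‖ ^ 2 := by
  set p : ℤ[X] := C a * X ^ 2 + C (-b) * X + C a with hp
  have ha0 : a ≠ 0 := by omega
  have hpdeg : p.natDegree = 2 := natDegree_quadratic ha0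
  have hplc : p.leadingCoeff = a := leadingCoeff_quadratic ha0
  have hfac : p.map (Int.castRingHom ℂ) = C (a : ℂ) * ((X - C z) * (X - C w)) := by
    have h1 : (C (b : ℂ)) = C (a : ℂ) * (C z + C w) := by rw [← hsum]; simp
    have h2 : (C z * C w : ℂ[X]) = 1 := by rw [← C_mul, hprod]; simp
    have : p.map (Int.castRingHom ℂ) = C (a : ℂ) * X ^ 2 - C (b : ℂ) * X + C (a : ℂ) := by
      simp [hp]; ring
    rw [this, h1]
    linear_combination (-C (a : ℂ)) * h2
  have hew : aeval w q = starRingEnd ℂ (aeval z q) := by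
    rw [hw]
    simp only [aeval_def, eval₂_eq_sum, Polynomial.sum, map_sum, map_mul, map_pow]
    simp
  have hz0 : aeval z q ≠ 0 := by
    intro h0
    have hw0 : aeval w q = 0 := by rw [hew, h0]; simp
    have hprim : p.IsPrimitive := by
      intro r hr
      rw [C_dvd_iff_dvd_coeff] at hr
      have h1 := hr 0
      have h2 := hr 1
      have e0 : p.coeff 0 = a := by simp [hp, -eq_intCast]
      have e1 : p.coeff 1 = -b := by
        simp only [hp, coeff_add, coeff_C_mul, coeff_X_pow, coeff_X, coeff_C]; norm_num
      rw [e0] at h1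
      rw [e1, dvd_neg] at h2
      exact hab.isUnit_of_dvd' h1 h2
    have hdvC : p.map (Int.castRingHom ℂ) ∣ q.map (Int.castRingHom ℂ) := by
      rw [hfac]
      have hu : IsUnit (C (a : ℂ)) := by
        rw [isUnit_C]; exact IsUnit.mk0 _ (by exact_mod_cast ha0)
      rw [hu.mul_left_dvd]
      apply IsCoprime.mul_dvd
      · exact (pairwise_coprime_X_sub_C Function.injective_id hne)
      · rw [dvd_iff_isRoot, IsRoot, eval_map]; exact h0
      · rw [dvd_iff_isRoot, IsRoot, eval_map]; exact hw0
    have hdvQ : p.map (Int.castRingHom ℚ) ∣ q.map (Int.castRingHom ℚ) := by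
      rw [← map_dvd_map' (algebraMap ℚ ℂ), Polynomial.map_map, Polynomial.map_map]
      have e : (algebraMap ℚ ℂ).comp (Int.castRingHom ℚ) = Int.castRingHom ℂ :=
        RingHom.ext_int _ _
      rw [e]
      exact hdvC
    have hdv : p ∣ q := (IsPrimitive.Int.dvd_iff_map_cast_dvd_map_cast p q hprim).2 hdvQ
    have hl := leadingCoeff_dvd_leadingCoeff hdv
    rw [hplc] at hl
    have h3 := hc q.natDegree
    have h4 : q.leadingCoeff ≠ 0 := leadingCoeff_ne_zero.2 hq
    have h5 := Int.le_of_dvd (lt_of_le_of_ne h3.1 h4.symm) hl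
    exact absurd h3.2 (not_lt.2 h5)
  have hres : ((resultant p q 2 D : ℤ) : ℂ) = (a : ℂ) ^ D * (aeval z q * aeval w q) := by
    have h1 := resultant_map_map (f := p) (g := q) (m := 2) (n := D) (Int.castRingHom ℂ)
    have hqd : (q.map (Int.castRingHom ℂ)).natDegree ≤ D := natDegree_map_le.trans hD
    have h2 := resultant_mul_left (X - C z) (X - C w) (q.map (Int.castRingHom ℂ)) D hqd
    rw [hfac, resultant_C_mul_left] at h1
    simp only [natDegree_X_sub_C] at h2
    norm_num at h2
    rw [h2, resultant_X_sub_C_left _ _ _ hqd, resultant_X_sub_C_left _ _ _ hqd, eval_map, eval_map] at h1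
    exact h1.symm
  have hn : (‖((resultant p q 2 D : ℤ) : ℂ)‖ : ℝ) = (a : ℝ) ^ D * ‖aeval z q‖ ^ 2 := by
    rw [hres, hew]
    simp only [norm_mul, norm_pow, RCLike.norm_conj, Complex.norm_intCast]
    rw [abs_of_pos (by exact_mod_cast (by omega : 0 < a))]
    ring
  rw [← hn, Complex.norm_intCast]
  have : resultant p q 2 D ≠ 0 := by
    intro h
    rw [h, hew] at hres
    have hA : (a : ℂ) ≠ 0 := by exact_mod_cast ha0
    have := hres.symm
    simp [hA, hz0] at this
  exact_mod_cast Int.one_le_abs this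

/-- Let `cos θ = b/(2a)` with `a, b` coprime, `a > 1`, and `z = e^{iθ}`.
Every nonzero integer polynomial of degree at most `D` with coefficients in `{0, …, a-1}`
satisfies `|q(z)| ≥ a^{-D/2}`. -/
theorem statement14 (θ : ℝ) (hθ : θ ∈ Set.Ico 0 (2 * Real.pi))
    (a b : ℤ) (ha : 1 < a) (hab : IsCoprime a b)
    (hcos : Real.cos θ = (b : ℝ) / (2 * a))
    (z : ℂ) (hz : z = Complex.exp ((θ : ℂ) * Complex.I)) :
    ∀ D : ℕ, ∀ q : Polynomial ℤ, q ≠ 0 → q.natDegree ≤ D →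
      (∀ j, 0 ≤ q.coeff j ∧ q.coeff j < a) →
      ‖Polynomial.aeval z q‖ ≥ (a : ℝ) ^ (-(D : ℝ) / 2) := by
  intro D q hq hD hc
  have haR : (0 : ℝ) < a := by exact_mod_cast (by omega : 0 < a)
  have hre : z.re = Real.cos θ := by rw [hz, Complex.exp_ofReal_mul_I_re]
  have him : z.im = Real.sin θ := by rw [hz, Complex.exp_ofReal_mul_I_im]
  have hb : 2 * (a : ℝ) * Real.cos θ = b := by rw [hcos]; field_simp
  have hsin : Real.sin θ ≠ 0 := by
    intro h
    have h1 : Real.cos θ ^ 2 = 1 := by have := Real.sin_sq_add_cos_sq θ; rw [h] at this; linarith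
    have h2 : (b : ℝ) ^ 2 = 4 * a ^ 2 := by rw [← hb, mul_pow, h1]; ring
    have h3 : b ^ 2 = 4 * a ^ 2 := by exact_mod_cast h2
    have h4 : a ∣ b ^ 2 := ⟨4 * a, by rw [h3]; ring⟩
    have h5 : IsUnit a := (hab.pow_right (n := 2)).isUnit_of_dvd' dvd_rfl h4
    rcases Int.isUnit_iff.1 h5 with h | h <;> omega
  have key := aux14 a b ha hab z (starRingEnd ℂ z) rfl
    (by
      intro h
      have := congrArg Complex.im h
      rw [Complex.conj_im, him] at this
      exact hsin (by linarith))
    (by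
      have hb' : ((2 * (a : ℝ) * Real.cos θ : ℝ) : ℂ) = ((b : ℝ) : ℂ) := by rw [hb]
      rw [Complex.add_conj, hre]
      push_cast at hb' ⊢
      linear_combination hb')
    (by
      rw [Complex.mul_conj, Complex.normSq_apply, hre, him]
      norm_cast
      have := Real.sin_sq_add_cos_sq θ
      linarith) D q hq hD hc

  refine (sq_le_sq₀ (by positivity) (by positivity)).1 ?_
  rw [← Real.rpow_natCast, ← Real.rpow_mul haR.le]
  have h : -(D : ℝ) / 2 * ((2 : ℕ) : ℝ) = -(D : ℝ) := by push_cast; ring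
  rw [h, Real.rpow_neg haR.le, Real.rpow_natCast, inv_le_iff_one_le_mul₀' (by positivity)]
  exact key
end
end

section
/- Let θ ∈ [0,2π) with cos θ ∈ ℚ∖(1/2)ℤ. Then there exist constants c ∈ (0,1) and C>0 such that for all sufficiently large n ∈ ℕ, all real r with n^C < r < exp(c·n), all φ ∈ ℝ, and all j ∈ {1,…,n}, there exists an integer j' with j ≤ j' ≤ j + C·log r such that d(r·cos(j'θ + φ), ℤ) > c. -/
noncomputable section

/-- Repeated divisibility along the integer recurrence `q m_{k+2} - p m_{k+1} + q m_k = 0`. -/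
lemma rec_dvd (p q : ℤ) (hq : q ≠ 0) (hpq : IsCoprime q p) (m : ℕ → ℤ) (N : ℕ)
    (h : ∀ k, k + 2 ≤ N → q * m (k + 2) + q * m k = p * m (k + 1)) :
    ∀ t k : ℕ, t ≤ k → k + t ≤ N → q ^ t ∣ m k := by
  intro t
  induction t with
  | zero => intro k _ _; simp
  | succ t ih =>
    intro k h1 h2
    obtain ⟨k, rfl⟩ : ∃ k', k = k' + 1 := ⟨k - 1, by omega⟩
    obtain ⟨a, ha⟩ := ih k (by omega) (by omega)
    obtain ⟨b, hb⟩ := ih (k + 1) (by omega) (by omega)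
    obtain ⟨d, hd⟩ := ih (k + 2) (by omega) (by omega)
    have hr := h k (by omega)
    rw [ha, hb, hd] at hr
    have h3 : q * (d + a) = p * b := by
      apply mul_left_cancel₀ (pow_ne_zero t hq)
      linear_combination hr
    have h4 : q ∣ b := hpq.dvd_of_dvd_mul_left (Dvd.intro _ h3)
    rw [hb, pow_succ]
    exact mul_dvd_mul_left _ h4

/-- For `cos θ ∈ ℚ ∖ ½ℤ`, for large `n`, `n^C < r < exp(cn)`, any `φ`
and any `j ∈ {1, …, n}`, there is `j' ∈ [j, j + C log r]` with
`d(r cos(j'θ + φ), ℤ) > c`. -/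
theorem statement15 (θ : ℝ) (hθ : θ ∈ Set.Ico 0 (2 * Real.pi))
    (hcosQ : ∃ q : ℚ, Real.cos θ = (q : ℝ))
    (hcosHalf : ∀ k : ℤ, Real.cos θ ≠ (k : ℝ) / 2) :
    ∃ c : ℝ, 0 < c ∧ c < 1 ∧ ∃ C > 0, ∃ n₀ : ℕ, ∀ n : ℕ, n₀ ≤ n →
      ∀ r : ℝ, (n : ℝ) ^ C < r → r < Real.exp (c * n) →
      ∀ φ : ℝ, ∀ j : ℕ, 1 ≤ j → j ≤ n →
        ∃ j' : ℕ, j ≤ j' ∧ (j' : ℝ) ≤ (j : ℝ) + C * Real.log r ∧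
          ∀ m : ℤ, |r * Real.cos ((j' : ℝ) * θ + φ) - (m : ℝ)| > c := by
  obtain ⟨s, hs⟩ := hcosQ
  obtain ⟨p, q, hq2, hpq, hcos⟩ : ∃ p q : ℤ, 2 ≤ q ∧ IsCoprime q p ∧
      (q : ℝ) * (2 * Real.cos θ) = p := by
    refine ⟨(2 * s).num, (2 * s).den, ?_, ?_, ?_⟩
    · by_contra hlt
      have h1 : (2 * s).den = 1 := by have := (2 * s).pos; omega
      have h2 : (((2 * s).num : ℚ)) = 2 * s := Rat.den_eq_one_iff _ |>.mp h1
      apply hcosHalf (2 * s).num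
      have h3 : (((2 * s).num : ℤ) : ℝ) = 2 * (s : ℝ) := by exact_mod_cast h2
      rw [hs, h3]; ring
    · rw [Int.isCoprime_iff_gcd_eq_one, Int.gcd_comm]
      have := (2 * s).reduced
      simpa [Int.gcd, Nat.Coprime] using this
    · rw [hs]
      have := Rat.den_mul_eq_num (2 * s)
      exact_mod_cast this
  have hsin : 0 < |Real.sin θ| := by
    rw [abs_pos]
    intro h0
    have h1 := Real.sin_sq_add_cos_sq θ
    rw [h0] at h1
    have h2 : (Real.cos θ - 1) * (Real.cos θ + 1) = 0 := by linear_combination h1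
    rcases mul_eq_zero.mp h2 with h | h
    · exact hcosHalf 2 (by push_cast; linarith)
    · exact hcosHalf (-2) (by push_cast; linarith)
  have hq2R : (2 : ℝ) ≤ q := by exact_mod_cast hq2
  have hp0 : 0 ≤ |(p : ℝ)| := abs_nonneg _
  have hD : 0 < 2 * (q : ℝ) + |(p : ℝ)| + 2 := by linarith
  obtain ⟨c, hc⟩ : ∃ c : ℝ, c * (2 * (q : ℝ) + |(p : ℝ)| + 2) = 1 :=
    ⟨_, inv_mul_cancel₀ hD.ne'⟩
  have hc0 : 0 < c := by
    by_contra h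
    nlinarith
  have hc1 : c < 1 := by nlinarith
  obtain ⟨n₁, hn₁⟩ := exists_nat_gt (2 / |Real.sin θ|)
  refine ⟨c, hc0, hc1, 11, by norm_num, max 3 n₁, ?_⟩
  intro n hn r hr _ φ j _ _
  have hn3 : (3 : ℝ) ≤ n := by exact_mod_cast (le_max_left _ _).trans hn
  have hnn : (n₁ : ℝ) ≤ n := by exact_mod_cast (le_max_right _ _).trans hn
  have hnr : (n : ℝ) < r := by
    refine lt_of_le_of_lt ?_ hr
    have := Real.rpow_le_rpow_of_exponent_le (x := (n : ℝ)) (by linarith)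
      (show (1 : ℝ) ≤ 11 by norm_num)
    simpa using this
  have hr3 : 3 < r := by linarith
  have hlog : 1 < Real.log r := by
    rw [Real.lt_log_iff_exp_lt (by linarith)]
    have := Real.exp_one_lt_d9
    linarith
  by_contra hcon
  push Not at hcon
  obtain ⟨T, hT1, hT2⟩ : ∃ T : ℕ, 4 * Real.log r ≤ T ∧ (T : ℝ) < 4 * Real.log r + 1 :=
    ⟨_, Nat.le_ceil _, Nat.ceil_lt_add_one (by linarith)⟩
  have hex : ∀ k : ℕ, ∃ m : ℤ, k ≤ 2 * T + 1 →
      |r * Real.cos (((j + k : ℕ) : ℝ) * θ + φ) - (m : ℝ)| ≤ c := by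
    intro k
    by_cases hk : k ≤ 2 * T + 1
    · have hkR : (k : ℝ) ≤ 2 * T + 1 := by exact_mod_cast hk
      obtain ⟨m, hm⟩ := hcon (j + k) (by omega) (by push_cast; linarith)
      exact ⟨m, fun _ => hm⟩
    · exact ⟨0, fun h => absurd h hk⟩
  choose m hm using hex
  have hrec : ∀ k, k + 2 ≤ 2 * T + 1 → q * m (k + 2) + q * m k = p * m (k + 1) := by
    intro k hk
    have e0 := hm k (by omega)
    have e1 := hm (k + 1) (by omega)
    have e2 := hm (k + 2) (by omega)
    have hx : (q : ℝ) * (r * Real.cos (((j + (k + 2) : ℕ) : ℝ) * θ + φ))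
        + q * (r * Real.cos (((j + k : ℕ) : ℝ) * θ + φ))
        = p * (r * Real.cos (((j + (k + 1) : ℕ) : ℝ) * θ + φ)) := by
      rw [← hcos]
      have a2 : ((j + (k + 2) : ℕ) : ℝ) * θ + φ = (((j + (k + 1) : ℕ) : ℝ) * θ + φ) + θ := by
        push_cast; ring
      have a0 : ((j + k : ℕ) : ℝ) * θ + φ = (((j + (k + 1) : ℕ) : ℝ) * θ + φ) - θ := by
        push_cast; ring
      rw [a2, a0, Real.cos_add, Real.cos_sub]
      ring
    generalize r * Real.cos (((j + (k + 2) : ℕ) : ℝ) * θ + φ) = x2 at *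
    generalize r * Real.cos (((j + (k + 1) : ℕ) : ℝ) * θ + φ) = x1 at *
    generalize r * Real.cos (((j + k : ℕ) : ℝ) * θ + φ) = x0 at *
    have hlt : |((q * m (k + 2) + q * m k - p * m (k + 1) : ℤ) : ℝ)| < 1 := by
      have : ((q * m (k + 2) + q * m k - p * m (k + 1) : ℤ) : ℝ)
          = (p * (x1 - m (k + 1)) - q * (x2 - m (k + 2))) - q * (x0 - m k) := by
        push_cast; linear_combination hx
      rw [this]
      have b1 := abs_sub (p * (x1 - m (k + 1)) - q * (x2 - m (k + 2))) (q * (x0 - m k))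
      have b2 := abs_sub (p * (x1 - m (k + 1))) (q * (x2 - m (k + 2)))
      rw [abs_mul, abs_mul, abs_of_pos (by linarith : (0 : ℝ) < q)] at b2
      rw [abs_mul (q : ℝ), abs_of_pos (by linarith : (0 : ℝ) < q)] at b1
      have c1 := mul_le_mul_of_nonneg_left e1 hp0
      have c2 := mul_le_mul_of_nonneg_left e2 (by linarith : (0 : ℝ) ≤ q)
      have c0 := mul_le_mul_of_nonneg_left e0 (by linarith : (0 : ℝ) ≤ q)
      nlinarith
    have hz : q * m (k + 2) + q * m k - p * m (k + 1) = 0 := by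
      rw [← Int.abs_lt_one_iff]
      exact_mod_cast hlt
    linarith
  have hdvd := rec_dvd p q (by omega) hpq m (2 * T + 1) hrec T
  have hbig : r + 1 < (q : ℝ) ^ T := by
    have h1 : (2 : ℝ) ^ T ≤ (q : ℝ) ^ T := pow_le_pow_left₀ (by norm_num) hq2R T
    have h2 : r ^ 2 ≤ (2 : ℝ) ^ T := by
      rw [← Real.log_le_log_iff (by positivity) (by positivity), Real.log_pow, Real.log_pow]
      have := Real.log_two_gt_d9
      push_cast
      nlinarith
    nlinarith
  have hzero : ∀ k, k ≤ 2 * T + 1 → q ^ T ∣ m k → m k = 0 := by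
    intro k hk hd
    apply Int.eq_zero_of_abs_lt_dvd hd
    have e := hm k hk
    have h1 : |(m k : ℝ)| < (q : ℝ) ^ T := by
      have hb : |r * Real.cos (((j + k : ℕ) : ℝ) * θ + φ)| ≤ r := by
        rw [abs_mul, abs_of_pos (by linarith : 0 < r)]
        exact mul_le_of_le_one_right (by linarith) (Real.abs_cos_le_one _)
      rw [abs_le] at e hb
      rw [abs_lt]
      constructor <;> linarith
    exact_mod_cast h1
  have z0 := hzero T (by omega) (hdvd T le_rfl (by omega))
  have z1 := hzero (T + 1) (by omega) (hdvd (T + 1) (by omega) (by omega))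
  have e0 := hm T (by omega)
  have e1 := hm (T + 1) (by omega)
  rw [z0] at e0
  rw [z1] at e1
  have a1 : ((j + (T + 1) : ℕ) : ℝ) * θ + φ = (((j + T : ℕ) : ℝ) * θ + φ) + θ := by
    push_cast; ring
  rw [a1] at e1
  simp only [Int.cast_zero, sub_zero] at e0 e1
  generalize ((j + T : ℕ) : ℝ) * θ + φ = α at *
  have key : r ^ 2 * Real.sin θ ^ 2 = (r * Real.cos α) ^ 2 + (r * Real.cos (α + θ)) ^ 2
      - 2 * Real.cos θ * ((r * Real.cos α) * (r * Real.cos (α + θ))) := by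
    rw [Real.cos_add]
    linear_combination (r ^ 2 * Real.cos α ^ 2) * Real.sin_sq_add_cos_sq θ
      - r ^ 2 * Real.sin θ ^ 2 * Real.sin_sq_add_cos_sq α
  have hrs : 2 < r * |Real.sin θ| := by
    have : 2 / |Real.sin θ| < r := by linarith
    rwa [div_lt_iff₀ hsin] at this
  have hrs2 : 4 < r ^ 2 * Real.sin θ ^ 2 := by
    rw [← sq_abs (Real.sin θ)]; nlinarith
  have f0 : |r * Real.cos α| ≤ 1 := by linarith
  have f1 : |r * Real.cos (α + θ)| ≤ 1 := by linarith
  have g0 := (sq_le_one_iff_abs_le_one _).mpr f0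
  have g1 := (sq_le_one_iff_abs_le_one _).mpr f1
  have g2 : |Real.cos θ * ((r * Real.cos α) * (r * Real.cos (α + θ)))| ≤ 1 := by
    rw [abs_mul, abs_mul]
    exact mul_le_one₀ (Real.abs_cos_le_one _) (by positivity)
      (mul_le_one₀ f0 (abs_nonneg _) f1)
  have := (abs_le.mp g2).1
  linarith
end
end

section
/- Let a > 1 and b ≠ 0 be coprime integers, let p be a prime dividing a, let K ∈ ℕ, and let j₀ ∈ ℤ. Suppose (y_j) are real numbers satisfying the recurrence y_{j+1} + y_{j−1} = (b/a)·y_j for all j with |j − j₀| ≤ K−1, and (m_j) are integers with |y_j − m_j| < 1/(4a|b|) for all j with |j − j₀| ≤ K. Then m_{j₀} is divisible by p^{K·v_p(a)}, where v_p(a) is the p-adic valuation of a (in particular this holds trivially if m_{j₀} = 0). -/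
/-- If `(y_j)` satisfies the recurrence `y_{j+1} + y_{j-1} = (b/a) y_j`
on a window of radius `K - 1` around `j₀` and the integers `m_j` approximate `y_j` to
within `1/(4a|b|)` on the window of radius `K`, then `p^{K·v_p(a)} ∣ m_{j₀}` for every
prime `p` dividing `a`. -/
theorem statement17 (a b : ℤ) (ha : 1 < a) (hb : b ≠ 0) (hab : IsCoprime a b)
    (p : ℕ) (hp : p.Prime) (hpa : (p : ℤ) ∣ a)
    (K : ℕ) (j₀ : ℤ) (y : ℤ → ℝ) (m : ℤ → ℤ)
    (hrec : ∀ j : ℤ, |j - j₀| ≤ (K : ℤ) - 1 →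
      y (j + 1) + y (j - 1) = ((b : ℝ) / (a : ℝ)) * y j)
    (happrox : ∀ j : ℤ, |j - j₀| ≤ (K : ℤ) →
      |y j - (m j : ℝ)| < 1 / (4 * (a : ℝ) * |(b : ℝ)|)) :
    (p : ℤ) ^ (K * padicValInt p a) ∣ m j₀ := by
  have hR : ∀ j : ℤ, |j - j₀| ≤ (K : ℤ) - 1 → a * (m (j + 1) + m (j - 1)) = b * m j := by
    intro j hj
    have hj' := abs_le.mp hj
    have h0 := happrox j (by rw [abs_le]; omega)
    have h1 := happrox (j + 1) (by rw [abs_le]; omega)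
    have h2 := happrox (j - 1) (by rw [abs_le]; omega)
    have hr := hrec j hj
    have haR : (2 : ℝ) ≤ a := by exact_mod_cast ha
    have hbR : (1 : ℝ) ≤ |(b : ℝ)| := by
      have : (1 : ℤ) ≤ |b| := Int.one_le_abs hb
      exact_mod_cast this
    have hr' : (a : ℝ) * (y (j + 1) + y (j - 1)) = b * y j := by
      rw [hr]; field_simp
    set ε : ℝ := 1 / (4 * (a : ℝ) * |(b : ℝ)|) with hε
    have hεpos : 0 < ε := by positivity
    have hprod : 4 * (a : ℝ) * |(b : ℝ)| * ε = 1 := by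
      rw [hε]; field_simp
    have hA : (a : ℝ) * ε ≤ 1 / 4 := by
      have : (a : ℝ) * ε * 1 ≤ (a : ℝ) * ε * |(b : ℝ)| := by gcongr
      linarith
    have hB : |(b : ℝ)| * ε ≤ 1 / 8 := by
      have : 2 * (|(b : ℝ)| * ε) ≤ a * (|(b : ℝ)| * ε) := by gcongr
      linarith
    have e0 : |(b : ℝ) * (y j - m j)| ≤ |(b : ℝ)| * ε := by
      rw [abs_mul]; gcongr
    have e1 : |(a : ℝ) * (y (j + 1) - m (j + 1))| ≤ a * ε := by
      rw [abs_mul, abs_of_pos (by linarith : (0 : ℝ) < a)]; gcongr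
    have e2 : |(a : ℝ) * (y (j - 1) - m (j - 1))| ≤ a * ε := by
      rw [abs_mul, abs_of_pos (by linarith : (0 : ℝ) < a)]; gcongr
    have key : |((a * (m (j + 1) + m (j - 1)) - b * m j : ℤ) : ℝ)| < 1 := by
      push_cast
      rw [abs_le] at e0 e1 e2
      rw [abs_lt]
      constructor <;> linarith
    have key' : |a * (m (j + 1) + m (j - 1)) - b * m j| < 1 := by exact_mod_cast key
    have := Int.abs_lt_one_iff.mp key'
    linarith
  have hI : ∀ i : ℕ, ∀ j : ℤ, |j - j₀| ≤ (K : ℤ) - i → a ^ i ∣ m j := by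
    intro i
    induction i with
    | zero => intro j _; simp
    | succ i ih =>
      intro j hj
      have hj' := abs_le.mp hj
      push_cast at hj'
      have h1 := ih (j + 1) (by rw [abs_le]; omega)
      have h2 := ih (j - 1) (by rw [abs_le]; omega)
      have h3 := hR j (by rw [abs_le]; omega)
      have h4 : a ^ (i + 1) ∣ b * m j := by
        rw [← h3, pow_succ']
        exact mul_dvd_mul_left a (dvd_add h1 h2)
      exact (hab.pow_left).dvd_of_dvd_mul_left h4
  have hK := hI K j₀ (by simp)
  have hd : (p : ℤ) ^ padicValInt p a ∣ a := padicValInt_dvd a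
  rw [mul_comm, pow_mul]
  exact (pow_dvd_pow_of_dvd hd K).trans hK
end

section
/- There exists an absolute constant C>0 with the following property. Let μ and ν be Borel probability measures on ℝ², let L ≥ 1, ε > 0 and κ > 0, and suppose that ∫_{|ξ| < L} |μ̂(ξ) − ν̂(ξ)| dξ < ε and that ν is absolutely continuous with respect to Lebesgue measure with density bounded almost everywhere by κ. Then for every r > L^{−1/4} and every x₀ ∈ ℝ², |μ(B_r(x₀)) − ν(B_r(x₀))| ≤ C·(ε·r² + L^{−3} + κ·L^{−1/2}·r²). -/
open MeasureTheory

noncomputable section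

/-- The Fourier transform (characteristic function) of a measure on `ℂ ≅ ℝ²`:
`μ̂(ξ) = ∫ exp(-i⟨ξ, x⟩) dμ(x)` with `⟨ξ, x⟩ = Re(ξ · conj x)`. -/
def measFT (μ : Measure ℂ) (ξ : ℂ) : ℂ :=
  ∫ x, Complex.exp (-(((ξ * (starRingEnd ℂ) x).re : ℝ) : ℂ) * Complex.I) ∂μ

section aux
open scoped FourierTransform ContDiff SchwartzMap

lemma unit_kernel : ∃ (K : ℂ → ℝ) (φ : ℂ → ℂ) (M : ℝ), Continuous K ∧ (∀ x, 0 ≤ K x) ∧ 0 < ∫ x, K x ∧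
    Integrable K ∧ Integrable (fun x => ‖x‖ ^ 12 * K x) ∧ Integrable φ ∧ (∀ x, ‖φ x‖ ≤ M) ∧
    (∀ x, 1 ≤ ‖x‖ → φ x = 0) ∧ ∀ x, (K x : ℂ) = 𝓕 φ x := by
  let b : ContDiffBump (0 : ℂ) := ⟨1/8, 1/4, by norm_num, by norm_num⟩
  let ψ : ℂ → ℂ := fun x => ((b x : ℝ) : ℂ)
  have hψc : ContDiff ℝ ∞ ψ := Complex.ofRealCLM.contDiff.comp b.contDiff
  have hψs : HasCompactSupport ψ := b.hasCompactSupport.comp_left (g := fun x : ℝ => (x : ℂ)) (by simp)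
  let S : 𝓢(ℂ, ℂ) := hψs.toSchwartzMap hψc
  have hS : (S : ℂ → ℂ) = ψ := rfl
  have hψi : Integrable ψ := hS ▸ S.integrable
  let g : 𝓢(ℂ, ℂ) := 𝓕 S
  have hg : (g : ℂ → ℂ) = 𝓕 ψ := by rw [← hS]; rfl
  have hreal : ∀ x, (starRingEnd ℂ) (g x) = g x := by
    intro x
    rw [hg, Real.fourier_eq', ← integral_conj]
    rw [← integral_neg_eq_self]
    congr 1 with y
    have h2 : (starRingEnd ℂ) (2 : ℂ) = 2 := Complex.conj_ofNat 2
    simp only [smul_eq_mul, map_mul, ← Complex.exp_conj, Complex.conj_ofReal, Complex.conj_I, ψ, b.neg,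
      inner_neg_left]
    congr 2
    push_cast
    ring
  have hsq : ∀ x, ((‖g x‖ ^ 2 : ℝ) : ℂ) = g x * g x := by
    intro x
    have := Complex.mul_conj (g x)
    rw [hreal] at this
    rw [this, Complex.normSq_eq_norm_sq]
  let φ := convolution ψ ψ (ContinuousLinearMap.mul ℂ ℂ) volume
  obtain ⟨C, hC⟩ : ∃ C, ∀ x, ‖g x‖ ≤ C := by
    obtain ⟨C, -, hC⟩ := g.decay 0 0
    exact ⟨C, fun x => by simpa using hC x⟩
  have hint : ∀ k, Integrable (fun x => ‖x‖ ^ k * ‖g x‖ ^ 2) := by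
    intro k
    have h1 := (g.integrable_pow_mul volume k).mul_const C
    refine h1.mono' (by have := g.continuous; fun_prop) (Filter.Eventually.of_forall fun x => ?_)
    rw [Real.norm_of_nonneg (by positivity), pow_two, ← mul_assoc]
    gcongr
    exact hC x
  have hK1 : Integrable (fun x => ‖g x‖ ^ 2) := by simpa using hint 0
  have hKc : Continuous (fun x => ‖g x‖ ^ 2) := by have := g.continuous; fun_prop
  refine ⟨fun x => ‖g x‖ ^ 2, φ, ∫ x, ‖ψ x‖, hKc, fun x => by positivity, ?_, hK1, hint 12,
    hψi.integrable_convolution _ hψi, ?_, ?_, ?_⟩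
  · refine integral_pos_of_integrable_nonneg_nonzero hKc hK1 (fun x => by positivity) (x := 0) ?_
    have : g 0 = ((∫ x, b x : ℝ) : ℂ) := by
      rw [hg, Real.fourier_eq']
      simp [ψ, integral_complex_ofReal]
    have hb : 0 < ∫ x, b x := b.integral_pos
    rw [this]
    have := hb.ne'
    simpa using this
  · intro x
    refine norm_integral_le_of_norm_le hψi.norm (Filter.Eventually.of_forall fun t => ?_)
    have : ‖ψ (x - t)‖ ≤ 1 := by
      simp only [ψ, Complex.norm_real]
      rw [Real.norm_of_nonneg b.nonneg]
      exact b.le_one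
    simp only [ContinuousLinearMap.mul_apply', norm_mul]
    exact mul_le_of_le_one_right (norm_nonneg _) this
  · intro x hx
    by_contra h
    have h2 := support_convolution_subset (ContinuousLinearMap.mul ℂ ℂ) (f := ψ) (g := ψ) (μ := volume) (Function.mem_support.2 h)
    obtain ⟨y, hy, z, hz, rfl⟩ := Set.mem_add.1 h2
    have key : ∀ y, y ∈ Function.support ψ → ‖y‖ < 1/4 := by
      intro y hy
      have : y ∈ Function.support b := by
        intro h0; apply hy; simp [ψ, h0]
      rw [b.support_eq] at this
      simpa [b] using this
    have := norm_add_le y z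
    linarith [key y hy, key z hz]
  · intro x
    rw [hsq, hg]
    exact (Real.fourier_mul_convolution_eq hψi hψi x).symm

lemma scaled_kernel : ∃ (M T : ℝ), 0 < M ∧ 0 < T ∧ ∀ L : ℝ, 1 ≤ L → ∃ (K : ℂ → ℝ) (φ : ℂ → ℂ), Continuous K ∧
    (∀ x, 0 ≤ K x) ∧ ∫ x, K x = 1 ∧ Integrable K ∧ Integrable (fun x => ‖x‖ ^ 12 * K x) ∧
    (∫ x, ‖x‖ ^ 12 * K x) ≤ T / L ^ 12 ∧ Integrable φ ∧ (∀ x, ‖φ x‖ ≤ M) ∧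
    (∀ x, L ≤ ‖x‖ → φ x = 0) ∧ ∀ x, (K x : ℂ) =
      ∫ ξ, φ ξ * Complex.exp (-(((ξ * (starRingEnd ℂ) x).re : ℝ) : ℂ) * Complex.I) := by
  obtain ⟨K, φ, M, hKc, hK0, hKpos, hKi, hKm, hφi, hφM, hφs, hKφ⟩ := unit_kernel
  set J := ∫ x, K x with hJ
  have hM0 : 0 ≤ M := (norm_nonneg _).trans (hφM 0)
  have hT0 : 0 ≤ ∫ x, ‖x‖ ^ 12 * K x := integral_nonneg fun x => mul_nonneg (by positivity) (hK0 x)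
  have hpi := Real.pi_pos
  refine ⟨((2 * Real.pi) ^ 2)⁻¹ * J⁻¹ * M + 1, (2 * Real.pi) ^ 12 * J⁻¹ * (∫ x, ‖x‖ ^ 12 * K x) + 1,
    by positivity, by positivity, fun L hL => ?_⟩
  have hL0 : 0 < L := by linarith
  set a := L / (2 * Real.pi) with ha
  have ha0 : 0 < a := by positivity
  have hmeq : (fun x : ℂ => ‖x‖ ^ 12 * (J⁻¹ * a ^ 2 * K (a • x))) =
      fun x => (J⁻¹ * a ^ 2 * (a ^ 12)⁻¹) * (fun y : ℂ => ‖y‖ ^ 12 * K y) (a • x) := by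
    ext x
    simp only [norm_smul, Real.norm_of_nonneg ha0.le]
    field_simp
  refine ⟨fun x => J⁻¹ * a ^ 2 * K (a • x),
    fun ξ => (((2 * Real.pi) ^ 2)⁻¹ * J⁻¹ : ℝ) * φ (L⁻¹ • ξ), ?_, ?_, ?_, ?_, ?_, ?_, ?_, ?_, ?_, ?_⟩
  · fun_prop
  · intro x
    have := hK0 (a • x)
    positivity
  · rw [integral_const_mul, Measure.integral_comp_smul_of_nonneg _ _ _ (hR := ha0.le)]
    simp only [Complex.finrank_real_complex, smul_eq_mul, ← hJ]
    field_simp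
  · exact (hKi.comp_smul ha0.ne').const_mul _
  · rw [hmeq]
    exact (hKm.comp_smul ha0.ne').const_mul _
  · rw [hmeq, integral_const_mul, Measure.integral_comp_smul_of_nonneg _ (fun y : ℂ => ‖y‖ ^ 12 * K y) _ (hR := ha0.le)]
    simp only [Complex.finrank_real_complex, smul_eq_mul]
    have : J⁻¹ * a ^ 2 * (a ^ 12)⁻¹ * ((a ^ 2)⁻¹ * ∫ (x : ℂ), ‖x‖ ^ 12 * K x) =
      ((2 * Real.pi) ^ 12 * J⁻¹ * (∫ x, ‖x‖ ^ 12 * K x)) / L ^ 12 := by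
      rw [ha]; field_simp
    rw [this]
    gcongr
    linarith
  · exact (hφi.comp_smul (inv_ne_zero hL0.ne')).const_mul _
  · intro x
    rw [norm_mul, Complex.norm_real, Real.norm_of_nonneg (by positivity)]
    have := hφM (L⁻¹ • x)
    have : ((2 * Real.pi) ^ 2)⁻¹ * J⁻¹ * ‖φ (L⁻¹ • x)‖ ≤ ((2 * Real.pi) ^ 2)⁻¹ * J⁻¹ * M := by gcongr
    linarith
  · intro x hx
    show _ * φ (L⁻¹ • x) = 0
    rw [hφs, mul_zero]
    rw [norm_smul, norm_inv, Real.norm_of_nonneg hL0.le]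
    field_simp
    exact hx
  · intro x
    push_cast
    rw [hKφ, Real.fourier_eq']
    have := Measure.integral_comp_smul_of_nonneg (volume : Measure ℂ) (fun v : ℂ => Complex.exp (↑(-2 * Real.pi * inner ℝ v (a • x)) * Complex.I) • φ v) L⁻¹ (hR := by positivity)
    rw [Complex.finrank_real_complex] at this
    have h2 : (∫ ξ : ℂ, ((2 * (Real.pi : ℂ)) ^ 2)⁻¹ * (J : ℂ)⁻¹ * φ (L⁻¹ • ξ) * Complex.exp (-(((ξ * (starRingEnd ℂ) x).re : ℝ) : ℂ) * Complex.I)) =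
       ((2 * (Real.pi : ℂ)) ^ 2)⁻¹ * (J : ℂ)⁻¹ * ∫ ξ : ℂ, Complex.exp (↑(-2 * Real.pi * inner ℝ (L⁻¹ • ξ) (a • x)) * Complex.I) • φ (L⁻¹ • ξ) := by
      rw [← integral_const_mul]
      congr 1 with ξ
      have : -2 * Real.pi * inner ℝ (L⁻¹ • ξ) (a • x) = -(ξ * (starRingEnd ℂ) x).re := by
        rw [real_inner_smul_left, real_inner_smul_right, Complex.inner, ha]
        have : (x * (starRingEnd ℂ) ξ).re = (ξ * (starRingEnd ℂ) x).re := by simp; ring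
        rw [this]
        field_simp
      rw [this, smul_eq_mul]
      push_cast
      ring
    rw [h2, this, Complex.real_smul]
    generalize (∫ v : ℂ, Complex.exp (↑(-2 * Real.pi * inner ℝ v (a • x)) * Complex.I) • φ v) = Q
    rw [ha]
    have hJc : (J : ℂ) ≠ 0 := by exact_mod_cast hKpos.ne'
    have hLc : (L : ℂ) ≠ 0 := by exact_mod_cast hL0.ne'
    have hpc : (Real.pi : ℂ) ≠ 0 := by exact_mod_cast hpi.ne'
    push_cast
    field_simp
    rw [Complex.real_smul]
    push_cast
    rfl

lemma measFT_eq (μ : Measure ℂ) (ξ : ℂ) : measFT μ ξ = charFun μ (-ξ) := by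
  rw [measFT, charFun_apply]
  congr 1 with x
  rw [inner_neg_right, Complex.inner]
  push_cast
  rfl

lemma measurable_measFT (μ : Measure ℂ) [IsProbabilityMeasure μ] : Measurable (measFT μ) := by
  have : measFT μ = fun ξ => charFun μ (-ξ) := funext (measFT_eq μ)
  rw [this]
  exact measurable_charFun.comp measurable_neg

lemma norm_measFT_le (μ : Measure ℂ) [IsProbabilityMeasure μ] (ξ : ℂ) : ‖measFT μ ξ‖ ≤ 1 := by
  rw [measFT_eq]; exact norm_charFun_le_one _

lemma norm_cexp_neg (t : ℝ) : ‖Complex.exp (-(t : ℂ) * Complex.I)‖ = 1 := by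
  have := Complex.norm_exp_ofReal_mul_I (-t)
  simpa using this

lemma smooth_eq (K : ℂ → ℝ) (φ : ℂ → ℂ) (hφ : Integrable φ)
    (hK : ∀ x, (K x : ℂ) =
      ∫ ξ, φ ξ * Complex.exp (-(((ξ * (starRingEnd ℂ) x).re : ℝ) : ℂ) * Complex.I))
    (μ : Measure ℂ) [IsProbabilityMeasure μ] (z : ℂ) :
    ((∫ x, K (z - x) ∂μ : ℝ) : ℂ) =
      ∫ ξ, φ ξ * Complex.exp (-(((ξ * (starRingEnd ℂ) z).re : ℝ) : ℂ) * Complex.I) *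
        (starRingEnd ℂ) (measFT μ ξ) := by
  rw [← integral_complex_ofReal]
  simp_rw [hK]
  rw [integral_integral_swap]
  · congr 1 with ξ
    rw [measFT, ← integral_conj, ← integral_const_mul]
    congr 1 with x
    rw [mul_assoc, ← Complex.exp_conj, ← Complex.exp_add]
    congr 2
    simp only [map_mul, map_neg, Complex.conj_ofReal, Complex.conj_I, map_sub, mul_sub, Complex.sub_re]
    push_cast
    ring
  · have h1 : Integrable (fun p : ℂ × ℂ => φ p.2) (μ.prod volume) := hφ.comp_snd μ
    refine h1.norm.mono' ?_ (Filter.Eventually.of_forall fun p => ?_)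
    · refine h1.aestronglyMeasurable.mul (Continuous.aestronglyMeasurable ?_)
      have : Continuous fun x : ℂ => (starRingEnd ℂ) x := Complex.continuous_conj
      fun_prop
    · simp only [Function.uncurry]
      rw [norm_mul, norm_cexp_neg, mul_one]

lemma smooth_diff (K : ℂ → ℝ) (φ : ℂ → ℂ) (M L ε : ℝ) (hM : 0 < M) (hφ : Integrable φ)
    (hφM : ∀ x, ‖φ x‖ ≤ M) (hφs : ∀ x, L ≤ ‖x‖ → φ x = 0)
    (hK : ∀ x, (K x : ℂ) =
      ∫ ξ, φ ξ * Complex.exp (-(((ξ * (starRingEnd ℂ) x).re : ℝ) : ℂ) * Complex.I))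
    (μ ν : Measure ℂ) [IsProbabilityMeasure μ] [IsProbabilityMeasure ν]
    (h : (∫ ξ in {ξ : ℂ | ‖ξ‖ < L}, ‖measFT μ ξ - measFT ν ξ‖) < ε) (z : ℂ) :
    |(∫ x, K (z - x) ∂μ) - ∫ x, K (z - x) ∂ν| ≤ M * ε := by
  have hI : ∀ (μ : Measure ℂ) [IsProbabilityMeasure μ], Integrable (fun ξ =>
      φ ξ * Complex.exp (-(((ξ * (starRingEnd ℂ) z).re : ℝ) : ℂ) * Complex.I) *
        (starRingEnd ℂ) (measFT μ ξ)) := by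
    intro μ _
    refine hφ.norm.mono' ?_ (Filter.Eventually.of_forall fun ξ => ?_)
    · refine (hφ.aestronglyMeasurable.mul (Continuous.aestronglyMeasurable ?_)).mul ?_
      · fun_prop
      · exact (Complex.continuous_conj.measurable.comp (measurable_measFT μ)).aestronglyMeasurable
    · rw [norm_mul, norm_mul, norm_cexp_neg, mul_one, RCLike.norm_conj]
      exact mul_le_of_le_one_right (norm_nonneg _) (norm_measFT_le μ ξ)
  have hS : MeasurableSet {ξ : ℂ | ‖ξ‖ < L} := measurableSet_lt measurable_norm measurable_const
  have hfin : volume {ξ : ℂ | ‖ξ‖ < L} < ⊤ := by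
    have : {ξ : ℂ | ‖ξ‖ < L} = Metric.ball 0 L := by ext; simp
    rw [this]; exact measure_ball_lt_top
  have hB : IntegrableOn (fun ξ => ‖measFT μ ξ - measFT ν ξ‖) {ξ : ℂ | ‖ξ‖ < L} := by
    refine Measure.integrableOn_of_bounded (M := 2) hfin.ne
      ((measurable_measFT μ).sub (measurable_measFT ν)).norm.aestronglyMeasurable
      (Filter.Eventually.of_forall fun ξ => ?_)
    rw [norm_norm]
    linarith [norm_sub_le (measFT μ ξ) (measFT ν ξ), norm_measFT_le μ ξ, norm_measFT_le ν ξ]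
  rw [← Real.norm_eq_abs, ← Complex.norm_real, Complex.ofReal_sub, smooth_eq K φ hφ hK,
    smooth_eq K φ hφ hK, ← integral_sub (hI μ) (hI ν)]
  have hle : M * (∫ ξ in {ξ : ℂ | ‖ξ‖ < L}, ‖measFT μ ξ - measFT ν ξ‖) ≤ M * ε := by gcongr
  refine le_trans ?_ hle
  rw [← integral_indicator hS, ← integral_const_mul]
  refine norm_integral_le_of_norm_le ((hB.integrable_indicator hS).const_mul M)
    (Filter.Eventually.of_forall fun ξ => ?_)
  rw [← mul_sub, ← map_sub, norm_mul, norm_mul, norm_cexp_neg, mul_one, RCLike.norm_conj]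
  by_cases hξ : ‖ξ‖ < L
  · rw [Set.indicator_of_mem (by exact hξ)]
    gcongr
    exact hφM ξ
  · rw [hφs ξ (not_lt.1 hξ), Set.indicator_of_notMem (by exact hξ)]
    simp

/-- mass of the smoothed measure on `B`. -/
lemma conv_eq (K : ℂ → ℝ) (hKc : Continuous K) (μ : Measure ℂ) [IsProbabilityMeasure μ]
    (B : Set ℂ) (hB : MeasurableSet B) [SFinite (volume.withDensity fun y => ENNReal.ofReal (K y))] :
    (μ.prod (volume.withDensity fun y => ENNReal.ofReal (K y))) {p | p.1 + p.2 ∈ B} =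
      ∫⁻ z in B, ∫⁻ x, ENNReal.ofReal (K (z - x)) ∂μ := by
  have hKm : Measurable fun y => ENNReal.ofReal (K y) := hKc.measurable.ennreal_ofReal
  have hm : MeasurableSet {p : ℂ × ℂ | p.1 + p.2 ∈ B} := measurable_add hB
  rw [Measure.prod_apply hm, lintegral_lintegral_swap]
  · refine lintegral_congr fun x => ?_
    have hx : MeasurableSet (Prod.mk x ⁻¹' {p : ℂ × ℂ | p.1 + p.2 ∈ B}) := measurable_prodMk_left hm
    rw [withDensity_apply _ hx, ← lintegral_indicator hx, ← lintegral_indicator hB,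
      ← lintegral_add_left_eq_self (B.indicator fun z => ENNReal.ofReal (K (z - x))) x]
    refine lintegral_congr fun y => ?_
    by_cases hy : x + y ∈ B
    · rw [Set.indicator_of_mem (by exact hy), Set.indicator_of_mem hy, add_sub_cancel_left]
    · rw [Set.indicator_of_notMem (by exact hy), Set.indicator_of_notMem hy]
  · exact (hKm.comp (measurable_fst.sub measurable_snd)).aemeasurable

lemma conv_diff (K : ℂ → ℝ) (hKc : Continuous K) (hK0 : ∀ x, 0 ≤ K x) (C E : ℝ) (hKb : ∀ x, K x ≤ C)
    (hE : 0 ≤ E)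
    (μ ν : Measure ℂ) [IsProbabilityMeasure μ] [IsProbabilityMeasure ν]
    (h : ∀ z, |(∫ x, K (z - x) ∂μ) - ∫ x, K (z - x) ∂ν| ≤ E)
    [SFinite (volume.withDensity fun y => ENNReal.ofReal (K y))] 
    (B : Set ℂ) (hB : MeasurableSet B) :
    (μ.prod (volume.withDensity fun y => ENNReal.ofReal (K y))) {p | p.1 + p.2 ∈ B} ≤
    (ν.prod (volume.withDensity fun y => ENNReal.ofReal (K y))) {p | p.1 + p.2 ∈ B} +
      ENNReal.ofReal E * volume B := by
  have hKi : ∀ (μ : Measure ℂ) [IsProbabilityMeasure μ] z, Integrable (fun x => K (z - x)) μ := by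
    intro μ _ z
    refine Integrable.of_bound (by fun_prop) C (Filter.Eventually.of_forall fun x => ?_)
    rw [Real.norm_of_nonneg (hK0 _)]; exact hKb _
  rw [conv_eq K hKc μ B hB, conv_eq K hKc ν B hB, ← setLIntegral_const, 
    ← lintegral_add_right _ measurable_const]
  refine lintegral_mono fun z => ?_
  show (∫⁻ x, ENNReal.ofReal (K (z - x)) ∂μ) ≤ (∫⁻ x, ENNReal.ofReal (K (z - x)) ∂ν) + ENNReal.ofReal E
  rw [← ofReal_integral_eq_lintegral_ofReal (hKi μ z) (Filter.Eventually.of_forall fun x => hK0 _),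
    ← ofReal_integral_eq_lintegral_ofReal (hKi ν z) (Filter.Eventually.of_forall fun x => hK0 _),
    ← ENNReal.ofReal_add (integral_nonneg fun x => hK0 _) hE]
  apply ENNReal.ofReal_le_ofReal
  linarith [abs_le.1 (h z)]

lemma ball_le_conv (μ ρ : Measure ℂ) [IsProbabilityMeasure μ] [IsProbabilityMeasure ρ] (x₀ : ℂ)
    (s δ : ℝ) : μ.real (Metric.ball x₀ s) ≤ (μ.prod ρ).real {p | p.1 + p.2 ∈ Metric.ball x₀ (s + δ)} +
      ρ.real {y | δ ≤ ‖y‖} := by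
  have h1 : μ.real (Metric.ball x₀ s) = (μ.prod ρ).real (Metric.ball x₀ s ×ˢ Set.univ) := by
    rw [measureReal_prod_prod]; simp
  have h2 : ρ.real {y | δ ≤ ‖y‖} = (μ.prod ρ).real (Set.univ ×ˢ {y | δ ≤ ‖y‖}) := by
    rw [measureReal_prod_prod]; simp
  rw [h1, h2]
  refine (measureReal_mono ?_).trans (measureReal_union_le _ _)
  rintro ⟨x, y⟩ ⟨hx, -⟩
  by_cases hy : δ ≤ ‖y‖
  · right; exact ⟨trivial, hy⟩
  · left
    simp only [Metric.mem_ball, dist_eq_norm, Set.mem_ofPred_eq] at hx ⊢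
    have : x + y - x₀ = (x - x₀) + y := by ring
    rw [this]
    linarith [norm_add_le (x - x₀) y, not_le.1 hy]

lemma conv_le_ball (μ ρ : Measure ℂ) [IsProbabilityMeasure μ] [IsProbabilityMeasure ρ] (x₀ : ℂ)
    (s δ : ℝ) : (μ.prod ρ).real {p | p.1 + p.2 ∈ Metric.ball x₀ s} ≤ μ.real (Metric.ball x₀ (s + δ)) +
      ρ.real {y | δ ≤ ‖y‖} := by
  have h1 : μ.real (Metric.ball x₀ (s + δ)) = (μ.prod ρ).real (Metric.ball x₀ (s + δ) ×ˢ Set.univ) := by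
    rw [measureReal_prod_prod]; simp
  have h2 : ρ.real {y | δ ≤ ‖y‖} = (μ.prod ρ).real (Set.univ ×ˢ {y | δ ≤ ‖y‖}) := by
    rw [measureReal_prod_prod]; simp
  rw [h1, h2]
  refine (measureReal_mono ?_).trans (measureReal_union_le _ _)
  rintro ⟨x, y⟩ hx
  by_cases hy : δ ≤ ‖y‖
  · right; exact ⟨trivial, hy⟩
  · left
    refine ⟨?_, trivial⟩
    simp only [Metric.mem_ball, dist_eq_norm, Set.mem_ofPred_eq] at hx ⊢
    have : x - x₀ = (x + y - x₀) - y := by ring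
    rw [this]
    linarith [norm_sub_le (x + y - x₀) y, not_le.1 hy]

lemma tail_le (K : ℂ → ℝ) (hKc : Continuous K) (hK0 : ∀ x, 0 ≤ K x) (δ D : ℝ) (hδ : 0 < δ)
    (hKi : Integrable K) (hKm : Integrable (fun x => ‖x‖ ^ 12 * K x)) (hD : (∫ x, ‖x‖ ^ 12 * K x) ≤ D) :
    (volume.withDensity fun y => ENNReal.ofReal (K y)).real {y | δ ≤ ‖y‖} ≤ D / δ ^ 12 := by
  have hS : MeasurableSet {y : ℂ | δ ≤ ‖y‖} := measurableSet_le measurable_const measurable_norm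
  rw [measureReal_def, withDensity_apply _ hS, ← integral_eq_lintegral_of_nonneg_ae
    (Filter.Eventually.of_forall fun x => hK0 _) hKc.aestronglyMeasurable.restrict,
    le_div_iff₀ (by positivity), mul_comm, ← integral_const_mul]
  refine le_trans ?_ hD
  refine le_trans (setIntegral_mono_on (hKi.const_mul _).integrableOn hKm.integrableOn hS ?_)
    (setIntegral_le_integral hKm (Filter.Eventually.of_forall fun x => ?_))
  · intro x hx
    have h0 := hK0 x
    have : δ ≤ ‖x‖ := hx
    gcongr
  · have h0 := hK0 x
    show (0 : ℝ) ≤ ‖x‖ ^ 12 * K x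
    positivity

lemma volume_real_ball (x : ℂ) (s : ℝ) (hs : 0 ≤ s) :
    volume.real (Metric.ball x s) = Real.pi * s ^ 2 := by
  rw [measureReal_def, Complex.volume_ball]
  simp [hs, mul_comm]

lemma ann_le (ν : Measure ℂ) [IsProbabilityMeasure ν] (κ : ℝ) (hκ : 0 < κ) (hac : ν ≪ volume)
    (hb : ∀ᵐ x ∂(volume : Measure ℂ), ν.rnDeriv volume x ≤ ENNReal.ofReal κ)
    (x₀ : ℂ) (r δ : ℝ) (hδ : 0 < δ) (hr : δ ≤ r) :
    ν.real (Metric.ball x₀ (r + 2 * δ)) ≤ ν.real (Metric.ball x₀ (r - 2 * δ)) +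
      12 * Real.pi * κ * (r * δ) := by
  have hpi := Real.pi_pos
  have hsub : Metric.ball x₀ (r - 2 * δ) ⊆ Metric.ball x₀ (r + 2 * δ) :=
    Metric.ball_subset_ball (by linarith)
  have h1 := measureReal_diff (μ := ν) hsub measurableSet_ball
  have h2 := measureReal_diff (μ := volume) hsub measurableSet_ball (measure_ball_lt_top.ne)
  have h3 : ∀ S, MeasurableSet S → volume S ≠ ⊤ → ν.real S ≤ κ * volume.real S := by
    intro S hS hfin
    have : ν S ≤ ENNReal.ofReal κ * volume S := by
      rw [← Measure.setLIntegral_rnDeriv hac, ← setLIntegral_const]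
      exact lintegral_mono_ae (ae_restrict_of_ae hb)
    have h := ENNReal.toReal_mono (ENNReal.mul_ne_top ENNReal.ofReal_ne_top hfin) this
    rwa [ENNReal.toReal_mul, ENNReal.toReal_ofReal hκ.le] at h
  have h4 := h3 (Metric.ball x₀ (r + 2 * δ) \ Metric.ball x₀ (r - 2 * δ))
    (measurableSet_ball.diff measurableSet_ball)
    (ne_top_of_le_ne_top measure_ball_lt_top.ne (measure_mono Set.diff_subset))
  have h5 : volume.real (Metric.ball x₀ (r + 2 * δ) \ Metric.ball x₀ (r - 2 * δ)) ≤
      Real.pi * (12 * (r * δ)) := by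
    rw [h2, volume_real_ball _ _ (by linarith)]
    rcases le_total 0 (r - 2 * δ) with h | h
    · rw [volume_real_ball _ _ h, ← mul_sub]
      gcongr
      nlinarith [mul_pos hδ hδ]
    · rw [Metric.ball_eq_empty.2 h]
      simp only [measureReal_empty, sub_zero]
      gcongr
      nlinarith
  have h6 : κ * volume.real (Metric.ball x₀ (r + 2 * δ) \ Metric.ball x₀ (r - 2 * δ)) ≤
      κ * (Real.pi * (12 * (r * δ))) := by gcongr
  linarith

end aux

/-- Local limit comparison of two probability measures on `ℝ² ≅ ℂ`
from an `L¹` bound on the difference of their Fourier transforms on `{|ξ| < L}`,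
assuming `ν` has a density bounded by `κ`. -/
theorem statement18 :
    ∃ C > 0, ∀ μ ν : Measure ℂ, IsProbabilityMeasure μ → IsProbabilityMeasure ν →
      ∀ L ε κ : ℝ, 1 ≤ L → 0 < ε → 0 < κ →
      (∫ ξ in {ξ : ℂ | ‖ξ‖ < L}, ‖measFT μ ξ - measFT ν ξ‖) < ε →
      ν ≪ volume →
      (∀ᵐ x ∂(volume : Measure ℂ), ν.rnDeriv volume x ≤ ENNReal.ofReal κ) →
      ∀ r : ℝ, r > L ^ (-(1 / 4) : ℝ) → ∀ x₀ : ℂ,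
        |(μ (Metric.ball x₀ r)).toReal - (ν (Metric.ball x₀ r)).toReal|
          ≤ C * (ε * r ^ 2 + L ^ (-(3 : ℝ)) + κ * L ^ (-(1 / 2) : ℝ) * r ^ 2) := by
  obtain ⟨M, T, hM, hT, hker⟩ := scaled_kernel
  have hpi := Real.pi_pos
  refine ⟨2 * T + 4 * Real.pi * M + 12 * Real.pi, by positivity, ?_⟩
  intro μ ν hμ hν L ε κ hL hε hκ h hac hb r hr x₀
  obtain ⟨K, φ, hKc, hK0, hK1, hKi, hKm, hKT, hφ, hφM, hφs, hK⟩ := hker L hL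
  have hL0 : 0 < L := by linarith
  set ρ := volume.withDensity fun y => ENNReal.ofReal (K y) with hρ
  have hρp : IsProbabilityMeasure ρ := by
    constructor
    rw [hρ, withDensity_apply _ MeasurableSet.univ, Measure.restrict_univ,
      ← ofReal_integral_eq_lintegral_ofReal hKi (Filter.Eventually.of_forall fun x => hK0 _), hK1]
    simp
  have hKb : ∀ x, K x ≤ ∫ ξ, ‖φ ξ‖ := by
    intro x
    rw [← Real.norm_of_nonneg (hK0 x), ← Complex.norm_real, hK]
    refine norm_integral_le_of_norm_le hφ.norm (Filter.Eventually.of_forall fun ξ => ?_)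
    rw [norm_mul, norm_cexp_neg, mul_one]
  have hd := smooth_diff K φ M L ε hM hφ hφM hφs hK μ ν h
  have hd' : ∀ z, |(∫ x, K (z - x) ∂ν) - ∫ x, K (z - x) ∂μ| ≤ M * ε := fun z => by
    rw [abs_sub_comm]; exact hd z
  have hE : 0 ≤ M * ε := by positivity
  obtain ⟨δ, hδdef⟩ : ∃ δ, δ = L ^ (-(3 / 4) : ℝ) := ⟨_, rfl⟩
  have hδ : 0 < δ := by rw [hδdef]; positivity
  have hhalf1 : L ^ (-(1 / 2) : ℝ) ≤ 1 := Real.rpow_le_one_of_one_le_of_nonpos hL (by norm_num)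
  have hδr' : δ ≤ L ^ (-(1 / 2) : ℝ) * r := by
    have : δ = L ^ (-(1 / 2) : ℝ) * L ^ (-(1 / 4) : ℝ) := by
      rw [hδdef, ← Real.rpow_add hL0]; norm_num
    rw [this]
    gcongr
  have hr0 : 0 < r := lt_trans (by positivity) hr
  have hδr : δ ≤ r := hδr'.trans (mul_le_of_le_one_left hr0.le hhalf1)
  have htail : ρ.real {y | δ ≤ ‖y‖} ≤ T * L ^ (-(3 : ℝ)) := by
    refine (tail_le K hKc hK0 δ _ hδ hKi hKm hKT).trans_eq ?_
    have e1 : δ ^ 12 = L ^ (-(9 : ℝ)) := by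
      rw [hδdef, ← Real.rpow_natCast, ← Real.rpow_mul hL0.le]; norm_num
    have e2 : L ^ 12 = L ^ (12 : ℝ) := by norm_cast
    rw [e1, e2, div_div, ← Real.rpow_add hL0, div_eq_mul_inv, ← Real.rpow_neg hL0.le]
    norm_num
  have key : ∀ (μ ν : Measure ℂ) [IsProbabilityMeasure μ] [IsProbabilityMeasure ν] (s : ℝ),
      s + δ ≤ 2 * r →
      (∀ z, |(∫ x, K (z - x) ∂μ) - ∫ x, K (z - x) ∂ν| ≤ M * ε) →
      μ.real (Metric.ball x₀ s) ≤ ν.real (Metric.ball x₀ (s + 2 * δ)) + 2 * (T * L ^ (-(3 : ℝ))) +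
        4 * Real.pi * M * (ε * r ^ 2) := by
    intro μ ν _ _ s hs hd
    have h1 := ball_le_conv μ ρ x₀ s δ
    have h2 := conv_le_ball ν ρ x₀ (s + δ) δ
    have h3 := conv_diff K hKc hK0 _ _ hKb hE μ ν hd (Metric.ball x₀ (s + δ)) measurableSet_ball
    have h4 := ENNReal.toReal_mono (ENNReal.add_ne_top.2 ⟨measure_ne_top _ _,
      ENNReal.mul_ne_top ENNReal.ofReal_ne_top measure_ball_lt_top.ne⟩) h3
    rw [ENNReal.toReal_add (measure_ne_top _ _)
      (ENNReal.mul_ne_top ENNReal.ofReal_ne_top measure_ball_lt_top.ne), ENNReal.toReal_mul,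
      ENNReal.toReal_ofReal hE] at h4
    have h5 : (volume (Metric.ball x₀ (s + δ))).toReal ≤ Real.pi * (2 * r) ^ 2 := by
      rw [← volume_real_ball x₀ (2 * r) (by linarith)]
      exact measureReal_mono (Metric.ball_subset_ball hs) measure_ball_lt_top.ne
    have h6 : M * ε * (volume (Metric.ball x₀ (s + δ))).toReal ≤
      M * ε * (Real.pi * (2 * r) ^ 2) := by gcongr
    have e : s + δ + δ = s + 2 * δ := by ring
    rw [e] at h2
    simp only [measureReal_def, ← hρ] at h1 h2 h4 htail ⊢
    linarith
  have k1 := key μ ν r (by linarith) hd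
  have k2 := key ν μ (r - 2 * δ) (by linarith) hd'
  rw [sub_add_cancel] at k2
  have k3 := ann_le ν κ hκ hac hb x₀ r δ hδ hδr
  have m1 : ν.real (Metric.ball x₀ r) ≤ ν.real (Metric.ball x₀ (r + 2 * δ)) :=
    measureReal_mono (Metric.ball_subset_ball (by linarith))
  have m2 : ν.real (Metric.ball x₀ (r - 2 * δ)) ≤ ν.real (Metric.ball x₀ r) :=
    measureReal_mono (Metric.ball_subset_ball (by linarith))
  have a1 : 12 * Real.pi * κ * (r * δ) ≤ 12 * Real.pi * (κ * L ^ (-(1 / 2) : ℝ) * r ^ 2) := by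
    have : 12 * Real.pi * κ * (r * δ) ≤ 12 * Real.pi * κ * (r * (L ^ (-(1 / 2) : ℝ) * r)) := by gcongr
    linarith
  have p1 : 0 ≤ ε * r ^ 2 := by positivity
  have p2 : 0 ≤ L ^ (-(3 : ℝ)) := by positivity
  have p3 : 0 ≤ κ * L ^ (-(1 / 2) : ℝ) * r ^ 2 := by positivity
  have fin : 2 * (T * L ^ (-(3 : ℝ))) + 4 * Real.pi * M * (ε * r ^ 2) +
      12 * Real.pi * (κ * L ^ (-(1 / 2) : ℝ) * r ^ 2) ≤ (2 * T + 4 * Real.pi * M + 12 * Real.pi) *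
        (ε * r ^ 2 + L ^ (-(3 : ℝ)) + κ * L ^ (-(1 / 2) : ℝ) * r ^ 2) := by
    generalize ε * r ^ 2 = A at *
    generalize L ^ (-(3 : ℝ)) = B at *
    generalize κ * L ^ (-(1 / 2) : ℝ) * r ^ 2 = D at *
    have q1 : 0 ≤ 2 * T * (A + D) := by positivity
    have q2 : 0 ≤ 4 * Real.pi * M * (B + D) := by positivity
    have q3 : 0 ≤ 12 * Real.pi * (A + B) := by positivity
    linarith
  refine le_trans ?_ fin
  simp only [measureReal_def] at k1 k2 k3 m1 m2
  rw [abs_le]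
  constructor <;> linarith
end
end
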